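/- arXiv:2206.11295 — 12 statements merged into one kernel-verified Lean document; each statement's English description precedes it below -/
import Mathlib

section
/- Let m ≥ 2 and let B_1,…,B_n (n ≥ 2) be a partition of {1,…,m} into nonempty blocks; write k ∼ l if k,l lie in the same block and k ≁ l otherwise. Let h be a smooth positive function on a neighborhood of 0 in ℝ^m. Then the following are equivalent: (a) there exist a neighborhood U of 0 and a smooth diffeomorphism φ from U onto an open subset of ℝ^m of block-product form φ(x) = (φ_1(x_{B_1}),…,φ_n(x_{B_n})) (each φ_i a smooth map of the block-B_i variables with values in ℝ^{|B_i|}), with φ(0)=0, such that h(x) = |∏_{i=1}^n det Dφ_i(x_{B_i})| for all x ∈ U; (b) the mixed partial derivatives ∂²(log h)/∂x_k∂x_l vanish on a neighborhood of 0 for every pair of indices k ≁ l. -/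
open MeasureTheory

noncomputable section

/-- Second mixed partial derivative `∂²(log h)/∂x_k∂x_l` at `x`. -/
def logpd2 {m : ℕ} (h : (Fin m → ℝ) → ℝ) (k l : Fin m) (x : Fin m → ℝ) : ℝ :=
  fderiv ℝ (fun y => fderiv ℝ (fun z => Real.log (h z)) y (Pi.single k (1:ℝ)))
    x (Pi.single l 1)

/-- Determinant of the Jacobian of the block map `φ_i` (the block of the Jacobian of `φ`
corresponding to rows and columns in `B i`). -/
def blockDet {m n : ℕ} (B : Fin n → Finset (Fin m)) (φ : (Fin m → ℝ) → (Fin m → ℝ))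
    (i : Fin n) (x : Fin m → ℝ) : ℝ :=
  Matrix.det (Matrix.of fun a k : ↥(B i) =>
    fderiv ℝ (fun z => φ z a.1) x (Pi.single k.1 (1:ℝ)))

open scoped ContDiff Topology
open Filter Set

lemma paramInt {m : ℕ} (n : ℕ) : ∀ {F : Type} [NormedAddCommGroup F] [NormedSpace ℝ F]
    (g : (Fin m → ℝ) × ℝ → F) (_ : ContDiff ℝ ∞ g),
    ContDiff ℝ n (fun x => ∫ s in (0:ℝ)..1, g (x, s)) := by
  induction n with
  | zero =>
    intro F _ _ g hg
    have hc := hg.continuous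
    simp only [Nat.cast_zero, contDiff_zero]
    apply intervalIntegral.continuous_parametric_intervalIntegral_of_continuous'
    exact hc
  | succ n ih =>
    intro F _ _ g hg
    have hd := (contDiff_infty_iff_fderiv.1 hg)
    push_cast
    rw [contDiff_succ_iff_hasFDerivAt]
    let G : (Fin m → ℝ) × ℝ → ((Fin m → ℝ) →L[ℝ] F) := fun p =>
      (fderiv ℝ g p).comp (ContinuousLinearMap.inl ℝ (Fin m → ℝ) ℝ)
    have hG : ContDiff ℝ ∞ G := hd.2.clm_comp contDiff_const
    refine ⟨_, ih G hG, fun x₀ => ?_⟩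
    have hcpt : IsCompact (Metric.closedBall x₀ 1 ×ˢ Icc (0:ℝ) 1) :=
      (isCompact_closedBall x₀ 1).prod isCompact_Icc
    obtain ⟨C, hC⟩ := hcpt.exists_bound_of_continuousOn hG.continuous.continuousOn
    have hc := hg.continuous
    have hGc := hG.continuous
    refine intervalIntegral.hasFDerivAt_integral_of_dominated_of_fderiv_le
      (F := fun x s => g (x, s)) (F' := fun x s => G (x, s)) (bound := fun _ => C)
      (Metric.closedBall_mem_nhds x₀ one_pos) ?_ ?_ ?_ ?_ ?_ ?_
    · refine Eventually.of_forall fun x => Continuous.aestronglyMeasurable (by fun_prop)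
    · exact Continuous.intervalIntegrable (by fun_prop) _ _
    · exact Continuous.aestronglyMeasurable (by fun_prop)
    · refine Eventually.of_forall fun t ht x hx => hC (x, t) ⟨hx, ?_⟩
      rw [uIoc_of_le zero_le_one] at ht
      exact ⟨ht.1.le, ht.2⟩
    · exact intervalIntegrable_const
    · refine Eventually.of_forall fun t ht x hx => ?_
      exact (hd.1 (x, t)).hasFDerivAt.comp x (hasFDerivAt_prodMk_left x t)

lemma fderiv_dir_eq {m : ℕ} {f g : (Fin m → ℝ) → ℝ} {x y v : Fin m → ℝ} (c : ℝ)
    (hf : DifferentiableAt ℝ f x) (hg : DifferentiableAt ℝ g y)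
    (h : ∀ᶠ t : ℝ in 𝓝 0, f (x + t • v) = g (y + t • v) + c) :
    fderiv ℝ f x v = fderiv ℝ g y v := by
  have h1 : HasDerivAt (fun t : ℝ => f (x + t • v)) (fderiv ℝ f x v) 0 :=
    hf.hasFDerivAt.hasLineDerivAt v
  have h2 : HasDerivAt (fun t : ℝ => g (y + t • v)) (fderiv ℝ g y v) 0 :=
    hg.hasFDerivAt.hasLineDerivAt v
  exact (h1.congr_of_eventuallyEq (h.mono fun t ht => ht.symm)).unique (h2.add_const c)

lemma ev_line {m : ℕ} {U : Set (Fin m → ℝ)} (hU : IsOpen U) {x : Fin m → ℝ} (hx : x ∈ U)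
    (v : Fin m → ℝ) : ∀ᶠ t : ℝ in 𝓝 0, x + t • v ∈ U := by
  have : Continuous (fun t : ℝ => x + t • v) := by fun_prop
  exact this.continuousAt.eventually_mem (hU.mem_nhds (by simpa using hx))

lemma blockDet_inv {m n : ℕ} (B : Fin n → Finset (Fin m)) (φ : (Fin m → ℝ) → (Fin m → ℝ))
    (U : Set (Fin m → ℝ)) (hU : IsOpen U) (hφ : ContDiffOn ℝ (⊤ : ℕ∞) φ U)
    (hb : ∀ i : Fin n, ∀ a ∈ B i, ∀ x ∈ U, ∀ y ∈ U,
          (∀ k ∈ B i, x k = y k) → φ x a = φ y a)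
    (i : Fin n) {x y : Fin m → ℝ} (hx : x ∈ U) (hy : y ∈ U) (hxy : ∀ k ∈ B i, x k = y k) :
    blockDet B φ i x = blockDet B φ i y := by
  have hd : ∀ z ∈ U, ∀ a, DifferentiableAt ℝ (fun z => φ z a) z := by
    intro z hz a
    have := (hφ.contDiffAt (hU.mem_nhds hz)).differentiableAt (by simp)
    exact (differentiableAt_pi.1 this) a
  unfold blockDet
  congr 1
  ext a k
  simp only [Matrix.of_apply]
  apply fderiv_dir_eq 0 (hd x hx _) (hd y hy _)
  filter_upwards [ev_line hU hx (Pi.single k.1 1), ev_line hU hy (Pi.single k.1 1)] with t h1 h2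
  rw [add_zero]
  apply hb i a a.2 _ h1 _ h2
  intro l hl
  simp [hxy l hl]

lemma dir1 {m n : ℕ} (B : Fin n → Finset (Fin m))
    (h : (Fin m → ℝ) → ℝ) (V : Set (Fin m → ℝ))
    (hV : IsOpen V)
    (hsm : ContDiffOn ℝ (⊤ : ℕ∞) h V) (hpos : ∀ x ∈ V, 0 < h x)
    (U : Set (Fin m → ℝ)) (φ : (Fin m → ℝ) → (Fin m → ℝ))
    (hU : IsOpen U) (hUV : U ⊆ V) (hφ : ContDiffOn ℝ (⊤ : ℕ∞) φ U)
    (hb : ∀ i : Fin n, ∀ a ∈ B i, ∀ x ∈ U, ∀ y ∈ U,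
          (∀ k ∈ B i, x k = y k) → φ x a = φ y a)
    (hdet : ∀ x ∈ U, h x = |∏ i, blockDet B φ i x|)
    (k l : Fin m) (hkl : ¬ ∃ i, k ∈ B i ∧ l ∈ B i) (x : Fin m → ℝ) (hx : x ∈ U) :
    logpd2 h k l x = 0 := by
  set F : (Fin m → ℝ) → ℝ := fun z => Real.log (h z) with hF
  have hFs : ∀ z ∈ U, DifferentiableAt ℝ F z := by
    intro z hz
    exact ((hsm.contDiffAt (hV.mem_nhds (hUV hz))).differentiableAt (by simp)).log
      (hpos z (hUV hz)).ne'
  have hsum : ∀ z ∈ U, F z = ∑ i, Real.log (blockDet B φ i z) := by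
    intro z hz
    have hp := hpos z (hUV hz)
    simp only [hF]
    rw [hdet z hz] at hp ⊢
    rw [Real.log_abs, Real.log_prod]
    intro i hi
    have := abs_pos.1 hp
    exact Finset.prod_ne_zero_iff.1 this i hi
  have key : ∀ᶠ t : ℝ in 𝓝 0, fderiv ℝ F (x + t • Pi.single l 1) (Pi.single k 1)
      = fderiv ℝ F x (Pi.single k 1) := by
    filter_upwards [ev_line hU hx (Pi.single l 1)] with t ht
    apply fderiv_dir_eq (F (x + t • Pi.single l 1) - F x) (hFs _ ht) (hFs _ hx)
    filter_upwards [ev_line hU hx (Pi.single k 1), ev_line hU ht (Pi.single k 1)] with s h1 h2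
    rw [hsum _ h2, hsum _ h1, hsum _ ht, hsum _ hx, ← Finset.sum_sub_distrib,
      ← Finset.sum_add_distrib]
    refine Finset.sum_congr rfl fun i _ => ?_
    by_cases hk : k ∈ B i
    · have hl : l ∉ B i := fun hl => hkl ⟨i, hk, hl⟩
      rw [blockDet_inv B φ U hU hφ hb i h2 h1, blockDet_inv B φ U hU hφ hb i ht hx]
      · ring
      · intro j hj
        have : j ≠ l := fun e => hl (e ▸ hj)
        simp [this]
      · intro j hj
        have : j ≠ l := fun e => hl (e ▸ hj)
        simp [this]
    · rw [blockDet_inv B φ U hU hφ hb i h2 ht, blockDet_inv B φ U hU hφ hb i h1 hx]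
      · ring
      · intro j hj
        have : j ≠ k := fun e => hk (e ▸ hj)
        simp [this]
      · intro j hj
        have : j ≠ k := fun e => hk (e ▸ hj)
        simp [this]
  unfold logpd2
  by_cases hd : DifferentiableAt ℝ (fun y => fderiv ℝ F y (Pi.single k (1:ℝ))) x
  · have := fderiv_dir_eq (f := fun y => fderiv ℝ F y (Pi.single k (1:ℝ)))
      (g := fun _ => fderiv ℝ F x (Pi.single k (1:ℝ))) (x := x) (y := x)
      (v := Pi.single l 1) 0 hd (differentiableAt_const _) (by simpa using key)
    rw [this]; simp
  · rw [fderiv_zero_of_not_differentiableAt hd]; simp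

lemma four_point {m : ℕ} {F : (Fin m → ℝ) → ℝ} (hF : ContDiff ℝ ∞ F) (u v : Fin m → ℝ)
    (hz : ∀ s ∈ Icc (0:ℝ) 1, ∀ t ∈ Icc (0:ℝ) 1,
      fderiv ℝ (fderiv ℝ F) (s • u + t • v) u v = 0) :
    F (u + v) = F u + F v - F 0 := by
  have h1 := contDiff_infty_iff_fderiv.1 hF
  have h2 := contDiff_infty_iff_fderiv.1 h1.2
  have step : ∀ t ∈ Icc (0:ℝ) 1, fderiv ℝ F (u + t • v) v = fderiv ℝ F (t • v) v := by
    intro t ht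
    have hd : ∀ s : ℝ, HasDerivAt (fun s : ℝ => fderiv ℝ F (s • u + t • v) v)
        (fderiv ℝ (fderiv ℝ F) (s • u + t • v) u v) s := by
      intro s
      have hl : HasDerivAt (fun s : ℝ => s • u + t • v) u s := by
        simpa using ((hasDerivAt_id s).smul_const u).add_const (t • v)
      have := (h2.1 (s • u + t • v)).hasFDerivAt.comp_hasDerivAt s hl
      exact this.clm_apply (hasDerivAt_const s v) |>.congr_deriv (by simp)
    have := constant_of_has_deriv_right_zero (a := 0) (b := 1)
      (f := fun s : ℝ => fderiv ℝ F (s • u + t • v) v)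
      (fun s _ => (hd s).continuousAt.continuousWithinAt)
      (fun s hs => by
        have := (hd s).hasDerivWithinAt (s := Ici s)
        rwa [hz s ⟨hs.1, hs.2.le⟩ t ht] at this) 1 (by simp)
    simpa using this
  have hd : ∀ t : ℝ, HasDerivAt (fun t : ℝ => F (u + t • v) - F (t • v))
      (fderiv ℝ F (u + t • v) v - fderiv ℝ F (t • v) v) t := by
    intro t
    have hl : HasDerivAt (fun t : ℝ => t • v) v t := by
      simpa using ((hasDerivAt_id t).smul_const v)
    have hl' : HasDerivAt (fun t : ℝ => u + t • v) v t := hl.const_add u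
    exact ((h1.1 _).hasFDerivAt.comp_hasDerivAt t hl').sub
      ((h1.1 _).hasFDerivAt.comp_hasDerivAt t hl)
  have := constant_of_has_deriv_right_zero (a := 0) (b := 1)
      (f := fun t : ℝ => F (u + t • v) - F (t • v))
      (fun s _ => (hd s).continuousAt.continuousWithinAt)
      (fun s hs => by
        have := (hd s).hasDerivWithinAt (s := Ici s)
        rwa [step s ⟨hs.1, hs.2.le⟩, sub_self] at this) 1 (by simp)
  simp at this
  linarith

lemma hess_zero {m : ℕ} (A : (Fin m → ℝ) →L[ℝ] (Fin m → ℝ) →L[ℝ] ℝ) (u v : Fin m → ℝ)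
    (h : ∀ k l, u k ≠ 0 → v l ≠ 0 → A (Pi.single k 1) (Pi.single l 1) = 0) : A u v = 0 := by
  have e : ∀ w : Fin m → ℝ, w = ∑ k, w k • Pi.single k (1:ℝ) := by
    intro w
    ext j
    simp [Finset.sum_apply, Pi.single_apply]
  rw [e u, e v]
  simp only [map_sum, map_smul, ContinuousLinearMap.sum_apply, ContinuousLinearMap.smul_apply,
    smul_eq_mul]
  refine Finset.sum_eq_zero fun k _ => ?_
  by_cases hu : v k = 0
  · simp [hu]
  rw [mul_eq_zero]; right
  refine Finset.sum_eq_zero fun l _ => ?_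
  by_cases hv : u l = 0
  · simp [hv]
  rw [h _ _ hv hu, mul_zero]

/-- Coordinate projection onto a set of coordinates. -/
def cproj {m : ℕ} (s : Finset (Fin m)) (x : Fin m → ℝ) : Fin m → ℝ :=
  fun k => if k ∈ s then x k else 0

lemma cproj_smooth {m : ℕ} (s : Finset (Fin m)) : ContDiff ℝ ∞ (cproj s) := by
  rw [contDiff_pi]
  intro k
  unfold cproj
  by_cases h : k ∈ s
  · simp only [h, if_true]; fun_prop
  · simp only [h, if_false]; fun_prop

lemma decomp {m n : ℕ} (B : Fin n → Finset (Fin m))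
    (hBdisj : ∀ i j, i ≠ j → Disjoint (B i) (B j))
    {F : (Fin m → ℝ) → ℝ} (hF : ContDiff ℝ ∞ F) (r : ℝ)
    (hz : ∀ k l : Fin m, (¬ ∃ i, k ∈ B i ∧ l ∈ B i) → ∀ x ∈ Metric.ball (0 : Fin m → ℝ) r,
      fderiv ℝ (fderiv ℝ F) x (Pi.single k 1) (Pi.single l 1) = 0)
    (x : Fin m → ℝ) (hx : x ∈ Metric.ball (0 : Fin m → ℝ) r) (S : Finset (Fin n)) :
    F (cproj (S.biUnion B) x) = F 0 + ∑ i ∈ S, (F (cproj (B i) x) - F 0) := by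
  have hr : 0 < r := (norm_nonneg x).trans_lt (by simpa using hx)
  induction S using Finset.induction_on with
  | empty =>
    have : cproj (∅ : Finset (Fin m)) x = 0 := by ext; simp [cproj]
    simp [this]
  | insert j S hj ih =>
    have hdis : ∀ k ∈ B j, k ∉ S.biUnion B := by
      intro k hk hk'
      obtain ⟨i, hi, hki⟩ := Finset.mem_biUnion.1 hk'
      have hij : i ≠ j := fun e => hj (e ▸ hi)
      exact Finset.disjoint_left.1 (hBdisj i j hij) hki hk
    have e : cproj ((insert j S).biUnion B) x = cproj (B j) x + cproj (S.biUnion B) x := by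
      ext k
      rw [Finset.biUnion_insert]
      simp only [cproj, Finset.mem_union, Pi.add_apply]
      by_cases h1 : k ∈ B j
      · simp only [h1, hdis k h1]; simp
      · simp only [h1]; simp
    rw [e, four_point hF, ih, Finset.sum_insert hj]
    · ring
    · intro s hs t ht
      apply hess_zero
      intro k l hk hl
      have hk' : k ∈ B j := by
        by_contra hc; exact hk (by simp [cproj, hc])
      have hl' : l ∈ S.biUnion B := by
        by_contra hc; exact hl (by simp only [cproj, hc]; simp)
      apply hz
      · rintro ⟨i, hki, hli⟩
        have : i = j := by
          by_contra hc
          exact Finset.disjoint_left.1 (hBdisj i j hc) hki hk'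
        exact hdis l (this ▸ hli) hl'
      · rw [mem_ball_zero_iff, pi_norm_lt_iff hr] at hx ⊢
        intro k
        have hxk := hx k
        simp only [Pi.add_apply, Pi.smul_apply, smul_eq_mul, cproj]
        rw [Real.norm_eq_abs] at *
        by_cases h1 : k ∈ B j
        · simp only [h1, hdis k h1, if_true, if_false, mul_zero, add_zero, abs_mul,
            abs_of_nonneg hs.1]
          nlinarith [abs_nonneg (x k), hs.2]
        · simp only [h1, if_false, mul_zero, zero_add, abs_mul, abs_of_nonneg ht.1]
          split_ifs
          · nlinarith [abs_nonneg (x k), ht.2]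
          · simpa using hr

/-- The pivot component. -/
def piv {m : ℕ} (g : (Fin m → ℝ) → ℝ) (a : Fin m) (x : Fin m → ℝ) : ℝ :=
  ∫ t in (0:ℝ)..x a, g (Function.update x a t)

lemma upd_smooth {m : ℕ} (a : Fin m) :
    ContDiff ℝ ∞ (fun p : (Fin m → ℝ) × ℝ => Function.update p.1 a p.2) := by
  rw [contDiff_pi]
  intro k
  by_cases h : k = a
  · subst h; simp only [Function.update_self]; fun_prop
  · simp only [Function.update_of_ne h]; fun_prop

lemma piv_smooth {m : ℕ} {g : (Fin m → ℝ) → ℝ} (hg : ContDiff ℝ ∞ g) (a : Fin m) :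
    ContDiff ℝ ∞ (piv g a) := by
  have e : piv g a = fun x => x a * ∫ s in (0:ℝ)..1, g (Function.update x a (s * x a)) := by
    ext x
    have := intervalIntegral.smul_integral_comp_mul_right (a := 0) (b := 1)
      (fun t => g (Function.update x a t)) (x a)
    simp only [zero_mul, one_mul, smul_eq_mul] at this
    rw [this, piv]
  rw [e]
  refine ContDiff.mul (by fun_prop) ?_
  rw [contDiff_infty]
  intro n
  refine paramInt n (fun p : (Fin m → ℝ) × ℝ => g (Function.update p.1 a (p.2 * p.1 a))) ?_
  refine hg.comp ((upd_smooth a).comp (f := fun p : (Fin m → ℝ) × ℝ => (p.1, p.2 * p.1 a)) ?_)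
  fun_prop

lemma piv_cont {m : ℕ} {g : (Fin m → ℝ) → ℝ} (hg : ContDiff ℝ ∞ g) (a : Fin m)
    (x : Fin m → ℝ) : Continuous (fun t => g (Function.update x a t)) := by
  have := hg.continuous
  fun_prop

lemma piv_deriv {m : ℕ} {g : (Fin m → ℝ) → ℝ} (hg : ContDiff ℝ ∞ g) (a : Fin m)
    (x : Fin m → ℝ) : fderiv ℝ (piv g a) x (Pi.single a 1) = g x := by
  have h1 : HasDerivAt (fun t : ℝ => piv g a (x + t • Pi.single a 1))
      (fderiv ℝ (piv g a) x (Pi.single a 1)) 0 :=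
    (((piv_smooth hg a).differentiable (by simp)) x).hasFDerivAt.hasLineDerivAt _
  have e : (fun t : ℝ => piv g a (x + t • Pi.single a 1)) =
      fun t => ∫ s in (0:ℝ)..(x a + t), g (Function.update x a s) := by
    ext t
    have : ∀ s, Function.update (x + t • Pi.single a (1:ℝ)) a s = Function.update x a s := by
      intro s
      ext k
      by_cases h : k = a
      · subst h; simp
      · simp [h]
    simp only [piv, this]
    simp
  rw [e] at h1
  have hc := piv_cont hg a x
  have h2 : HasDerivAt (fun u => ∫ s in (0:ℝ)..u, g (Function.update x a s))
      (g (Function.update x a (x a + 0))) (x a + 0) :=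
    intervalIntegral.integral_hasDerivAt_right (hc.intervalIntegrable _ _)
      (hc.stronglyMeasurableAtFilter _ _) hc.continuousAt
  have h3 := h2.comp_const_add (x a) 0
  rw [h1.unique h3]
  simp

lemma piv_inv {m : ℕ} {g : (Fin m → ℝ) → ℝ} (B : Finset (Fin m)) (a : Fin m) (ha : a ∈ B)
    (hB : ∀ x y, (∀ k ∈ B, x k = y k) → g x = g y) (x y : Fin m → ℝ)
    (hxy : ∀ k ∈ B, x k = y k) : piv g a x = piv g a y := by
  unfold piv
  rw [hxy a ha]
  congr 1
  ext t
  apply hB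
  intro k hk
  by_cases h : k = a
  · subst h; simp
  · simp [h, hxy k hk]

lemma piv_inj {m : ℕ} {g : (Fin m → ℝ) → ℝ} (hg : ContDiff ℝ ∞ g) (hpos : ∀ x, 0 < g x)
    (B : Finset (Fin m)) (a : Fin m)
    (hB : ∀ x y, (∀ k ∈ B, x k = y k) → g x = g y) (x y : Fin m → ℝ)
    (hxy : ∀ k ∈ B, k ≠ a → x k = y k) (he : piv g a x = piv g a y) : x a = y a := by
  have e : piv g a y = ∫ t in (0:ℝ)..y a, g (Function.update x a t) := by
    unfold piv
    congr 1
    ext t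
    apply hB
    intro k hk
    by_cases h : k = a
    · subst h; simp
    · simp [h, hxy k hk h]
  rw [e, piv] at he
  have hc := piv_cont hg a x
  have hsub := intervalIntegral.integral_interval_sub_left
    (hc.intervalIntegrable (μ := volume) 0 (y a)) (hc.intervalIntegrable (μ := volume) 0 (x a))
  rw [he, sub_self] at hsub
  rcases lt_trichotomy (x a) (y a) with h | h | h
  · have := intervalIntegral.intervalIntegral_pos_of_pos (hc.intervalIntegrable (x a) (y a))
      (fun t => hpos _) h
    linarith
  · exact h
  · have := intervalIntegral.intervalIntegral_pos_of_pos (hc.intervalIntegrable (y a) (x a))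
      (fun t => hpos _) h
    rw [intervalIntegral.integral_symm] at hsub
    linarith

lemma extend_log {m : ℕ} (h : (Fin m → ℝ) → ℝ) (V : Set (Fin m → ℝ))
    (hV : IsOpen V) (h0V : (0 : Fin m → ℝ) ∈ V)
    (hsm : ContDiffOn ℝ (⊤ : ℕ∞) h V) (hpos : ∀ x ∈ V, 0 < h x) :
    ∃ F : (Fin m → ℝ) → ℝ, ContDiff ℝ ∞ F ∧ ∃ r > 0, ∀ x ∈ Metric.ball (0 : Fin m → ℝ) r,
      F x = Real.log (h x) := by
  obtain ⟨ε, hε, hεV⟩ := Metric.isOpen_iff.1 hV 0 h0V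
  let χ : ContDiffBump (0 : Fin m → ℝ) := ⟨ε / 4, ε / 2, by positivity, by linarith⟩
  refine ⟨fun x => χ x * Real.log (h x), ?_, ε / 4, by positivity, ?_⟩
  · rw [contDiff_iff_contDiffAt]
    intro x
    by_cases hx : x ∈ V
    · exact χ.contDiff.contDiffAt.mul
        ((hsm.contDiffAt (hV.mem_nhds hx)).log (hpos x hx).ne')
    · have hx' : x ∉ tsupport χ := by
        rw [χ.tsupport_eq]
        intro hc
        exact hx (hεV (Metric.closedBall_subset_ball (by change ε / 2 < ε; linarith) hc))
      have : (fun x => χ x * Real.log (h x)) =ᶠ[𝓝 x] fun _ => 0 := by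
        filter_upwards [notMem_tsupport_iff_eventuallyEq.1 hx'] with y hy
        simp [hy]
      exact contDiffAt_const.congr_of_eventuallyEq this
  · intro x hx
    have : χ x = 1 := χ.one_of_mem_closedBall (Metric.ball_subset_closedBall hx)
    simp [this]

lemma det_pivot {ι : Type} [Fintype ι] [DecidableEq ι] (p : ι) (M : Matrix ι ι ℝ)
    (hM : ∀ a, a ≠ p → ∀ k, M a k = if a = k then 1 else 0) : M.det = M p p := by
  have : M = (1 : Matrix ι ι ℝ).updateRow p (M p) := by
    ext a k
    by_cases h : a = p
    · subst h; simp
    · rw [Matrix.updateRow_ne h, hM a h, Matrix.one_apply]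
  conv_lhs => rw [this]
  rw [← Matrix.cramer_transpose_apply]
  simp

lemma dir2 {m n : ℕ} (hn : 2 ≤ n)
    (B : Fin n → Finset (Fin m))
    (hBne : ∀ i, (B i).Nonempty)
    (hBdisj : ∀ i j, i ≠ j → Disjoint (B i) (B j))
    (hBcover : ∀ k, ∃ i, k ∈ B i)
    (h : (Fin m → ℝ) → ℝ) (V : Set (Fin m → ℝ))
    (hV : IsOpen V) (h0V : (0 : Fin m → ℝ) ∈ V)
    (hsm : ContDiffOn ℝ (⊤ : ℕ∞) h V) (hpos : ∀ x ∈ V, 0 < h x)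
    (W : Set (Fin m → ℝ)) (hW : IsOpen W) (h0W : (0 : Fin m → ℝ) ∈ W) (hWV : W ⊆ V)
    (hz : ∀ k l : Fin m, (¬ ∃ i, k ∈ B i ∧ l ∈ B i) →
        ∀ x ∈ W, logpd2 h k l x = 0) :
    ∃ (U : Set (Fin m → ℝ)) (φ : (Fin m → ℝ) → (Fin m → ℝ)),
        IsOpen U ∧ (0 : Fin m → ℝ) ∈ U ∧ U ⊆ V ∧ φ 0 = 0 ∧
        ContDiffOn ℝ (⊤ : ℕ∞) φ U ∧ Set.InjOn φ U ∧
        (∀ x ∈ U, ∃ L : (Fin m → ℝ) ≃L[ℝ] (Fin m → ℝ),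
          fderiv ℝ φ x = (L : (Fin m → ℝ) →L[ℝ] (Fin m → ℝ))) ∧
        (∀ i : Fin n, ∀ a ∈ B i, ∀ x ∈ U, ∀ y ∈ U,
          (∀ k ∈ B i, x k = y k) → φ x a = φ y a) ∧
        (∀ x ∈ U, h x = |∏ i, blockDet B φ i x|) := by
  obtain ⟨F, hF, r₁, hr₁, hFh⟩ := extend_log h V hV h0V hsm hpos
  obtain ⟨r₂, hr₂, hr₂W⟩ := Metric.isOpen_iff.1 hW 0 h0W
  set r := min r₁ r₂ with hr
  have hr0 : 0 < r := lt_min hr₁ hr₂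
  have hU1 : Metric.ball (0 : Fin m → ℝ) r ⊆ Metric.ball 0 r₁ :=
    Metric.ball_subset_ball (min_le_left _ _)
  have hU2 : Metric.ball (0 : Fin m → ℝ) r ⊆ W :=
    (Metric.ball_subset_ball (min_le_right _ _)).trans hr₂W
  have hF2 := contDiff_infty_iff_fderiv.1 (contDiff_infty_iff_fderiv.1 hF).2
  have hz' : ∀ k l : Fin m, (¬ ∃ i, k ∈ B i ∧ l ∈ B i) →
      ∀ x ∈ Metric.ball (0 : Fin m → ℝ) r,
      fderiv ℝ (fderiv ℝ F) x (Pi.single k 1) (Pi.single l 1) = 0 := by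
    intro k l hkl x hx
    have h1 := hz l k (fun ⟨i, a, b⟩ => hkl ⟨i, b, a⟩) x (hU2 hx)
    unfold logpd2 at h1
    have e1 : ∀ y ∈ Metric.ball (0 : Fin m → ℝ) r,
        fderiv ℝ (fun z => Real.log (h z)) y = fderiv ℝ F y := by
      intro y hy
      apply Filter.EventuallyEq.fderiv_eq
      filter_upwards [Metric.isOpen_ball.mem_nhds hy] with z hz
      exact (hFh z (hU1 hz)).symm
    have e2 : (fun y => fderiv ℝ (fun z => Real.log (h z)) y (Pi.single l (1:ℝ))) =ᶠ[𝓝 x]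
        fun y => fderiv ℝ F y (Pi.single l (1:ℝ)) := by
      filter_upwards [Metric.isOpen_ball.mem_nhds hx] with y hy
      rw [e1 y hy]
    rw [e2.fderiv_eq] at h1
    have h3 := (hF2.1 x).hasFDerivAt.clm_apply (hasFDerivAt_const (Pi.single l (1:ℝ)) x)
    rw [h3.fderiv] at h1
    simpa using h1
  choose idx hidx using hBcover
  have huniq : ∀ i k, k ∈ B i → idx k = i := by
    intro i k hk
    by_contra hc
    exact Finset.disjoint_left.1 (hBdisj _ _ hc) (hidx k) hk
  choose p hp using hBne
  set c : ℝ := ((n:ℝ) - 1) / n * F 0 with hc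
  let g : Fin n → (Fin m → ℝ) → ℝ := fun i y => Real.exp (F (cproj (B i) y) - c)
  have hgs : ∀ i, ContDiff ℝ ∞ (g i) := fun i =>
    ((hF.comp (cproj_smooth (B i))).sub contDiff_const).exp
  have hgp : ∀ i x, 0 < g i x := fun i x => Real.exp_pos _
  have hgB : ∀ i x y, (∀ k ∈ B i, x k = y k) → g i x = g i y := by
    intro i x y hxy
    have : cproj (B i) x = cproj (B i) y := by
      ext k
      by_cases hk : k ∈ B i
      · simp [cproj, hk, hxy k hk]
      · simp [cproj, hk]
    simp only [g, this]
  let φ : (Fin m → ℝ) → (Fin m → ℝ) := fun x a =>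
    if a = p (idx a) then piv (g (idx a)) a x else x a
  have φp : ∀ a, a = p (idx a) → (fun x => φ x a) = piv (g (idx a)) a := by
    intro a ha
    ext x
    simp only [φ]
    rw [if_pos ha]
  have φn : ∀ a, a ≠ p (idx a) → (fun x => φ x a) = fun x => x a := by
    intro a ha
    ext x
    simp only [φ]
    rw [if_neg ha]
  have hφc : ∀ a, ContDiff ℝ ∞ (fun x => φ x a) := by
    intro a
    by_cases ha : a = p (idx a)
    · rw [φp a ha]; exact piv_smooth (hgs _) a
    · rw [φn a ha]; fun_prop
  have hφs : ContDiff ℝ ∞ φ := contDiff_pi.2 hφc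
  have hinv : ∀ i : Fin n, ∀ a ∈ B i, ∀ x y : Fin m → ℝ,
          (∀ k ∈ B i, x k = y k) → φ x a = φ y a := by
    intro i a ha x y hxy
    have hi := huniq i a ha
    by_cases h1 : a = p (idx a)
    · rw [show φ x a = _ from congrFun (φp a h1) x, show φ y a = _ from congrFun (φp a h1) y, hi]
      exact piv_inv (B i) a ha (hgB i) x y hxy
    · rw [show φ x a = _ from congrFun (φn a h1) x, show φ y a = _ from congrFun (φn a h1) y]
      exact hxy a ha
  have hpidx : ∀ i, idx (p i) = i := fun i => huniq i _ (hp i)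
  have hnp : ∀ i, ∀ k ∈ B i, k ≠ p i → k ≠ p (idx k) := by
    intro i k hk hkp
    rwa [huniq i k hk]
  have hpp : ∀ i, p i = p (idx (p i)) := fun i => by rw [hpidx]
  have hdp : ∀ i x, fderiv ℝ (fun z => φ z (p i)) x (Pi.single (p i) 1) = g i x := by
    intro i x
    rw [φp _ (hpp i), piv_deriv (hgs _), hpidx]
  have hdn : ∀ a, a ≠ p (idx a) → ∀ x v, fderiv ℝ (fun z => φ z a) x v = v a := by
    intro a ha x v
    rw [φn a ha]
    have := (ContinuousLinearMap.proj (R := ℝ) (φ := fun _ : Fin m => ℝ) a).hasFDerivAt (x := x)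
    have h2 : HasFDerivAt (fun z : Fin m → ℝ => z a)
      (ContinuousLinearMap.proj (R := ℝ) (φ := fun _ : Fin m => ℝ) a) x := this
    rw [h2.fderiv]; simp
  refine ⟨Metric.ball 0 r, φ, Metric.isOpen_ball, Metric.mem_ball_self hr0, hU2.trans hWV,
    ?_, hφs.contDiffOn, ?_, ?_, ?_, ?_⟩
  · ext a
    by_cases ha : a = p (idx a)
    · rw [show φ 0 a = _ from congrFun (φp a ha) 0]
      simp [piv]
    · rw [show φ 0 a = _ from congrFun (φn a ha) 0]
  · intro x _ y _ hxy
    have h1 : ∀ a, a ≠ p (idx a) → x a = y a := by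
      intro a ha
      have := congrFun hxy a
      rwa [show φ x a = _ from congrFun (φn a ha) x,
        show φ y a = _ from congrFun (φn a ha) y] at this
    ext a
    by_cases ha : a = p (idx a)
    · have := congrFun hxy a
      rw [show φ x a = _ from congrFun (φp a ha) x,
        show φ y a = _ from congrFun (φp a ha) y] at this
      refine piv_inj (hgs _) (hgp _) (B (idx a)) a (hgB _) x y ?_ this
      intro k hk hka
      exact h1 k (hnp _ k hk (by rwa [← ha]))
    · exact h1 a ha
  · intro x _
    have hinj : Function.Injective (fderiv ℝ φ x : (Fin m → ℝ) →ₗ[ℝ] (Fin m → ℝ)) := by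
      rw [← LinearMap.ker_eq_bot, LinearMap.ker_eq_bot']
      intro v hv
      have hv' : ∀ a, fderiv ℝ (fun z => φ z a) x v = 0 := by
        intro a
        have hh := hasFDerivAt_pi'.1 ((hφs.differentiable (by simp)) x).hasFDerivAt a
        have hv2 : fderiv ℝ φ x v = 0 := hv
        rw [hh.fderiv]
        simp [hv2]
      have h1 : ∀ a, a ≠ p (idx a) → v a = 0 := fun a ha => by
        rw [← hdn a ha x v, hv' a]
      ext a
      by_cases ha : a = p (idx a)
      · have h2 := hv' a
        have h3 : fderiv ℝ (fun z => φ z a) x (v - v a • Pi.single a 1) = 0 := by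
          have := fderiv_dir_eq (f := fun z => φ z a) (g := fun _ => φ x a) (x := x) (y := x)
            (v := v - v a • Pi.single a 1) 0 ((hφc a).differentiable (by simp) x)
            (differentiableAt_const _) (Eventually.of_forall fun t => by
              rw [add_zero]
              apply hinv (idx a) a (hidx a)
              intro k hk
              by_cases hka : k = a
              · subst hka; simp
              · have := h1 k (hnp _ k hk (by rwa [← ha]))
                simp [hka, this])
          rw [this]; simp
        rw [map_sub, h2, map_smul] at h3
        have h4 := hdp (idx a) x
        rw [← ha] at h4
        rw [h4] at h3
        have := (hgp (idx a) x).ne'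
        simpa [this] using h3
      · exact h1 a ha
    refine ⟨(LinearEquiv.ofInjectiveEndo _ hinj).toContinuousLinearEquiv, ?_⟩
    ext v a
    simp
  · intro i a ha x _ y _ hxy
    exact hinv i a ha x y hxy
  · intro x hx
    have hdet : ∀ i, blockDet B φ i x = g i x := by
      intro i
      unfold blockDet
      rw [det_pivot (⟨p i, hp i⟩ : ↥(B i))]
      · simp only [Matrix.of_apply]
        exact hdp i x
      · intro a ha k
        rw [Matrix.of_apply, hdn a.1 (hnp i a.1 a.2 (fun e => ha (Subtype.ext e)))]
        rw [Pi.single_apply]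
        by_cases hak : a = k
        · rw [if_pos hak, if_pos (congrArg Subtype.val hak)]
        · rw [if_neg hak, if_neg (fun e => hak (Subtype.ext e))]
    have hfull : cproj (Finset.univ.biUnion B) x = x := by
      ext k
      have : ∃ i, k ∈ B i := ⟨_, hidx k⟩
      simp [cproj, this]
    have hdec := decomp B hBdisj hF r hz' x hx Finset.univ
    rw [hfull] at hdec
    simp only [hdet]
    rw [abs_of_pos (Finset.prod_pos fun i _ => hgp i x)]
    simp only [g]
    rw [← Real.exp_sum]
    have hn0 : (n:ℝ) ≠ 0 := by positivity
    have : ∑ i, (F (cproj (B i) x) - c) = F x := by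
      rw [hdec]
      simp only [Finset.sum_sub_distrib, Finset.sum_const, Finset.card_univ, Fintype.card_fin,
        nsmul_eq_mul, hc]
      field_simp
      ring
    rw [this, hFh x (hU1 hx), Real.exp_log (hpos x (hWV (hU2 hx)))]

/-- A divergence-free `n`-web volume density `h` near `0 ∈ ℝ^m` is
equivalent to the standard one via a block-product diffeomorphism iff all the mixed
partial derivatives of `log h` across different blocks vanish near `0`. -/
theorem stmt0 {m n : ℕ} (hm : 2 ≤ m) (hn : 2 ≤ n)
    (B : Fin n → Finset (Fin m))
    (hBne : ∀ i, (B i).Nonempty)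
    (hBdisj : ∀ i j, i ≠ j → Disjoint (B i) (B j))
    (hBcover : ∀ k, ∃ i, k ∈ B i)
    (h : (Fin m → ℝ) → ℝ) (V : Set (Fin m → ℝ))
    (hV : IsOpen V) (h0V : (0 : Fin m → ℝ) ∈ V)
    (hsm : ContDiffOn ℝ (⊤ : ℕ∞) h V) (hpos : ∀ x ∈ V, 0 < h x) :
    (∃ (U : Set (Fin m → ℝ)) (φ : (Fin m → ℝ) → (Fin m → ℝ)),
        IsOpen U ∧ (0 : Fin m → ℝ) ∈ U ∧ U ⊆ V ∧ φ 0 = 0 ∧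
        ContDiffOn ℝ (⊤ : ℕ∞) φ U ∧ Set.InjOn φ U ∧
        (∀ x ∈ U, ∃ L : (Fin m → ℝ) ≃L[ℝ] (Fin m → ℝ),
          fderiv ℝ φ x = (L : (Fin m → ℝ) →L[ℝ] (Fin m → ℝ))) ∧
        (∀ i : Fin n, ∀ a ∈ B i, ∀ x ∈ U, ∀ y ∈ U,
          (∀ k ∈ B i, x k = y k) → φ x a = φ y a) ∧
        (∀ x ∈ U, h x = |∏ i, blockDet B φ i x|)) ↔
    (∃ W : Set (Fin m → ℝ), IsOpen W ∧ (0 : Fin m → ℝ) ∈ W ∧ W ⊆ V ∧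
      ∀ k l : Fin m, (¬ ∃ i, k ∈ B i ∧ l ∈ B i) →
        ∀ x ∈ W, logpd2 h k l x = 0) := by
  constructor
  · rintro ⟨U, φ, hU, h0U, hUV, -, hφ, -, -, hb, hdet⟩
    exact ⟨U, hU, h0U, hUV, fun k l hkl x hx =>
      dir1 B h V hV hsm hpos U φ hU hUV hφ hb hdet k l hkl x hx⟩
  · rintro ⟨W, hW, h0W, hWV, hz⟩
    exact dir2 hn B hBne hBdisj hBcover h V hV h0V hsm hpos W hW h0W hWV hz
end
end

section
/- Let m ≥ 2 and let B_1,…,B_n (n ≥ 2) be a partition of {1,…,m} into nonempty blocks; write k ≁ l if k,l lie in different blocks. Let h be a smooth positive function on a neighborhood of 0 in ℝ^m. Then ∂²(log h)/∂x_k∂x_l vanishes on a neighborhood of 0 for all pairs k ≁ l if and only if there exist smooth positive functions g_1,…,g_n, where g_i is defined on a neighborhood of 0 in ℝ^{|B_i|}, such that h(x) = ∏_{i=1}^n g_i(x_{B_i}) for all x in a neighborhood of 0. -/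
open MeasureTheory

noncomputable section

lemma aux_fderiv_zero {E : Type*} [NormedAddCommGroup E] [NormedSpace ℝ E] (F : E → ℝ) (x v : E)
    (hF : ∀ᶠ t : ℝ in nhds 0, F (x + t • v) = F x) : fderiv ℝ F x v = 0 := by
  by_cases hd : DifferentiableAt ℝ F x
  · rw [← hd.lineDeriv_eq_fderiv]
    unfold lineDeriv
    have : (fun t : ℝ => F (x + t • v)) =ᶠ[nhds 0] fun _ => F x := hF
    rw [this.deriv_eq]
    simp
  · rw [fderiv_zero_of_not_differentiableAt hd]
    simp

def auxp {m : ℕ} (S : Finset (Fin m)) : (Fin m → ℝ) →L[ℝ] (Fin m → ℝ) :=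
  ContinuousLinearMap.pi (fun k => if k ∈ S then ContinuousLinearMap.proj k else 0)

lemma auxp_apply {m : ℕ} (S : Finset (Fin m)) (x : Fin m → ℝ) (k : Fin m) :
    auxp S x k = if k ∈ S then x k else 0 := by
  unfold auxp
  by_cases hk : k ∈ S <;> simp [hk]

lemma aux_lin {m : ℕ} (L : (Fin m → ℝ) →L[ℝ] ℝ) (v : Fin m → ℝ)
    (hL : ∀ l, v l = 0 ∨ L (Pi.single l 1) = 0) : L v = 0 := by
  have h1 : v = ∑ l, v l • (Pi.single l (1:ℝ) : Fin m → ℝ) := by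
    ext j
    simp [Finset.sum_apply, Pi.single_apply]
  rw [h1, map_sum]
  refine Finset.sum_eq_zero fun l _ => ?_
  rw [map_smul]
  rcases hL l with h | h <;> simp [h]

lemma aux_mem {m : ℕ} {r : ℝ} {x : Fin m → ℝ} (hr : 0 < r) :
    x ∈ Metric.ball (0 : Fin m → ℝ) r ↔ ∀ k, |x k| < r := by
  rw [mem_ball_zero_iff, pi_norm_lt_iff hr]
  simp

lemma aux_const {m : ℕ} {r : ℝ} (F : (Fin m → ℝ) → ℝ)
    (hd : ∀ x ∈ Metric.ball (0 : Fin m → ℝ) r, DifferentiableAt ℝ F x)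
    (hz : ∀ x ∈ Metric.ball (0 : Fin m → ℝ) r, fderiv ℝ F x = 0)
    {x y : Fin m → ℝ} (hx : x ∈ Metric.ball (0 : Fin m → ℝ) r)
    (hy : y ∈ Metric.ball (0 : Fin m → ℝ) r) : F x = F y :=
  Metric.isOpen_ball.is_const_of_fderiv_eq_zero (convex_ball _ _).isPreconnected
    (fun z hz => (hd z hz).differentiableWithinAt) (fun z h => hz z h) hx hy

lemma aux_proj {m : ℕ} {r : ℝ} (hr : 0 < r) (S : Finset (Fin m)) (F : (Fin m → ℝ) → ℝ)
    (hd : ∀ x ∈ Metric.ball (0 : Fin m → ℝ) r, DifferentiableAt ℝ F x)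
    (hz : ∀ x ∈ Metric.ball (0 : Fin m → ℝ) r, ∀ l, l ∉ S → fderiv ℝ F x (Pi.single l 1) = 0)
    {x : Fin m → ℝ} (hx : x ∈ Metric.ball (0 : Fin m → ℝ) r) : F x = F (auxp S x) := by
  set Q : (Fin m → ℝ) →L[ℝ] (Fin m → ℝ) := ContinuousLinearMap.id ℝ _ - auxp S with hQ
  have hQa : ∀ z k, Q z k = if k ∈ S then 0 else z k := by
    intro z k
    simp only [hQ, ContinuousLinearMap.sub_apply, Pi.sub_apply, auxp_apply,
      ContinuousLinearMap.id_apply]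
    split_ifs <;> simp
  have hA : ∀ z, HasFDerivAt (fun z => auxp S x + Q z) Q z := fun z =>
    Q.hasFDerivAt.const_add _
  have hmem : ∀ z ∈ Metric.ball (0 : Fin m → ℝ) r,
      auxp S x + Q z ∈ Metric.ball (0 : Fin m → ℝ) r := by
    intro z hz
    rw [aux_mem hr] at hz hx ⊢
    intro k
    rw [Pi.add_apply, hQa, auxp_apply]
    split_ifs
    · simpa using hx k
    · simpa using hz k
  have hc : ∀ z ∈ Metric.ball (0 : Fin m → ℝ) r,
      HasFDerivAt (fun z => F (auxp S x + Q z)) ((fderiv ℝ F (auxp S x + Q z)).comp Q) z := by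
    intro z hz
    exact (hd _ (hmem z hz)).hasFDerivAt.comp z (hA z)
  have := aux_const (r := r) (fun z => F (auxp S x + Q z))
    (fun z h => (hc z h).differentiableAt) (by
      intro z h
      rw [(hc z h).fderiv]
      ext v
      simp only [ContinuousLinearMap.comp_apply, ContinuousLinearMap.zero_apply]
      apply aux_lin
      intro l
      rw [hQa]
      by_cases hl : l ∈ S
      · left; simp [hl]
      · right; exact hz _ (hmem z h) l hl) hx (Metric.mem_ball_self hr)
  simpa [hQ] using this

def auxi {m : ℕ} (S : Finset (Fin m)) (y : ↥S → ℝ) : Fin m → ℝ :=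
  fun k => if hk : k ∈ S then y ⟨k, hk⟩ else 0

lemma auxi_contDiff {m : ℕ} (S : Finset (Fin m)) : ContDiff ℝ (⊤ : ℕ∞) (auxi S) := by
  rw [contDiff_pi]
  intro k
  unfold auxi
  by_cases hk : k ∈ S
  · simp only [hk, dite_true]
    exact contDiff_apply ℝ ℝ _
  · simp only [hk, dite_false]
    exact contDiff_const

lemma auxi_res {m : ℕ} (S : Finset (Fin m)) (x : Fin m → ℝ) :
    auxi S (fun k => x k.1) = auxp S x := by
  ext k
  rw [auxp_apply]
  unfold auxi
  split_ifs <;> rfl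

lemma auxi_mem {m : ℕ} {r : ℝ} (hr : 0 < r) (S : Finset (Fin m)) (y : ↥S → ℝ)
    (hy : y ∈ Metric.ball (0 : ↥S → ℝ) r) : auxi S y ∈ Metric.ball (0 : Fin m → ℝ) r := by
  rw [mem_ball_zero_iff, pi_norm_lt_iff hr] at hy
  rw [aux_mem hr]
  intro k
  unfold auxi
  split_ifs with hk
  · simpa using hy ⟨k, hk⟩
  · simpa using hr

lemma aux_sum {m n : ℕ} {r : ℝ} (hr : 0 < r) (B : Fin n → Finset (Fin m))
    (hBdisj : ∀ i j, i ≠ j → Disjoint (B i) (B j))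
    (hBcover : ∀ k, ∃ i, k ∈ B i) (f : (Fin m → ℝ) → ℝ)
    (hf : ∀ x ∈ Metric.ball (0 : Fin m → ℝ) r, ContDiffAt ℝ (⊤ : ℕ∞) f x)
    (hz : ∀ k l : Fin m, (¬ ∃ i, k ∈ B i ∧ l ∈ B i) → ∀ x ∈ Metric.ball (0 : Fin m → ℝ) r,
      fderiv ℝ (fun y => fderiv ℝ f y (Pi.single k (1:ℝ))) x (Pi.single l 1) = 0)
    {x : Fin m → ℝ} (hx : x ∈ Metric.ball (0 : Fin m → ℝ) r) :
    f x - ∑ i, f (auxp (B i) x) = f 0 - ∑ i : Fin n, f 0 := by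
  have hdf : ∀ x ∈ Metric.ball (0 : Fin m → ℝ) r, DifferentiableAt ℝ f x := fun x hx =>
    (hf x hx).differentiableAt (by simp)
  have hpm : ∀ x ∈ Metric.ball (0 : Fin m → ℝ) r, ∀ i,
      auxp (B i) x ∈ Metric.ball (0 : Fin m → ℝ) r := by
    intro x hx i
    rw [aux_mem hr] at hx ⊢
    intro k
    rw [auxp_apply]
    split_ifs
    · exact hx k
    · simpa using hr
  have hG : ∀ x ∈ Metric.ball (0 : Fin m → ℝ) r,
      HasFDerivAt (fun x => f x - ∑ i, f (auxp (B i) x))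
        (fderiv ℝ f x - ∑ i, (fderiv ℝ f (auxp (B i) x)).comp (auxp (B i))) x := by
    intro x hx
    refine (hdf x hx).hasFDerivAt.sub (HasFDerivAt.fun_sum fun i _ => ?_)
    exact (hdf _ (hpm x hx i)).hasFDerivAt.comp x (auxp (B i)).hasFDerivAt
  have := aux_const _ (fun x hx => (hG x hx).differentiableAt) (by
    intro x hx
    rw [(hG x hx).fderiv]
    ext v
    rw [ContinuousLinearMap.zero_apply]
    apply aux_lin
    intro k
    right
    obtain ⟨i, hi⟩ := hBcover k
    have hs : ∀ j, auxp (B j) (Pi.single k (1:ℝ)) = if j = i then Pi.single k (1:ℝ) else 0 := by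
      intro j
      ext l
      rw [auxp_apply]
      by_cases hj : j = i
      · subst hj
        simp only [if_true]
        by_cases hl : l = k
        · subst hl; simp [hi]
        · simp [hl]
      · have : k ∉ B j := fun hk => Finset.disjoint_left.mp (hBdisj j i hj) hk hi
        simp only [hj, if_false]
        by_cases hl : l = k
        · subst hl; simp [this]
        · simp [hl]
    simp only [ContinuousLinearMap.sub_apply, ContinuousLinearMap.sum_apply,
      ContinuousLinearMap.comp_apply, hs]
    rw [Finset.sum_eq_single i (by intro j _ hj; simp [hj]) (by simp), if_pos rfl, sub_eq_zero]
    refine aux_proj hr (B i) (fun y => fderiv ℝ f y (Pi.single k (1:ℝ))) ?_ ?_ hx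
    · intro y hy
      have h1 : ContDiffAt ℝ 1 (fderiv ℝ f) y :=
        (hf y hy).fderiv_right (by
          have h2 : ((2 : ℕ∞) : WithTop ℕ∞) ≤ ((⊤ : ℕ∞) : WithTop ℕ∞) := WithTop.coe_le_coe.mpr le_top
          have h3 : (1 : WithTop ℕ∞) + 1 = ((2 : ℕ∞) : WithTop ℕ∞) := one_add_one_eq_two
          rw [h3]; exact h2)
      exact (h1.differentiableAt (by simp)).clm_apply (differentiableAt_const _)
    · intro y hy l hl
      refine hz k l ?_ y hy
      rintro ⟨j, hkj, hlj⟩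
      by_cases hj : j = i
      · subst hj; exact hl hlj
      · exact Finset.disjoint_left.mp (hBdisj j i hj) hkj hi) hx (Metric.mem_ball_self hr)
  simpa using this

/-- The mixed partial derivatives of `log h` across different blocks
vanish near `0` iff `h` factorizes near `0` as a product of smooth positive functions
of the separate block variables. -/
theorem stmt1 {m n : ℕ} (hm : 2 ≤ m) (hn : 2 ≤ n)
    (B : Fin n → Finset (Fin m))
    (hBne : ∀ i, (B i).Nonempty)
    (hBdisj : ∀ i j, i ≠ j → Disjoint (B i) (B j))
    (hBcover : ∀ k, ∃ i, k ∈ B i)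
    (h : (Fin m → ℝ) → ℝ) (V : Set (Fin m → ℝ))
    (hV : IsOpen V) (h0V : (0 : Fin m → ℝ) ∈ V)
    (hsm : ContDiffOn ℝ (⊤ : ℕ∞) h V) (hpos : ∀ x ∈ V, 0 < h x) :
    (∃ W : Set (Fin m → ℝ), IsOpen W ∧ (0 : Fin m → ℝ) ∈ W ∧ W ⊆ V ∧
      ∀ k l : Fin m, (¬ ∃ i, k ∈ B i ∧ l ∈ B i) →
        ∀ x ∈ W, logpd2 h k l x = 0) ↔
    (∃ (U : Set (Fin m → ℝ)) (g : ∀ i : Fin n, (↥(B i) → ℝ) → ℝ)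
        (W : ∀ i : Fin n, Set (↥(B i) → ℝ)),
      IsOpen U ∧ (0 : Fin m → ℝ) ∈ U ∧ U ⊆ V ∧
      (∀ i, IsOpen (W i) ∧ (0 : ↥(B i) → ℝ) ∈ W i ∧
        ContDiffOn ℝ (⊤ : ℕ∞) (g i) (W i) ∧ ∀ y ∈ W i, 0 < g i y) ∧
      (∀ x ∈ U, ∀ i, (fun k : ↥(B i) => x k.1) ∈ W i) ∧
      (∀ x ∈ U, h x = ∏ i, g i (fun k : ↥(B i) => x k.1))) := by
  have hflog : ∀ x ∈ V, ContDiffAt ℝ (⊤ : ℕ∞) (fun z => Real.log (h z)) x := fun x hx =>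
    (hsm.contDiffAt (hV.mem_nhds hx)).log (hpos x hx).ne'
  constructor
  · rintro ⟨W, hWo, h0W, hWV, hz⟩
    obtain ⟨r, hr, hrW⟩ := Metric.isOpen_iff.mp hWo 0 h0W
    set f : (Fin m → ℝ) → ℝ := fun z => Real.log (h z) with hfdef
    have hsum := fun x hx => aux_sum hr B hBdisj hBcover f
      (fun x hx => hflog x (hWV (hrW hx))) (fun k l hkl x hx => hz k l hkl x (hrW hx)) (x := x) hx
    refine ⟨Metric.ball 0 r, fun i y => Real.exp (f (auxi (B i) y) - (f 0 - f 0 / n)),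
      fun i => Metric.ball 0 r, Metric.isOpen_ball, Metric.mem_ball_self hr,
      hrW.trans hWV, fun i => ⟨Metric.isOpen_ball, Metric.mem_ball_self hr, ?_, ?_⟩, ?_, ?_⟩
    · intro y hy
      apply ContDiffAt.contDiffWithinAt
      have h1 := hflog _ (hWV (hrW (auxi_mem hr (B i) y hy)))
      have h2 : ContDiffAt ℝ (⊤ : ℕ∞) (fun y => f (auxi (B i) y)) y :=
        ContDiffAt.comp y h1 (auxi_contDiff (B i)).contDiffAt
      exact (h2.sub contDiffAt_const).exp
    · intro y _
      exact Real.exp_pos _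
    · intro x hx i
      rw [aux_mem hr] at hx
      rw [mem_ball_zero_iff, pi_norm_lt_iff hr]
      intro k
      simpa using hx k.1
    · intro x hx
      simp only [auxi_res]
      rw [← Real.exp_sum, Finset.sum_sub_distrib]
      have h1 := hsum x hx
      have hn0 : (n : ℝ) ≠ 0 := by
        have : n ≠ 0 := by omega
        exact_mod_cast this
      simp only [Finset.sum_const, Finset.card_univ, Fintype.card_fin, nsmul_eq_mul] at h1 ⊢
      have h2 : (n : ℝ) * (f 0 - f 0 / n) = n * f 0 - f 0 := by field_simp
      have h3 : ∑ i, f (auxp (B i) x) - (n : ℝ) * (f 0 - f 0 / n) = f x := by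
        rw [h2]; linarith
      rw [h3, hfdef, Real.exp_log (hpos x (hWV (hrW hx)))]
  · rintro ⟨U, g, W, hUo, h0U, hUV, hg, hUW, hprod⟩
    refine ⟨U, hUo, h0U, hUV, ?_⟩
    intro k l hkl x hx
    obtain ⟨i, hi⟩ := hBcover k
    have hli : l ∉ B i := fun hl => hkl ⟨i, hi, hl⟩
    set P : Fin n → (Fin m → ℝ) → ℝ :=
      fun j z => Real.log (g j (fun k : ↥(B j) => z k.1)) with hP
    have hinv : ∀ j q, q ∉ B j → ∀ z (t : ℝ), P j (z + t • Pi.single q (1:ℝ)) = P j z := by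
      intro j q hq z t
      simp only [hP]
      congr 2
      ext s
      have : s.1 ≠ q := fun h => hq (h ▸ s.2)
      simp [this]
    have hPd : ∀ j, ∀ y ∈ U, DifferentiableAt ℝ (P j) y := by
      intro j y hy
      obtain ⟨hWo, -, hgs, hgp⟩ := hg j
      have h1 : DifferentiableAt ℝ (g j) (fun k : ↥(B j) => y k.1) :=
        (hgs.contDiffAt (hWo.mem_nhds (hUW y hy j))).differentiableAt (by simp)
      have h2 : DifferentiableAt ℝ (fun z : Fin m → ℝ => fun k : ↥(B j) => z k.1) y := by
        fun_prop
      exact (DifferentiableAt.comp y h1 h2).log (hgp _ (hUW y hy j)).ne'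
    have hsum : ∀ y ∈ U, Real.log (h y) = ∑ j, P j y := by
      intro y hy
      rw [hprod y hy, Real.log_prod]
      intro j _
      exact ((hg j).2.2.2 _ (hUW y hy j)).ne'
    have hfd : ∀ y ∈ U, fderiv ℝ (fun z => Real.log (h z)) y (Pi.single k (1:ℝ)) =
        fderiv ℝ (P i) y (Pi.single k 1) := by
      intro y hy
      have he : (fun z => Real.log (h z)) =ᶠ[nhds y] fun z => ∑ j, P j z :=
        Filter.eventually_of_mem (hUo.mem_nhds hy) hsum
      rw [he.fderiv_eq, fderiv_fun_sum (fun j _ => hPd j y hy), ContinuousLinearMap.sum_apply]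
      refine Finset.sum_eq_single i (fun j _ hj => ?_) (by simp)
      apply aux_fderiv_zero
      have hkj : k ∉ B j := fun hk => Finset.disjoint_left.mp (hBdisj j i hj) hk hi
      exact Filter.Eventually.of_forall fun t => hinv j k hkj y t
    unfold logpd2
    have he : (fun y => fderiv ℝ (fun z => Real.log (h z)) y (Pi.single k (1:ℝ))) =ᶠ[nhds x]
        fun y => fderiv ℝ (P i) y (Pi.single k 1) :=
      Filter.eventually_of_mem (hUo.mem_nhds hx) hfd
    rw [he.fderiv_eq]
    apply aux_fderiv_zero
    refine Filter.Eventually.of_forall fun t => ?_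
    have h1 : (fun z => P i (z + t • Pi.single l (1:ℝ))) = P i := by
      ext z
      exact hinv i l hli z t
    have h2 := fderiv_comp_add_right (𝕜 := ℝ) (f := P i) (x := x) (t • Pi.single l (1:ℝ))
    rw [h1] at h2
    simp only [← h2]
end
end

section
/- Let m ≥ 2 and let B_1,…,B_n (n ≥ 2) be a partition of {1,…,m} into nonempty blocks. Let φ be a smooth diffeomorphism from a neighborhood of 0 in ℝ^m onto an open subset of ℝ^m of block-product form φ(x) = (φ_1(x_{B_1}),…,φ_n(x_{B_n})) with φ(0)=0, and let h, h̃ be smooth positive functions (h defined near 0, h̃ defined near 0) related by h(x) = h̃(φ(x))·|∏_{i=1}^n det Dφ_i(x_{B_i})|. Then for every pair of indices k ∈ B_i, l ∈ B_j with i ≠ j and every x near 0: ∂²(log h)/∂x_k∂x_l (x) = Σ_{a∈B_i} Σ_{b∈B_j} (∂²(log h̃)/∂y_a∂y_b)(φ(x)) · (∂φ_a/∂x_k)(x) · (∂φ_b/∂x_l)(x), where φ_a denotes the a-th component function of φ. In other words, the symmetric 2-tensor Σ_{k≁l} (∂²(log h)/∂x_k∂x_l) dx_k dx_l is the pullback under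 φ of the corresponding tensor built from h̃. -/
open MeasureTheory

noncomputable section

/-- `f` is invariant under translations along `v` that stay in `U`. -/
def InvAlong {m : ℕ} (U : Set (Fin m → ℝ)) (v : Fin m → ℝ) (f : (Fin m → ℝ) → ℝ) : Prop :=
  ∀ x ∈ U, ∀ t : ℝ, x + t • v ∈ U → f (x + t • v) = f x

theorem InvAlong.fderiv_self {m : ℕ} {U : Set (Fin m → ℝ)} {v : Fin m → ℝ}
    {f : (Fin m → ℝ) → ℝ} (hU : IsOpen U) (hf : InvAlong U v f) {x : Fin m → ℝ} (hx : x ∈ U) :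
    fderiv ℝ f x v = 0 := by
  by_cases hd : DifferentiableAt ℝ f x
  · rw [← hd.lineDeriv_eq_fderiv]
    unfold lineDeriv
    have hc : Filter.Tendsto (fun t : ℝ => x + t • v) (nhds 0) (nhds x) := by
      have : Continuous (fun t : ℝ => x + t • v) := by fun_prop
      simpa using this.tendsto 0
    have : (fun t : ℝ => f (x + t • v)) =ᶠ[nhds 0] fun _ => f x := by
      filter_upwards [hc (hU.mem_nhds hx)] with t ht
      exact hf x hx t ht
    rw [this.deriv_eq]
    simp
  · rw [fderiv_zero_of_not_differentiableAt hd]; rfl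

theorem InvAlong.fderiv_apply {m : ℕ} {U : Set (Fin m → ℝ)} {v : Fin m → ℝ}
    {f : (Fin m → ℝ) → ℝ} (hU : IsOpen U) (hf : InvAlong U v f) (w : Fin m → ℝ) :
    InvAlong U v (fun y => fderiv ℝ f y w) := by
  intro x hx t hxt
  have h1 : (fun z => f (z + t • v)) =ᶠ[nhds x] f := by
    have hc : Filter.Tendsto (fun z : Fin m → ℝ => z + t • v) (nhds x) (nhds (x + t • v)) := by
      have : Continuous (fun z : Fin m → ℝ => z + t • v) := by fun_prop
      exact this.tendsto x
    filter_upwards [hU.mem_nhds hx, hc (hU.mem_nhds hxt)] with z hz hz'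
    exact hf z hz t hz'
  have h2 := h1.fderiv_eq (𝕜 := ℝ)
  rw [fderiv_comp_add_right] at h2
  simp only [h2]

theorem contDiffAt_fderiv_apply {m : ℕ} {f : (Fin m → ℝ) → ℝ} {x : Fin m → ℝ}
    (hf : ContDiffAt ℝ (⊤ : ℕ∞) f x) (w : Fin m → ℝ) :
    ContDiffAt ℝ (⊤ : ℕ∞) (fun y => fderiv ℝ f y w) x :=
  (hf.fderiv_right (m := (⊤ : ℕ∞)) (by simp)).clm_apply contDiffAt_const

theorem contDiffAt_blockDet {m n : ℕ} (B : Fin n → Finset (Fin m))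
    (φ : (Fin m → ℝ) → (Fin m → ℝ)) (i : Fin n) (x : Fin m → ℝ)
    (hφ : ContDiffAt ℝ (⊤ : ℕ∞) φ x) :
    ContDiffAt ℝ (⊤ : ℕ∞) (blockDet B φ i) x := by
  unfold blockDet
  simp only [Matrix.det_apply, Matrix.of_apply]
  refine ContDiffAt.sum fun σ _ => ?_
  refine ContDiffAt.const_smul _ ?_
  refine contDiffAt_prod fun a _ => ?_
  exact contDiffAt_fderiv_apply (contDiffAt_pi.1 hφ _) _

theorem fderiv_eq_sum {m : ℕ} (L : (Fin m → ℝ) →L[ℝ] ℝ) (w : Fin m → ℝ) :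
    L w = ∑ a, L (Pi.single a (1:ℝ)) * w a := by
  conv_lhs => rw [pi_eq_sum_univ' w]
  rw [map_sum]
  refine Finset.sum_congr rfl fun a _ => ?_
  rw [map_smul, smul_eq_mul, mul_comm]
  

/-- Chain rule in coordinates. -/
theorem chain_coord {m : ℕ} {F : (Fin m → ℝ) → ℝ} {φ : (Fin m → ℝ) → (Fin m → ℝ)}
    {y : Fin m → ℝ} (hF : DifferentiableAt ℝ F (φ y)) (hφ : DifferentiableAt ℝ φ y)
    (w : Fin m → ℝ) (S : Finset (Fin m))
    (hS : ∀ a, a ∉ S → fderiv ℝ (fun z => φ z a) y w = 0) :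
    fderiv ℝ (fun z => F (φ z)) y w =
      ∑ a ∈ S, fderiv ℝ F (φ y) (Pi.single a (1:ℝ)) * fderiv ℝ (fun z => φ z a) y w := by
  have h1 : fderiv ℝ (fun z => F (φ z)) y = (fderiv ℝ F (φ y)).comp (fderiv ℝ φ y) :=
    fderiv_comp y hF hφ
  have h2 : ∀ a, fderiv ℝ (fun z => φ z a) y w = fderiv ℝ φ y w a := by
    intro a
    rw [fderiv_pi (fun i => differentiableAt_pi.1 hφ i)]
    rfl
  rw [h1, ContinuousLinearMap.comp_apply, fderiv_eq_sum]
  symm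
  rw [← Finset.sum_subset (Finset.subset_univ S)]
  · exact Finset.sum_congr rfl fun a _ => by rw [h2]
  · intro a _ ha
    rw [← h2, hS a ha, mul_zero]

/-- The nonuniformity tensor transforms tensorially under block-preserving
volume-compatible coordinate changes: if `h = (h̃ ∘ φ) · |∏ det Dφ_i|`, then the mixed
logarithmic second derivatives of `h` across blocks are the pullback of those of `h̃`. -/
theorem stmt2 {m n : ℕ} (hm : 2 ≤ m) (hn : 2 ≤ n)
    (B : Fin n → Finset (Fin m))
    (hBne : ∀ i, (B i).Nonempty)
    (hBdisj : ∀ i j, i ≠ j → Disjoint (B i) (B j))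
    (hBcover : ∀ k, ∃ i, k ∈ B i)
    (φ : (Fin m → ℝ) → (Fin m → ℝ))
    (h ht : (Fin m → ℝ) → ℝ)
    (U V Vt : Set (Fin m → ℝ))
    (hU : IsOpen U) (h0U : (0 : Fin m → ℝ) ∈ U)
    (hV : IsOpen V) (h0V : (0 : Fin m → ℝ) ∈ V) (hUV : U ⊆ V)
    (hVt : IsOpen Vt) (h0Vt : (0 : Fin m → ℝ) ∈ Vt)
    (hsm : ContDiffOn ℝ (⊤ : ℕ∞) h V) (hpos : ∀ x ∈ V, 0 < h x)
    (htsm : ContDiffOn ℝ (⊤ : ℕ∞) ht Vt) (htpos : ∀ x ∈ Vt, 0 < ht x)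
    (hφ0 : φ 0 = 0) (hφsm : ContDiffOn ℝ (⊤ : ℕ∞) φ U) (hφinj : Set.InjOn φ U)
    (hφinv : ∀ x ∈ U, ∃ L : (Fin m → ℝ) ≃L[ℝ] (Fin m → ℝ),
      fderiv ℝ φ x = (L : (Fin m → ℝ) →L[ℝ] (Fin m → ℝ)))
    (hφblock : ∀ i : Fin n, ∀ a ∈ B i, ∀ x ∈ U, ∀ y ∈ U,
      (∀ k ∈ B i, x k = y k) → φ x a = φ y a)
    (hφran : ∀ x ∈ U, φ x ∈ Vt)
    (hrel : ∀ x ∈ U, h x = ht (φ x) * |∏ i, blockDet B φ i x|) :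
    ∃ U' : Set (Fin m → ℝ), IsOpen U' ∧ (0 : Fin m → ℝ) ∈ U' ∧ U' ⊆ U ∧
      ∀ i j : Fin n, i ≠ j → ∀ k ∈ B i, ∀ l ∈ B j, ∀ x ∈ U',
        logpd2 h k l x =
          ∑ a ∈ B i, ∑ b ∈ B j,
            logpd2 ht a b (φ x)
              * fderiv ℝ (fun z => φ z a) x (Pi.single k (1:ℝ))
              * fderiv ℝ (fun z => φ z b) x (Pi.single l (1:ℝ)) := by
  have hφat : ∀ x ∈ U, ContDiffAt ℝ (⊤ : ℕ∞) φ x := fun x hx =>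
    hφsm.contDiffAt (hU.mem_nhds hx)
  have hφc : ∀ a, ∀ x ∈ U, ContDiffAt ℝ (⊤ : ℕ∞) (fun z => φ z a) x := fun a x hx =>
    contDiffAt_pi.1 (hφat x hx) a
  have htop : ((⊤ : ℕ∞) : WithTop ℕ∞) ≠ 0 := by simp
  -- invariance of the components
  have hinv : ∀ i, ∀ a ∈ B i, ∀ l, l ∉ B i →
      InvAlong U (Pi.single l (1:ℝ)) (fun z => φ z a) := by
    intro i a ha l hl x hx t hxt
    refine hφblock i a ha _ hxt _ hx fun k hk => ?_
    have : k ≠ l := fun e => hl (e ▸ hk)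
    simp [this]
  have hinvD : ∀ i, ∀ l, l ∉ B i → InvAlong U (Pi.single l (1:ℝ)) (blockDet B φ i) := by
    intro i l hl x hx t hxt
    unfold blockDet
    congr 1
    ext a k
    exact (hinv i a.1 a.2 l hl).fderiv_apply hU _ x hx t hxt
  have hinvG : ∀ i, ∀ l, l ∉ B i →
      InvAlong U (Pi.single l (1:ℝ)) (fun z => Real.log (blockDet B φ i z)) := by
    intro i l hl x hx t hxt
    simp only [hinvD i l hl x hx t hxt]
  have hDne : ∀ x ∈ U, ∀ i, blockDet B φ i x ≠ 0 := by
    intro x hx i h0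
    have h1 := hpos x (hUV hx)
    rw [hrel x hx, Finset.prod_eq_zero (Finset.mem_univ i) h0] at h1
    simp at h1
  have hGat : ∀ i, ∀ x ∈ U,
      ContDiffAt ℝ (⊤ : ℕ∞) (fun z => Real.log (blockDet B φ i z)) x := fun i x hx =>
    (contDiffAt_blockDet B φ i x (hφat x hx)).log (hDne x hx i)
  have hFat : ∀ y ∈ Vt, ContDiffAt ℝ (⊤ : ℕ∞) (fun z => Real.log (ht z)) y := fun y hy =>
    (htsm.contDiffAt (hVt.mem_nhds hy)).log (htpos y hy).ne'
  have hFφ : ∀ x ∈ U, ContDiffAt ℝ (⊤ : ℕ∞) (fun z => Real.log (ht (φ z))) x := fun x hx =>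
    ContDiffAt.comp x (hFat _ (hφran x hx)) (hφat x hx)
  have hlog : ∀ x ∈ U, Real.log (h x) =
      Real.log (ht (φ x)) + ∑ i, Real.log (blockDet B φ i x) := by
    intro x hx
    rw [hrel x hx, Real.log_mul (htpos _ (hφran x hx)).ne'
      (abs_ne_zero.2 (Finset.prod_ne_zero_iff.2 fun i _ => hDne x hx i)), Real.log_abs,
      Real.log_prod (fun i _ => hDne x hx i)]
  refine ⟨U, hU, h0U, subset_rfl, ?_⟩
  intro i j hij k hk l hl x hx
  have hnot : ∀ {p q : Fin n} {a : Fin m}, p ≠ q → a ∈ B p → a ∉ B q := fun hpq ha hb =>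
    Finset.disjoint_left.1 (hBdisj _ _ hpq) ha hb
  have hzero : ∀ p, ∀ b ∈ B p, ∀ y ∈ U, ∀ a, a ∉ B p →
      fderiv ℝ (fun z => φ z a) y (Pi.single b (1:ℝ)) = 0 := by
    intro p b hb y hy a ha
    obtain ⟨q, hq⟩ := hBcover a
    have hpq : p ≠ q := fun e => ha (e ▸ hq)
    exact (hinv q a hq b (hnot hpq hb)).fderiv_self hU hy
  -- first derivative
  have hfirst : ∀ y ∈ U, fderiv ℝ (fun z => Real.log (h z)) y (Pi.single k (1:ℝ)) =
      (∑ a ∈ B i, fderiv ℝ (fun z => Real.log (ht z)) (φ y) (Pi.single a (1:ℝ)) *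
        fderiv ℝ (fun z => φ z a) y (Pi.single k (1:ℝ))) +
      fderiv ℝ (fun z => Real.log (blockDet B φ i z)) y (Pi.single k (1:ℝ)) := by
    intro y hy
    have he : (fun z => Real.log (h z)) =ᶠ[nhds y]
        fun z => Real.log (ht (φ z)) + ∑ i, Real.log (blockDet B φ i z) := by
      filter_upwards [hU.mem_nhds hy] with z hz using hlog z hz
    have hs : ∀ p ∈ (Finset.univ : Finset (Fin n)),
        DifferentiableAt ℝ (fun z => Real.log (blockDet B φ p z)) y := fun p _ =>
      (hGat p y hy).differentiableAt htop
    rw [he.fderiv_eq, fderiv_fun_add ((hFφ y hy).differentiableAt htop)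
      (DifferentiableAt.fun_sum hs), fderiv_fun_sum hs, ContinuousLinearMap.add_apply,
      ContinuousLinearMap.sum_apply]
    congr 1
    · exact chain_coord (F := fun z => Real.log (ht z))
        ((hFat _ (hφran y hy)).differentiableAt htop)
        ((hφat y hy).differentiableAt htop) _ _ (hzero i k hk y hy)
    · refine Finset.sum_eq_single i (fun p _ hp => ?_) (by simp)
      exact (hinvG p k (hnot hp.symm hk)).fderiv_self hU hy
  have he : (fun y => fderiv ℝ (fun z => Real.log (h z)) y (Pi.single k (1:ℝ))) =ᶠ[nhds x] _ :=
    Filter.eventually_of_mem (hU.mem_nhds hx) hfirst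
  have hA : ∀ a, DifferentiableAt ℝ
      (fun y => fderiv ℝ (fun z => Real.log (ht z)) y (Pi.single a (1:ℝ))) (φ x) := fun a =>
    (contDiffAt_fderiv_apply (hFat _ (hφran x hx)) _).differentiableAt htop
  have hφd := (hφat x hx).differentiableAt htop
  have hAφ : ∀ a, DifferentiableAt ℝ
      (fun y => fderiv ℝ (fun z => Real.log (ht z)) (φ y) (Pi.single a (1:ℝ))) x := fun a =>
    DifferentiableAt.comp x (hA a) hφd
  have hP : ∀ a, DifferentiableAt ℝ
      (fun y => fderiv ℝ (fun z => φ z a) y (Pi.single k (1:ℝ))) x := fun a =>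
    (contDiffAt_fderiv_apply (hφc a x hx) _).differentiableAt htop
  have hli : l ∉ B i := hnot hij.symm hl
  unfold logpd2
  rw [he.fderiv_eq, fderiv_fun_add
    (DifferentiableAt.fun_sum fun a _ => (hAφ a).fun_mul (hP a))
    ((contDiffAt_fderiv_apply (hGat i x hx) _).differentiableAt htop),
    ContinuousLinearMap.add_apply,
    ((hinvG i l hli).fderiv_apply hU _).fderiv_self hU hx, add_zero,
    fderiv_fun_sum fun a _ => (hAφ a).fun_mul (hP a), ContinuousLinearMap.sum_apply]
  refine Finset.sum_congr rfl fun a ha => ?_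
  rw [fderiv_fun_mul (hAφ a) (hP a), ContinuousLinearMap.add_apply,
    ContinuousLinearMap.smul_apply, ContinuousLinearMap.smul_apply,
    ((hinv i a ha l hli).fderiv_apply hU _).fderiv_self hU hx, smul_zero, zero_add,
    chain_coord (F := fun y => fderiv ℝ (fun z => Real.log (ht z)) y (Pi.single a (1:ℝ)))
      (hA a) hφd _ (B j) (hzero j l hl x hx), smul_eq_mul, Finset.mul_sum]
  refine Finset.sum_congr rfl fun b _ => ?_
  ring
end
end

section
/- Let m ≥ 2, let B_1,…,B_n (n ≥ 2) be a partition of {1,…,m} into nonempty blocks (write k ∼ l if k,l are in the same block, k ≁ l otherwise), let U ⊆ ℝ^m be open, and let h : U → ℝ be smooth and positive. Suppose Γ^k_{ij} : U → ℝ (1 ≤ i,j,k ≤ m) are smooth functions satisfying: (i) Γ^k_{ij} = Γ^k_{ji} for all i,j,k (torsion-freeness); (ii) Γ^k_{ij} = 0 unless i ∼ j ∼ k (the block foliations are parallel); (iii) Σ_{k=1}^m Γ^k_{ik} = ∂(log h)/∂x_i on U for every i (the volume form h·dx_1∧…∧dx_m is parallel). Define the Ricci tensor by Rc_{ij} = Σ_k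 [ ∂_i Γ^k_{kj} − ∂_k Γ^k_{ij} + Σ_l ( Γ^k_{il} Γ^l_{kj} − Γ^k_{kl} Γ^l_{ij} ) ]. Then for every pair of indices k ≁ l, Rc_{kl} = ∂²(log h)/∂x_k∂x_l on U; in particular these components of Rc do not depend on the choice of the Christoffel symbols Γ satisfying (i)–(iii). -/
open MeasureTheory

noncomputable section

/-- Partial derivative `∂f/∂x_i` at `x`. -/
def pd {m : ℕ} (f : (Fin m → ℝ) → ℝ) (i : Fin m) (x : Fin m → ℝ) : ℝ :=
  fderiv ℝ f x (Pi.single i (1:ℝ))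

/-- Ricci tensor `Rc_{ij} = Σ_k [ ∂_i Γ^k_{kj} − ∂_k Γ^k_{ij}
    + Σ_l ( Γ^k_{il} Γ^l_{kj} − Γ^k_{kl} Γ^l_{ij} ) ]`, where `Γ k i j = Γ^k_{ij}`. -/
def ricci {m : ℕ} (Γ : Fin m → Fin m → Fin m → (Fin m → ℝ) → ℝ)
    (i j : Fin m) (x : Fin m → ℝ) : ℝ :=
  ∑ k, (pd (Γ k k j) i x - pd (Γ k i j) k x
    + ∑ l, (Γ k i l x * Γ l k j x - Γ k k l x * Γ l i j x))

/-- For any torsion-free connection adapted to the block web (keeping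
the block foliations and the volume form `h·dx₁∧…∧dx_m` parallel), the cross-block
components of the Ricci tensor equal `∂²(log h)/∂x_k∂x_l`. -/
theorem stmt3 {m n : ℕ} (hm : 2 ≤ m) (hn : 2 ≤ n)
    (B : Fin n → Finset (Fin m))
    (hBne : ∀ i, (B i).Nonempty)
    (hBdisj : ∀ i j, i ≠ j → Disjoint (B i) (B j))
    (hBcover : ∀ k, ∃ i, k ∈ B i)
    (U : Set (Fin m → ℝ)) (hU : IsOpen U)
    (h : (Fin m → ℝ) → ℝ)
    (hsm : ContDiffOn ℝ (⊤ : ℕ∞) h U) (hpos : ∀ x ∈ U, 0 < h x)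
    (Γ : Fin m → Fin m → Fin m → (Fin m → ℝ) → ℝ)
    (hΓsm : ∀ k i j, ContDiffOn ℝ (⊤ : ℕ∞) (Γ k i j) U)
    (hΓsymm : ∀ k i j, ∀ x ∈ U, Γ k i j x = Γ k j i x)
    (hΓblock : ∀ k i j, (¬ ∃ s : Fin n, i ∈ B s ∧ j ∈ B s ∧ k ∈ B s) →
      ∀ x ∈ U, Γ k i j x = 0)
    (hΓvol : ∀ i, ∀ x ∈ U, ∑ k, Γ k i k x = pd (fun z => Real.log (h z)) i x) :
    ∀ k l : Fin m, (¬ ∃ s : Fin n, k ∈ B s ∧ l ∈ B s) →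
      ∀ x ∈ U, ricci Γ k l x = logpd2 h k l x := by
  intro i j hij x hx
  have hUx : U ∈ nhds x := hU.mem_nhds hx
  have hlog : ContDiffAt ℝ (⊤ : ℕ∞) (fun z => Real.log (h z)) x :=
    (hsm.contDiffAt hUx).log (hpos x hx).ne'
  have hzero : ∀ k, ∀ y ∈ U, Γ k i j y = 0 := by
    intro k y hy
    apply hΓblock k i j _ y hy
    rintro ⟨s, h1, h2, _⟩
    exact hij ⟨s, h1, h2⟩
  have hpd0 : ∀ k, pd (Γ k i j) k x = 0 := by
    intro k
    have : Γ k i j =ᶠ[nhds x] fun _ => (0:ℝ) := by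
      filter_upwards [hUx] with y hy using hzero k y hy
    unfold pd
    rw [this.fderiv_eq]
    simp
  have hprod : ∀ k l, Γ k i l x * Γ l k j x = 0 := by
    intro k l
    by_cases h1 : ∃ s : Fin n, i ∈ B s ∧ l ∈ B s ∧ k ∈ B s
    · by_cases h2 : ∃ s : Fin n, k ∈ B s ∧ j ∈ B s ∧ l ∈ B s
      · exfalso
        obtain ⟨s, his, _, hks⟩ := h1
        obtain ⟨t, hkt, hjt, _⟩ := h2
        have hst : s = t := by
          by_contra hne
          exact (Finset.disjoint_left.mp (hBdisj s t hne)) hks hkt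
        subst hst
        exact hij ⟨s, his, hjt⟩
      · rw [hΓblock l k j h2 x hx, mul_zero]
    · rw [hΓblock k i l h1 x hx, zero_mul]
  have hric : ricci Γ i j x = ∑ k, pd (Γ k k j) i x := by
    unfold ricci
    refine Finset.sum_congr rfl fun k _ => ?_
    simp [hpd0, hprod, hzero _ x hx]
  have hdiff : ∀ k, DifferentiableAt ℝ (Γ k k j) x := fun k =>
    ((hΓsm k k j).contDiffAt hUx).differentiableAt (by simp)
  have hsum : ∑ k, pd (Γ k k j) i x = pd (fun y => ∑ k, Γ k k j y) i x := by
    unfold pd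
    rw [fderiv_fun_sum (fun k _ => hdiff k)]
    simp
  have hev : (fun y => ∑ k, Γ k k j y) =ᶠ[nhds x]
      fun y => fderiv ℝ (fun z => Real.log (h z)) y (Pi.single j (1:ℝ)) := by
    filter_upwards [hUx] with y hy
    have := hΓvol j y hy
    unfold pd at this
    rw [← this]
    exact Finset.sum_congr rfl fun k _ => hΓsymm k k j y hy
  have htwo : (2 : WithTop ℕ∞) ≤ ((⊤ : ℕ∞) : WithTop ℕ∞) := by
    have h2 : ((2 : ℕ∞) : WithTop ℕ∞) ≤ ((⊤ : ℕ∞) : WithTop ℕ∞) :=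
      WithTop.coe_le_coe.2 le_top
    exact h2
  have hd2 : DifferentiableAt ℝ (fderiv ℝ (fun z => Real.log (h z))) x :=
    (hlog.fderiv_right (m := 1) (by rw [one_add_one_eq_two]; exact htwo)).differentiableAt (by simp)
  have hsymm : IsSymmSndFDerivAt ℝ (fun z => Real.log (h z)) x :=
    hlog.isSymmSndFDerivAt (by simpa using htwo)
  have hap : ∀ v w : Fin m → ℝ,
      fderiv ℝ (fun y => fderiv ℝ (fun z => Real.log (h z)) y v) x w
        = fderiv ℝ (fderiv ℝ (fun z => Real.log (h z))) x w v := by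
    intro v w
    rw [fderiv_clm_apply hd2 (differentiableAt_const v)]
    simp
  rw [hric, hsum]
  unfold pd logpd2
  rw [hev.fderiv_eq, hap, hap]
  exact hsymm.eq _ _
end
end

section
/- Let m ≥ 2, let U ⊆ ℝ^m be open, and let h : U → ℝ be smooth and positive. Define Christoffel symbols Γ^k_{ij} : U → ℝ by Γ^i_{ii} = ∂(log h)/∂x_i for each i, and Γ^k_{ij} = 0 whenever the indices i,j,k are not all equal. Then the Ricci tensor Rc_{ij} = Σ_k [ ∂_i Γ^k_{kj} − ∂_k Γ^k_{ij} + Σ_l ( Γ^k_{il} Γ^l_{kj} − Γ^k_{kl} Γ^l_{ij} ) ] satisfies Rc_{ij} = ∂²(log h)/∂x_i∂x_j for all i ≠ j, and Rc_{ii} = 0 for all i. -/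
open MeasureTheory

noncomputable section

/-- Christoffel symbols of the natural connection of the codimension-1 divergence-free
`m`-web with volume density `h`: `Γ^i_{ii} = ∂(log h)/∂x_i` and all other entries zero. -/
def natGamma {m : ℕ} (h : (Fin m → ℝ) → ℝ) (k i j : Fin m) (x : Fin m → ℝ) : ℝ :=
  if i = j ∧ j = k then pd (fun z => Real.log (h z)) i x else 0

/-- The Christoffel symbol vanishes as a function off the full diagonal. -/
theorem natGamma_off {m : ℕ} (h : (Fin m → ℝ) → ℝ) (k i j : Fin m) (hk : ¬ (i = j ∧ j = k)) :
    natGamma h k i j = fun _ => 0 := by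
  funext x
  simp [natGamma, hk]

theorem natGamma_diag {m : ℕ} (h : (Fin m → ℝ) → ℝ) (k : Fin m) :
    natGamma h k k k = pd (fun z => Real.log (h z)) k := by
  funext x
  simp [natGamma]

theorem pd_zero_fun {m : ℕ} (i : Fin m) (x : Fin m → ℝ) :
    pd (fun _ => (0 : ℝ)) i x = 0 := by
  simp [pd]

/-- The quadratic terms cancel. -/
theorem natGamma_quad {m : ℕ} (h : (Fin m → ℝ) → ℝ) (i j k l : Fin m) (x : Fin m → ℝ) :
    natGamma h k i l x * natGamma h l k j x - natGamma h k k l x * natGamma h l i j x = 0 := by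
  unfold natGamma
  split_ifs <;> grind

/-- Symmetry of second partial derivatives of a smooth function. -/
theorem pd_comm {m : ℕ} (f : (Fin m → ℝ) → ℝ) (x : Fin m → ℝ)
    (hf : ContDiffAt ℝ 2 f x) (i j : Fin m) :
    pd (pd f j) i x = pd (pd f i) j x := by
  have hsymm : IsSymmSndFDerivAt ℝ f x := hf.isSymmSndFDerivAt (by simp)
  have hd : DifferentiableAt ℝ (fderiv ℝ f) x :=
    (hf.fderiv_right (m := 1) (by norm_num)).differentiableAt (by norm_num)
  have key : ∀ a b : Fin m, pd (pd f a) b x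
      = fderiv ℝ (fderiv ℝ f) x (Pi.single b 1) (Pi.single a 1) := by
    intro a b
    unfold pd
    rw [fderiv_clm_apply hd (differentiableAt_const _)]
    simp
  rw [key, key]
  exact hsymm _ _

/-- The Ricci tensor of the natural connection of the codimension-1
divergence-free web with density `h` equals its nonuniformity tensor: the off-diagonal
components are `∂²(log h)/∂x_i∂x_j` and the diagonal ones vanish. -/
theorem stmt4 {m : ℕ} (hm : 2 ≤ m)
    (U : Set (Fin m → ℝ)) (hU : IsOpen U)
    (h : (Fin m → ℝ) → ℝ)
    (hsm : ContDiffOn ℝ (⊤ : ℕ∞) h U) (hpos : ∀ x ∈ U, 0 < h x) :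
    (∀ i j : Fin m, i ≠ j → ∀ x ∈ U, ricci (natGamma h) i j x = logpd2 h i j x) ∧
    (∀ i : Fin m, ∀ x ∈ U, ricci (natGamma h) i i x = 0) := by
  refine ⟨fun i j hij x hx => ?_, fun i x hx => ?_⟩
  · have hf : ContDiffAt ℝ 2 (fun z => Real.log (h z)) x :=
      ((hsm.contDiffAt (hU.mem_nhds hx)).of_le (WithTop.coe_le_coe.2 (le_top : (2 : ℕ∞) ≤ ⊤))).log (hpos x hx).ne'
    have h1 : ricci (natGamma h) i j x = pd (pd (fun z => Real.log (h z)) j) i x := by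
      unfold ricci
      simp only [natGamma_quad, Finset.sum_const_zero, add_zero]
      rw [Finset.sum_eq_single j]
      · rw [natGamma_diag, natGamma_off h j i j (fun e => hij e.1), pd_zero_fun, sub_zero]
      · intro k _ hk
        rw [natGamma_off h k k j (fun e => hk e.1), natGamma_off h k i j (fun e => hij e.1),
          pd_zero_fun, pd_zero_fun, sub_zero]
      · simp
    rw [h1, pd_comm _ x hf]
    rfl
  · unfold ricci
    simp only [natGamma_quad, Finset.sum_const_zero, add_zero]
    refine Finset.sum_eq_zero fun k _ => ?_
    by_cases hk : k = i
    · subst hk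
      exact sub_self _
    · rw [natGamma_off h k k i (fun e => hk e.1), natGamma_off h k i i (fun e => hk e.2.symm),
        pd_zero_fun, pd_zero_fun, sub_zero]
end
end

section
/- Let m ≥ 2, let U ⊆ ℝ^m be an open box (a product of open intervals), and let h : U → ℝ be smooth and positive. Then ∂²(log h)/∂x_i∂x_j ≡ 0 on U for all pairs i ≠ j if and only if there exist smooth positive functions g_1,…,g_m of one real variable such that h(x_1,…,x_m) = g_1(x_1)·g_2(x_2)·…·g_m(x_m) on U. Consequently, the connection with Christoffel symbols Γ^i_{ii} = ∂(log h)/∂x_i (all other Γ^k_{ij} = 0) is Ricci-flat on U if and only if h factorizes in this way. -/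
open MeasureTheory

noncomputable section

lemma ricci_natGamma {m : ℕ} (h : (Fin m → ℝ) → ℝ) (i j : Fin m) (x : Fin m → ℝ) :
    ricci (natGamma h) i j x = if i = j then 0 else logpd2 h j i x := by
  have h1 : ∀ k, pd (natGamma h k k j) i x = if k = j then logpd2 h j i x else 0 := by
    intro k
    split_ifs with hk
    · subst hk
      have : natGamma h k k k = fun y => fderiv ℝ (fun z => Real.log (h z)) y (Pi.single k (1:ℝ)) := by
        funext y; simp [natGamma, pd]
      rw [this]; rfl
    · have : natGamma h k k j = fun _ => 0 := by
        funext y; simp [natGamma, hk]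
      rw [this]; simp [pd]
  have h2 : ∀ k, pd (natGamma h k i j) k x = if k = j then (if i = j then logpd2 h j i x else 0) else 0 := by
    intro k
    split_ifs with hk hi
    · subst hk; subst hi
      simpa using h1 i
    · have : natGamma h k i j = fun _ => 0 := by
        funext y; simp [natGamma, hi]
      rw [this]; simp [pd]
    · have : natGamma h k i j = fun _ => 0 := by
        funext y; simp [natGamma, Ne.symm hk]
      rw [this]; simp [pd]
  have h3 : ∀ k l, natGamma h k i l x * natGamma h l k j x - natGamma h k k l x * natGamma h l i j x = 0 := by
    intro k l
    unfold natGamma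
    by_cases a : i = j <;> by_cases b : k = l <;> by_cases c : i = l <;> by_cases d : k = j <;>
      simp_all [eq_comm]
  unfold ricci
  simp only [h1, h2, h3]
  by_cases hij : i = j <;> simp [hij]

lemma log_smooth {m : ℕ} {U : Set (Fin m → ℝ)} {h : (Fin m → ℝ) → ℝ}
    (hsm : ContDiffOn ℝ (⊤ : ℕ∞) h U) (hpos : ∀ x ∈ U, 0 < h x) :
    ContDiffOn ℝ (⊤ : ℕ∞) (fun z => Real.log (h z)) U :=
  hsm.log (fun x hx => (hpos x hx).ne')

lemma vec_sum {m : ℕ} (L : (Fin m → ℝ) →L[ℝ] ℝ) (v : Fin m → ℝ) :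
    L v = ∑ j, v j * L (Pi.single j 1) := by
  conv_lhs => rw [pi_eq_sum_univ' v]
  simp [map_sum]

lemma backward {m : ℕ} (I : Fin m → Set ℝ) (hIopen : ∀ k, IsOpen (I k))
    (h : (Fin m → ℝ) → ℝ) (g : Fin m → ℝ → ℝ)
    (hg : ∀ k, ContDiffOn ℝ (⊤ : ℕ∞) (g k) (I k))
    (hgp : ∀ k, ∀ t ∈ I k, 0 < g k t)
    (hh : ∀ x ∈ Set.univ.pi I, h x = ∏ k, g k (x k))
    (i j : Fin m) (hij : i ≠ j) (x : Fin m → ℝ) (hx : x ∈ Set.univ.pi I) :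
    logpd2 h i j x = 0 := by
  have hU : IsOpen (Set.univ.pi I) := isOpen_set_pi Set.finite_univ (fun k _ => hIopen k)
  have hl : ∀ k, ContDiffOn ℝ (⊤ : ℕ∞) (fun t => Real.log (g k t)) (I k) :=
    fun k => (hg k).log (fun t ht => (hgp k t ht).ne')
  have key : ∀ y ∈ Set.univ.pi I,
      fderiv ℝ (fun z => Real.log (h z)) y (Pi.single i (1:ℝ))
        = deriv (fun t => Real.log (g i t)) (y i) := by
    intro y hy
    have e : (fun z => Real.log (h z)) =ᶠ[nhds y] fun z => ∑ k, Real.log (g k (z k)) := by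
      filter_upwards [hU.mem_nhds hy] with z hz
      rw [hh z hz, Real.log_prod]
      intro k _
      exact (hgp k _ (hz k trivial)).ne'
    rw [e.fderiv_eq]
    have hd : ∀ k ∈ (Finset.univ : Finset (Fin m)),
        HasFDerivAt (fun z : Fin m → ℝ => Real.log (g k (z k)))
        ((deriv (fun t => Real.log (g k t)) (y k)) • (ContinuousLinearMap.proj k : (Fin m → ℝ) →L[ℝ] ℝ)) y := by
      intro k _
      have d1 : DifferentiableAt ℝ (fun t => Real.log (g k t)) (y k) :=
        ((hl k).contDiffAt ((hIopen k).mem_nhds (hy k trivial))).differentiableAt (by simp)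
      exact d1.hasDerivAt.comp_hasFDerivAt y (ContinuousLinearMap.proj (R := ℝ) (φ := fun _ : Fin m => ℝ) k).hasFDerivAt
    rw [(HasFDerivAt.fun_sum hd).fderiv]
    simp [Pi.single_apply]
  unfold logpd2
  have e : (fun y => fderiv ℝ (fun z => Real.log (h z)) y (Pi.single i (1:ℝ))) =ᶠ[nhds x]
      fun y => deriv (fun t => Real.log (g i t)) (y i) := by
    filter_upwards [hU.mem_nhds hx] with z hz using key z hz
  rw [e.fderiv_eq]
  have d2 : DifferentiableAt ℝ (deriv (fun t => Real.log (g i t))) (x i) := by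
    have := (hl i).deriv_of_isOpen (m := 1) (hIopen i) (by norm_cast)
    exact (this.contDiffAt ((hIopen i).mem_nhds (hx i trivial))).differentiableAt (by simp)
  have := d2.hasDerivAt.comp_hasFDerivAt x (ContinuousLinearMap.proj (R := ℝ) (φ := fun _ : Fin m => ℝ) i).hasFDerivAt
  have e2 := this.fderiv
  change fderiv ℝ (fun y : Fin m → ℝ => deriv (fun t => Real.log (g i t)) (y i)) x = _ at e2
  rw [e2]
  simp [hij]

lemma forward {m : ℕ} (hm : 2 ≤ m)
    (I : Fin m → Set ℝ) (hIopen : ∀ k, IsOpen (I k)) (hIconn : ∀ k, IsPreconnected (I k))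
    (h : (Fin m → ℝ) → ℝ)
    (hsm : ContDiffOn ℝ (⊤ : ℕ∞) h (Set.univ.pi I)) (hpos : ∀ x ∈ Set.univ.pi I, 0 < h x)
    (hz : ∀ i j : Fin m, i ≠ j → ∀ x ∈ Set.univ.pi I, logpd2 h i j x = 0) :
    ∃ g : Fin m → ℝ → ℝ, (∀ k, ContDiffOn ℝ (⊤ : ℕ∞) (g k) (I k)) ∧
        (∀ k, ∀ t ∈ I k, 0 < g k t) ∧
        (∀ x ∈ Set.univ.pi I, h x = ∏ k, g k (x k)) := by
  rcases Set.eq_empty_or_nonempty (Set.univ.pi I) with hE | ⟨a, ha⟩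
  · refine ⟨fun _ _ => 1, fun _ => contDiffOn_const, fun _ _ _ => one_pos, fun x hx => ?_⟩
    rw [hE] at hx; exact hx.elim
  have hU : IsOpen (Set.univ.pi I) := isOpen_set_pi Set.finite_univ (fun k _ => hIopen k)
  have hC : Convex ℝ (Set.univ.pi I) := convex_pi (fun k _ => (hIconn k).ordConnected.convex)
  have hf := log_smooth hsm hpos
  set f : (Fin m → ℝ) → ℝ := fun z => Real.log (h z) with hfdef
  have hup : ∀ k, ∀ t ∈ I k, Function.update a k t ∈ Set.univ.pi I := by
    intro k t ht l _
    by_cases hl : l = k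
    · subst hl; simpa using ht
    · simpa [hl] using ha l trivial
  have hdf : ∀ x ∈ Set.univ.pi I, HasFDerivAt f (fderiv ℝ f x) x := fun x hx =>
    ((hf.contDiffAt (hU.mem_nhds hx)).differentiableAt (by simp)).hasFDerivAt
  have hslice : ∀ i, ∀ x ∈ Set.univ.pi I,
      fderiv ℝ f (Function.update a i (x i)) (Pi.single i 1) = fderiv ℝ f x (Pi.single i 1) := by
    intro i x hx
    have hp : ContDiffOn ℝ 1 (fun y => fderiv ℝ f y (Pi.single i (1:ℝ))) (Set.univ.pi I) :=
      (hf.fderiv_of_isOpen (m := 1) hU (by norm_cast)).clm_apply contDiffOn_const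
    obtain ⟨z, hzs, e⟩ := domain_mvt (s := Set.univ.pi I)
      (f := fun y => fderiv ℝ f y (Pi.single i (1:ℝ)))
      (f' := fun y => fderiv ℝ (fun y => fderiv ℝ f y (Pi.single i (1:ℝ))) y)
      (fun y hy => ((hp.contDiffAt (hU.mem_nhds hy)).differentiableAt
        (by simp)).hasFDerivAt.hasFDerivWithinAt) hC hx (hup i (x i) (hx i trivial))
    have hzU := hC.segment_subset hx (hup i (x i) (hx i trivial)) hzs
    rw [← sub_eq_zero, e, vec_sum]
    refine Finset.sum_eq_zero fun j _ => ?_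
    by_cases hj : i = j
    · subst hj; simp
    · exact mul_eq_zero_of_right _ (hz i j hj z hzU)
  have hsum : ∀ x ∈ Set.univ.pi I,
      f x - ∑ k, f (Function.update a k (x k)) = f a - ∑ k : Fin m, f a := by
    intro x hx
    have hD : ∀ y ∈ Set.univ.pi I, HasFDerivAt
        (fun y : Fin m → ℝ => f y - ∑ k, f (Function.update a k (y k)))
        (fderiv ℝ f y - ∑ k, (fderiv ℝ f (Function.update a k (y k))).comp
          ((ContinuousLinearMap.pi (Pi.single k (ContinuousLinearMap.id ℝ ℝ))).comp
            (ContinuousLinearMap.proj k : (Fin m → ℝ) →L[ℝ] ℝ))) y := by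
      intro y hy
      refine (hdf y hy).sub (HasFDerivAt.fun_sum fun k _ => ?_)
      have u1 := HasFDerivAt.comp (g := Function.update a k) y
        (hasFDerivAt_update (𝕜 := ℝ) a (i := k) (y k)) (ContinuousLinearMap.proj (R := ℝ) (φ := fun _ : Fin m => ℝ) k).hasFDerivAt
      exact (hdf _ (hup k (y k) (hy k trivial))).comp y u1
    obtain ⟨z, hzs, e⟩ := domain_mvt (fun y hy => (hD y hy).hasFDerivWithinAt) hC ha hx
    have hzU := hC.segment_subset ha hx hzs
    simp only [Function.update_eq_self] at e
    rw [← sub_eq_zero, e, vec_sum]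
    refine Finset.sum_eq_zero fun j _ => mul_eq_zero_of_right _ ?_
    have hs : ∀ k, (ContinuousLinearMap.pi (Pi.single k (ContinuousLinearMap.id ℝ ℝ)) : ℝ →L[ℝ] (Fin m → ℝ))
        ((Pi.single j 1 : Fin m → ℝ) k) = if k = j then Pi.single j 1 else 0 := by
      intro k
      split_ifs with hk
      · subst hk
        ext l
        by_cases hl : l = k
        · subst hl; simp
        · simp [hl]
      · simp [hk]; rfl
    simp only [sub_apply, sum_apply,
      ContinuousLinearMap.comp_apply, ContinuousLinearMap.proj_apply, hs]
    rw [Finset.sum_eq_single j]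
    · simp [hslice j z hzU]
    · intro k _ hk; simp [hk]
    · simp
  refine ⟨fun k t => Real.exp (f (Function.update a k t) + (1 / m - 1) * f a), fun k => ?_,
    fun _ _ _ => Real.exp_pos _, fun x hx => ?_⟩
  · refine ContDiffOn.exp (ContDiffOn.add (hf.comp (contDiff_update _ a k).contDiffOn (hup k))
      contDiffOn_const)
  · rw [← Real.exp_sum, Finset.sum_add_distrib]
    have e := hsum x hx
    have hm0 : (m : ℝ) ≠ 0 := by positivity
    have : ∑ k, f (Function.update a k (x k)) + ∑ _k : Fin m, ((1 / m - 1) * f a : ℝ) = f x := by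
      simp at e ⊢
      field_simp
      linarith
    rw [this, hfdef]
    exact (Real.exp_log (hpos x hx)).symm

/-- On an open box `U = Π_k I_k`, the mixed logarithmic second
derivatives of a smooth positive `h` vanish iff `h` factorizes as a product of smooth
positive one-variable functions; consequently the natural connection is Ricci-flat on
`U` iff `h` factorizes in this way. -/
theorem stmt5 {m : ℕ} (hm : 2 ≤ m)
    (I : Fin m → Set ℝ) (hIopen : ∀ k, IsOpen (I k)) (hIconn : ∀ k, IsPreconnected (I k))
    (h : (Fin m → ℝ) → ℝ)
    (hsm : ContDiffOn ℝ (⊤ : ℕ∞) h (Set.univ.pi I)) (hpos : ∀ x ∈ Set.univ.pi I, 0 < h x) :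
    ((∀ i j : Fin m, i ≠ j → ∀ x ∈ Set.univ.pi I, logpd2 h i j x = 0) ↔
      (∃ g : Fin m → ℝ → ℝ, (∀ k, ContDiffOn ℝ (⊤ : ℕ∞) (g k) (I k)) ∧
        (∀ k, ∀ t ∈ I k, 0 < g k t) ∧
        (∀ x ∈ Set.univ.pi I, h x = ∏ k, g k (x k)))) ∧
    ((∀ i j : Fin m, ∀ x ∈ Set.univ.pi I, ricci (natGamma h) i j x = 0) ↔
      (∃ g : Fin m → ℝ → ℝ, (∀ k, ContDiffOn ℝ (⊤ : ℕ∞) (g k) (I k)) ∧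
        (∀ k, ∀ t ∈ I k, 0 < g k t) ∧
        (∀ x ∈ Set.univ.pi I, h x = ∏ k, g k (x k)))) := by
  have h1 : (∀ i j : Fin m, i ≠ j → ∀ x ∈ Set.univ.pi I, logpd2 h i j x = 0) ↔
      (∃ g : Fin m → ℝ → ℝ, (∀ k, ContDiffOn ℝ (⊤ : ℕ∞) (g k) (I k)) ∧
        (∀ k, ∀ t ∈ I k, 0 < g k t) ∧
        (∀ x ∈ Set.univ.pi I, h x = ∏ k, g k (x k))) := by
    constructor
    · exact forward hm I hIopen hIconn h hsm hpos
    · rintro ⟨g, hg, hgp, hh⟩ i j hij x hx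
      exact backward I hIopen h g hg hgp hh i j hij x hx
  refine ⟨h1, Iff.trans ?_ h1⟩
  simp only [ricci_natGamma]
  constructor
  · intro H i j hij x hx
    have := H j i x hx
    rwa [if_neg (Ne.symm hij)] at this
  · intro H i j x hx
    split_ifs with hij
    · rfl
    · exact H j i (Ne.symm hij) x hx
end
end

section
/- Let m ≥ 1 and let B_1,…,B_n be a partition of {1,…,m} into nonempty blocks of sizes c_1,…,c_n; write i ∼ j if i,j lie in the same block. The real vector space of all tensors D = (D^k_{ij})_{1≤i,j,k≤m} satisfying (i) D^k_{ij} = D^k_{ji} for all i,j,k; (ii) D^k_{ij} = 0 unless i ∼ j ∼ k; (iii) Σ_{j=1}^m D^j_{ij} = 0 for every i, has dimension Σ_{s=1}^n c_s(c_s−1)(c_s+2)/2. -/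
noncomputable section

/-- The space of difference tensors `D^k_{ij}` (encoded as `D k i j`) between two
adapted connections of a divergence-free web with block structure `B`: symmetric in the
lower indices, vanishing unless all three indices lie in a common block, and trace-free. -/
def diffTensorSpace {m n : ℕ} (B : Fin n → Finset (Fin m)) :
    Submodule ℝ (Fin m → Fin m → Fin m → ℝ) where
  carrier := {D | (∀ k i j, D k i j = D k j i) ∧
    (∀ k i j, (¬ ∃ s : Fin n, i ∈ B s ∧ j ∈ B s ∧ k ∈ B s) → D k i j = 0) ∧
    (∀ i, ∑ j, D j i j = 0)}
  add_mem' := by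
    rintro D E ⟨hD1, hD2, hD3⟩ ⟨hE1, hE2, hE3⟩
    refine ⟨fun k i j => ?_, fun k i j hn => ?_, fun i => ?_⟩
    · simp only [Pi.add_apply, hD1 k i j, hE1 k i j]
    · simp only [Pi.add_apply, hD2 k i j hn, hE2 k i j hn, add_zero]
    · simp only [Pi.add_apply, Finset.sum_add_distrib, hD3 i, hE3 i, add_zero]
  zero_mem' := by
    refine ⟨fun k i j => rfl, fun k i j _ => rfl, fun i => by simp⟩
  smul_mem' := by
    rintro c D ⟨hD1, hD2, hD3⟩
    refine ⟨fun k i j => ?_, fun k i j hn => ?_, fun i => ?_⟩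
    · simp only [Pi.smul_apply, smul_eq_mul, hD1 k i j]
    · simp only [Pi.smul_apply, smul_eq_mul, hD2 k i j hn, mul_zero]
    · simp only [Pi.smul_apply, smul_eq_mul, ← Finset.mul_sum, hD3 i, mul_zero]

/-- Index set of independent components: pairs `(k, {i,j})` within a common block. -/
def idxSet {m n : ℕ} (B : Fin n → Finset (Fin m)) : Finset (Fin m × Sym2 (Fin m)) :=
  Finset.univ.biUnion fun s => B s ×ˢ (B s).sym2

theorem mem_idxSet {m n : ℕ} (B : Fin n → Finset (Fin m)) (k i j : Fin m) :
    (k, s(i, j)) ∈ idxSet B ↔ ∃ s : Fin n, i ∈ B s ∧ j ∈ B s ∧ k ∈ B s := by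
  simp only [idxSet, Finset.mem_biUnion, Finset.mem_univ, true_and, Finset.mem_product,
    Finset.mk_mem_sym2_iff]
  constructor
  · rintro ⟨s, h1, h2, h3⟩
    exact ⟨s, h2, h3, h1⟩
  · rintro ⟨s, h1, h2, h3⟩
    exact ⟨s, h3, h1, h2⟩

/-- The tensor with given independent components. -/
def tensorOf {m n : ℕ} (B : Fin n → Finset (Fin m)) :
    (idxSet B → ℝ) →ₗ[ℝ] (Fin m → Fin m → Fin m → ℝ) where
  toFun f k i j := if h : (k, s(i, j)) ∈ idxSet B then f ⟨_, h⟩ else 0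
  map_add' f g := by
    funext k i j
    by_cases h : (k, s(i, j)) ∈ idxSet B <;> simp [h]
  map_smul' c f := by
    funext k i j
    by_cases h : (k, s(i, j)) ∈ idxSet B <;> simp [h]

theorem tensorOf_apply {m n : ℕ} (B : Fin n → Finset (Fin m)) (f : idxSet B → ℝ) (k i j : Fin m) :
    tensorOf B f k i j = if h : (k, s(i, j)) ∈ idxSet B then f ⟨_, h⟩ else 0 := rfl

theorem tensorOf_injective {m n : ℕ} (B : Fin n → Finset (Fin m)) :
    Function.Injective (tensorOf B) := by
  intro f g h
  funext ⟨⟨k, z⟩, hp⟩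
  induction z using Sym2.ind with
  | _ i j =>
    have := congrFun (congrFun (congrFun h k) i) j
    simpa [tensorOf_apply, hp] using this

/-- The trace. -/
def traceMap {m n : ℕ} (B : Fin n → Finset (Fin m)) :
    (idxSet B → ℝ) →ₗ[ℝ] (Fin m → ℝ) where
  toFun f i := ∑ j, tensorOf B f j i j
  map_add' f g := by
    funext i
    simp [Finset.sum_add_distrib]
  map_smul' c f := by
    funext i
    simp [Finset.mul_sum]

theorem traceMap_surjective {m n : ℕ} (B : Fin n → Finset (Fin m))
    (hBcover : ∀ k, ∃ i, k ∈ B i) : Function.Surjective (traceMap B) := by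
  intro g
  refine ⟨fun p => if p.1.2 = s(p.1.1, p.1.1) then g p.1.1 else 0, ?_⟩
  funext i
  change ∑ j, tensorOf B _ j i j = g i
  rw [Finset.sum_eq_single i]
  · obtain ⟨s, hs⟩ := hBcover i
    have h : (i, s(i, i)) ∈ idxSet B := (mem_idxSet B i i i).2 ⟨s, hs, hs, hs⟩
    simp [tensorOf_apply, h]
  · intro j _ hj
    rw [tensorOf_apply]
    split_ifs with h1 h2
    · simp at h2
      exact absurd h2.symm hj
    · rfl
    · rfl
  · simp

theorem map_ker_eq {m n : ℕ} (B : Fin n → Finset (Fin m)) :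
    (LinearMap.ker (traceMap B)).map (tensorOf B) = diffTensorSpace B := by
  ext D
  constructor
  · rintro ⟨f, hf, rfl⟩
    refine ⟨fun k i j => ?_, fun k i j hn => ?_, fun i => ?_⟩
    · simp only [tensorOf_apply, Sym2.eq_swap (a := i) (b := j)]
    · rw [tensorOf_apply, dif_neg]
      rwa [mem_idxSet]
    · exact congrFun (LinearMap.mem_ker.1 hf) i
  · rintro ⟨h1, h2, h3⟩
    have key : tensorOf B (fun p => Sym2.lift ⟨D p.1.1, h1 p.1.1⟩ p.1.2) = D := by
      funext k i j
      rw [tensorOf_apply]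
      split_ifs with h
      · simp
      · rw [mem_idxSet] at h
        exact (h2 k i j h).symm
    refine ⟨_, ?_, key⟩
    refine LinearMap.mem_ker.2 ?_
    funext i
    change ∑ j, tensorOf B _ j i j = 0
    rw [key]
    exact h3 i

theorem card_idxSet {m n : ℕ} (B : Fin n → Finset (Fin m))
    (hBdisj : ∀ i j, i ≠ j → Disjoint (B i) (B j)) :
    (idxSet B).card = ∑ s, (B s).card * ((B s).card + 1).choose 2 := by
  rw [idxSet, Finset.card_biUnion]
  · simp [Finset.card_product, Finset.card_sym2]
  · intro s _ t _ hst
    exact Finset.disjoint_product.2 (Or.inl (hBdisj s t hst))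

theorem arith_block (c : ℕ) (hc : 1 ≤ c) :
    c * (c + 1).choose 2 = c * (c - 1) * (c + 2) / 2 + c := by
  obtain ⟨d, rfl⟩ : ∃ d, c = d + 1 := ⟨c - 1, by omega⟩
  have h2 : (d + 1 + 1).choose 2 * 2 = (d + 2) * (d + 1) := by
    have := Nat.add_one_mul_choose_eq (d + 1) 1
    simp at this
    linarith
  have h3 : (d + 1) * (d + 1 - 1) * (d + 1 + 2) + 2 * (d + 1)
      = 2 * ((d + 1) * (d + 1 + 1).choose 2) := by
    simp only [Nat.add_sub_cancel]
    nlinarith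
  omega

/-- The space of difference tensors of adapted connections of a
divergence-free web with blocks of sizes `c_s` has dimension
`Σ_s c_s(c_s−1)(c_s+2)/2`. -/
theorem stmt6 {m n : ℕ} (hm : 1 ≤ m)
    (B : Fin n → Finset (Fin m))
    (hBne : ∀ i, (B i).Nonempty)
    (hBdisj : ∀ i j, i ≠ j → Disjoint (B i) (B j))
    (hBcover : ∀ k, ∃ i, k ∈ B i) :
    Module.finrank ℝ (diffTensorSpace B) =
      ∑ s, (B s).card * ((B s).card - 1) * ((B s).card + 2) / 2 := by
  have hk := LinearMap.finrank_range_add_finrank_ker (traceMap B)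
  rw [LinearMap.range_eq_top.2 (traceMap_surjective B hBcover), finrank_top,
    Module.finrank_fintype_fun_eq_card, Module.finrank_fintype_fun_eq_card, Fintype.card_fin,
    Fintype.card_coe, card_idxSet B hBdisj] at hk
  have he := (Submodule.equivMapOfInjective (tensorOf B) (tensorOf_injective B)
    (LinearMap.ker (traceMap B))).finrank_eq
  rw [map_ker_eq] at he
  have hcard : ∑ s, (B s).card = m := by
    rw [← Finset.card_biUnion (fun s _ t _ hst => hBdisj s t hst)]
    have : Finset.univ.biUnion B = Finset.univ := by
      ext k
      simpa using hBcover k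
    rw [this, Finset.card_univ, Fintype.card_fin]
  rw [Finset.sum_congr rfl (fun s _ => arith_block (B s).card (hBne s).card_pos),
    Finset.sum_add_distrib, hcard] at hk
  omega
end
end

section
/- Let m ≥ 2 and let B_1,…,B_n (n ≥ 2) be a partition of {1,…,m} into nonempty blocks; write k ≁ l if k,l lie in different blocks, and for each i let F_i = {x ∈ ℝ^m : x_k = 0 for all k ∉ B_i}. Let h and h̃ be smooth positive functions on a neighborhood of 0 in ℝ^m such that (i) ∂²(log h)/∂x_k∂x_l = ∂²(log h̃)/∂x_k∂x_l on a neighborhood of 0 for every pair k ≁ l, and (ii) h(x) = h̃(x) for every x in a neighborhood of 0 lying in the union F_1 ∪ … ∪ F_n. Then h = h̃ on a neighborhood of 0. -/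
open MeasureTheory

noncomputable section

theorem stmt8_const {m : ℕ} (g : (Fin m → ℝ) → ℝ) (w z : Fin m → ℝ)
    (hg : ∀ t ∈ Set.Icc (0:ℝ) 1, DifferentiableAt ℝ g (w + t • z) ∧ fderiv ℝ g (w + t • z) z = 0) :
    g (w + z) = g w := by
  have hd : ∀ t ∈ Set.Icc (0:ℝ) 1, HasDerivAt (fun t : ℝ => g (w + t • z)) 0 t := by
    intro t ht
    obtain ⟨h1, h2⟩ := hg t ht
    have h3 : HasDerivAt (fun t : ℝ => w + t • z) z t := by
      simpa using ((hasDerivAt_id t).smul_const z).const_add w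
    have := h1.hasFDerivAt.comp_hasDerivAt t h3
    rw [h2] at this
    exact this
  have := constant_of_has_deriv_right_zero (f := fun t : ℝ => g (w + t • z)) (a := 0) (b := 1)
    (fun t ht => (hd t ht).continuousAt.continuousWithinAt)
    (fun t ht => (hd t ⟨ht.1, ht.2.le⟩).hasDerivWithinAt) 1 (by simp)
  simpa using this

theorem stmt8_bilin {m : ℕ} (T : (Fin m → ℝ) →L[ℝ] (Fin m → ℝ) →L[ℝ] ℝ) (y z : Fin m → ℝ)
    (hT : ∀ k l, y k ≠ 0 → z l ≠ 0 → T (Pi.single l 1) (Pi.single k 1) = 0) : T z y = 0 := by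
  have hy : y = ∑ k, y k • (Pi.single k (1:ℝ) : Fin m → ℝ) := pi_eq_sum_univ' y
  have hz : z = ∑ k, z k • (Pi.single k (1:ℝ) : Fin m → ℝ) := pi_eq_sum_univ' z
  rw [hy, hz]
  simp only [map_sum, map_smul, ContinuousLinearMap.sum_apply, ContinuousLinearMap.smul_apply,
    smul_eq_mul]
  refine Finset.sum_eq_zero fun k _ => ?_
  rw [mul_eq_zero, or_iff_not_imp_left]
  intro hk
  refine Finset.sum_eq_zero fun l _ => ?_
  rw [mul_eq_zero, or_iff_not_imp_left]
  intro hl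
  exact hT k l hk hl

theorem stmt8_smooth {m : ℕ} (h : (Fin m → ℝ) → ℝ) (V : Set (Fin m → ℝ)) (hV : IsOpen V)
    (hsm : ContDiffOn ℝ (⊤ : ℕ∞) h V) (hpos : ∀ x ∈ V, 0 < h x) (x : Fin m → ℝ) (hx : x ∈ V) :
    DifferentiableAt ℝ (fun z => Real.log (h z)) x ∧
    DifferentiableAt ℝ (fderiv ℝ (fun z => Real.log (h z))) x := by
  have h1 : ContDiffAt ℝ (⊤ : ℕ∞) (fun z => Real.log (h z)) x :=
    (hsm.contDiffAt (hV.mem_nhds hx)).log (hpos x hx).ne'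
  have h2 : ContDiffAt ℝ 2 (fun z => Real.log (h z)) x := h1.of_le (WithTop.coe_le_coe.2 (le_top : (2 : ℕ∞) ≤ ⊤))
  refine ⟨h2.differentiableAt (by norm_num), ?_⟩
  exact (h2.fderiv_right (m := 1) (by norm_num)).differentiableAt (by norm_num)

theorem stmt8_logpd2 {m : ℕ} (h : (Fin m → ℝ) → ℝ) (x : Fin m → ℝ)
    (hd : DifferentiableAt ℝ (fderiv ℝ (fun z => Real.log (h z))) x) (k l : Fin m) :
    logpd2 h k l x =
      fderiv ℝ (fderiv ℝ (fun z => Real.log (h z))) x (Pi.single l 1) (Pi.single k 1) := by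
  unfold logpd2
  rw [fderiv_clm_apply hd (differentiableAt_const _)]
  simp

/-- Two smooth positive densities with the same cross-block mixed
logarithmic second derivatives near `0` which agree on the union of the coordinate
subspaces `F_i = {x : x_k = 0 for k ∉ B_i}` near `0` agree on a neighbourhood of `0`. -/
theorem stmt8 {m n : ℕ} (hm : 2 ≤ m) (hn : 2 ≤ n)
    (B : Fin n → Finset (Fin m))
    (hBne : ∀ i, (B i).Nonempty)
    (hBdisj : ∀ i j, i ≠ j → Disjoint (B i) (B j))
    (hBcover : ∀ k, ∃ i, k ∈ B i)
    (h ht : (Fin m → ℝ) → ℝ)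
    (V : Set (Fin m → ℝ)) (hV : IsOpen V) (h0V : (0 : Fin m → ℝ) ∈ V)
    (hsm : ContDiffOn ℝ (⊤ : ℕ∞) h V) (hpos : ∀ x ∈ V, 0 < h x)
    (htsm : ContDiffOn ℝ (⊤ : ℕ∞) ht V) (htpos : ∀ x ∈ V, 0 < ht x)
    (hK : ∀ k l : Fin m, (¬ ∃ s : Fin n, k ∈ B s ∧ l ∈ B s) →
      ∀ x ∈ V, logpd2 h k l x = logpd2 ht k l x)
    (hbd : ∀ x ∈ V, (∃ i : Fin n, ∀ k, k ∉ B i → x k = 0) → h x = ht x) :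
    ∃ U : Set (Fin m → ℝ), IsOpen U ∧ (0 : Fin m → ℝ) ∈ U ∧
      ∀ x ∈ U, h x = ht x := by
  set L : (Fin m → ℝ) → ℝ := fun z => Real.log (h z) with hL
  set Lt : (Fin m → ℝ) → ℝ := fun z => Real.log (ht z) with hLt
  obtain ⟨r, hr, hrV⟩ := Metric.isOpen_iff.1 hV 0 h0V
  have key : ∀ y z : Fin m → ℝ,
      (∀ k l, y k ≠ 0 → z l ≠ 0 → ¬ ∃ s : Fin n, k ∈ B s ∧ l ∈ B s) →
      (∀ s ∈ Set.Icc (0:ℝ) 1, ∀ t ∈ Set.Icc (0:ℝ) 1, s • y + t • z ∈ V) →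
      L (y + z) - Lt (y + z) - (L y - Lt y) = L z - Lt z - (L 0 - Lt 0) := by
    intro y z hyz hmem
    have hD : ∀ s ∈ Set.Icc (0:ℝ) 1,
        fderiv ℝ L (s • y + z) y - fderiv ℝ Lt (s • y + z) y
          = fderiv ℝ L (s • y) y - fderiv ℝ Lt (s • y) y := by
      intro s hs
      refine stmt8_const (fun w => fderiv ℝ L w y - fderiv ℝ Lt w y) (s • y) z fun t htt => ?_
      have hw := hmem s hs t htt
      set w := s • y + t • z
      have d1 := (stmt8_smooth h V hV hsm hpos w hw).2
      have d2 := (stmt8_smooth ht V hV htsm htpos w hw).2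
      have e1 : HasFDerivAt (fun w => fderiv ℝ L w y) ((fderiv ℝ (fderiv ℝ L) w).flip y) w := by
        simpa using d1.hasFDerivAt.clm_apply (hasFDerivAt_const y w)
      have e2 : HasFDerivAt (fun w => fderiv ℝ Lt w y) ((fderiv ℝ (fderiv ℝ Lt) w).flip y) w := by
        simpa using d2.hasFDerivAt.clm_apply (hasFDerivAt_const y w)
      have e3 := e1.sub e2
      refine ⟨e3.differentiableAt, ?_⟩
      have e4 := e3.fderiv
      have e5 := stmt8_bilin (fderiv ℝ (fderiv ℝ L) w - fderiv ℝ (fderiv ℝ Lt) w) y z (by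
        intro k l hk hl
        have := hK k l (hyz k l hk hl) w hw
        rw [stmt8_logpd2 h w d1, stmt8_logpd2 ht w d2] at this
        simp only [ContinuousLinearMap.sub_apply]
        exact sub_eq_zero.2 this)
      have e6 := congrArg (fun A => A z) e4
      refine e6.trans ?_
      simpa using e5
    have := stmt8_const (fun w => L (w + z) - Lt (w + z) - (L w - Lt w)) 0 y (by
      intro s hs
      have w1 : s • y + z ∈ V := by simpa using hmem s hs 1 (by simp)
      have w0 : s • y ∈ V := by simpa using hmem s hs 0 (by simp)
      rw [zero_add]
      have a1 := (stmt8_smooth h V hV hsm hpos _ w1).1.hasFDerivAt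
      have a2 := (stmt8_smooth ht V hV htsm htpos _ w1).1.hasFDerivAt
      have a3 := (stmt8_smooth h V hV hsm hpos _ w0).1.hasFDerivAt
      have a4 := (stmt8_smooth ht V hV htsm htpos _ w0).1.hasFDerivAt
      have b1 := (hasFDerivAt_comp_add_right (f := L) z).2 a1
      have b2 := (hasFDerivAt_comp_add_right (f := Lt) z).2 a2
      have e := (b1.sub b2).sub (a3.sub a4)
      refine ⟨e.differentiableAt, ?_⟩
      have e6 := congrArg (fun A => A y) e.fderiv
      refine e6.trans ?_
      have := hD s hs
      simp only [ContinuousLinearMap.sub_apply]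
      exact sub_eq_zero.2 this)
    simpa using this
  have hbd' : ∀ x ∈ V, (∃ i : Fin n, ∀ k, k ∉ B i → x k = 0) → L x - Lt x = 0 := by
    intro x hx hi
    simp only [hL, hLt]
    rw [hbd x hx hi, sub_self]
  have main : ∀ S : Finset (Fin n), ∀ x ∈ Metric.ball (0 : Fin m → ℝ) r,
      (∀ k, (∀ i ∈ S, k ∉ B i) → x k = 0) → L x - Lt x = 0 := by
    intro S
    induction S using Finset.induction_on with
    | empty =>
      intro x hx hz
      exact hbd' x (hrV hx) ⟨⟨0, by omega⟩, fun k _ => hz k (by simp)⟩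
    | insert i S hiS ih =>
      intro x hx hz
      have hball : ∀ u : Fin m → ℝ, (∀ k, |u k| ≤ |x k|) → u ∈ Metric.ball (0 : Fin m → ℝ) r := by
        intro u hu
        rw [mem_ball_zero_iff, pi_norm_lt_iff hr] at hx ⊢
        exact fun k => (hu k).trans_lt (hx k)
      let y : Fin m → ℝ := fun k => if k ∈ B i then x k else 0
      let z : Fin m → ℝ := fun k => if k ∈ B i then 0 else x k
      have hxy : x = y + z := by
        ext k
        by_cases hk : k ∈ B i <;> simp [y, z, hk]
      have hy : y ∈ Metric.ball (0 : Fin m → ℝ) r := hball y fun k => by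
        by_cases hk : k ∈ B i <;> simp [y, hk]
      have hzb : z ∈ Metric.ball (0 : Fin m → ℝ) r := hball z fun k => by
        by_cases hk : k ∈ B i <;> simp [z, hk]
      have k1 := key y z (by
        rintro k l hk hl ⟨s, hks, hls⟩
        have hk' : k ∈ B i := by
          by_contra hc
          exact hk (by simp [y, hc])
        have hl' : l ∉ B i := by
          intro hc
          exact hl (by simp [z, hc])
        have hsi : s ≠ i := by
          rintro rfl
          exact hl' hls
        exact Finset.disjoint_left.1 (hBdisj s i hsi) hks hk') (by
        intro s hs t htt
        refine hrV (hball _ fun k => ?_)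
        by_cases hk : k ∈ B i
        · simp only [y, z, hk, Pi.add_apply, Pi.smul_apply, smul_eq_mul, if_true, mul_zero,
            add_zero, abs_mul]
          exact mul_le_of_le_one_left (abs_nonneg _) (abs_le.2 ⟨by linarith [hs.1], hs.2⟩)
        · simp only [y, z, hk, Pi.add_apply, Pi.smul_apply, smul_eq_mul, if_false, mul_zero,
            zero_add, abs_mul]
          exact mul_le_of_le_one_left (abs_nonneg _) (abs_le.2 ⟨by linarith [htt.1], htt.2⟩))
      have k2 := hbd' y (hrV hy) ⟨i, fun k hk => by simp [y, hk]⟩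
      have k3 := hbd' 0 h0V ⟨i, fun k hk => rfl⟩
      have k4 := ih z hzb (by
        intro k hk
        by_cases hki : k ∈ B i
        · simp [z, hki]
        · simp only [z, hki, if_false]
          refine hz k fun j hj => ?_
          rcases Finset.mem_insert.1 hj with rfl | hj
          · exact hki
          · exact hk j hj)
      rw [hxy]
      linarith
  refine ⟨Metric.ball 0 r, Metric.isOpen_ball, Metric.mem_ball_self hr, fun x hx => ?_⟩
  have h1 := main Finset.univ x hx (by
    intro k hk
    obtain ⟨i, hi⟩ := hBcover k
    exact absurd hi (hk i (Finset.mem_univ i)))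
  exact Real.log_injOn_pos (hpos x (hrV hx)) (htpos x (hrV hx)) (sub_eq_zero.1 h1)
end
end

section
/- Let m ≥ 1 and let h be a smooth positive function on a neighborhood of 0 in ℝ^m. Fix i ∈ {1,…,m} and define f_i(x,s) = ∫_{[0,1]^{m−1}} h(t_1x_1,…,t_{i−1}x_{i−1}, s, t_{i+1}x_{i+1},…,t_mx_m) dt (the integral over the unit cube in the variables t_k, k ≠ i). Then there exist a neighborhood U of 0 in ℝ^m and a smooth function ρ_i : U → ℝ with ρ_i(0) = 0 such that ∫_0^{x_i} f_i(x,s) ds + ∫_0^{ρ_i(x)} f_i(x,s) ds = 0 for all x ∈ U; moreover ρ_i is unique in the sense that for each x ∈ U, ρ_i(x) is the only real number u with (x_1,…,x_{i−1},u,x_{i+1},…,x_m) ∈ U satisfying ∫_0^{x_i} f_i(x,s) ds + ∫_0^{u} f_i(x,s) ds = 0. -/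
open MeasureTheory

noncomputable section

/-- The fiber integral `f_i(x,s) = ∫_{[0,1]^{m−1}} h(t₁x₁,…,s,…,t_mx_m) dt` (in the
`i`-th slot one puts `s`; since the integrand does not depend on `t_i`, integrating over
the full unit cube `[0,1]^m` gives the same value). -/
def reflInt {m : ℕ} (h : (Fin m → ℝ) → ℝ) (i : Fin m) (x : Fin m → ℝ) (s : ℝ) : ℝ :=
  ∫ t in Set.Icc (0 : Fin m → ℝ) 1, h (Function.update (fun k => t k * x k) i s)

lemma aux_param_nat {P T : Type} [NormedAddCommGroup P] [NormedSpace ℝ P] [ProperSpace P]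
    [NormedAddCommGroup T] [NormedSpace ℝ T] [FiniteDimensional ℝ T] [MeasurableSpace T]
    [BorelSpace T] (μ : Measure T) [IsFiniteMeasureOnCompacts μ] (K : Set T) (hK : IsCompact K)
    (n : ℕ) : ∀ {F : Type} [NormedAddCommGroup F] [NormedSpace ℝ F] [CompleteSpace F]
    (f : P × T → F), ContDiff ℝ n f → ContDiff ℝ n (fun p => ∫ t in K, f (p, t) ∂μ) := by
  have hprop : ProperSpace T := FiniteDimensional.proper ℝ T
  induction n with
  | zero =>
    intro F _ _ _ f hf
    have hc : Continuous f := hf.continuous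
    apply contDiff_zero.2
    exact continuous_parametric_integral_of_continuous (f := fun p t => f (p, t)) (by simpa [Function.uncurry_def] using hc) hK
  | succ n ih =>
    intro F _ _ _ f hf
    have hc : Continuous f := hf.continuous
    have hfd : ContDiff ℝ n (fderiv ℝ f) := hf.fderiv_right (by norm_cast)
    let f' : P × T → (P →L[ℝ] F) := fun q => (fderiv ℝ f q).comp (ContinuousLinearMap.inl ℝ P T)
    have hf' : ContDiff ℝ n f' := hfd.clm_comp contDiff_const
    have hf'c : Continuous f' := hf'.continuous
    have key : ∀ p, HasFDerivAt (fun p => ∫ t in K, f (p, t) ∂μ) (∫ t in K, f' (p, t) ∂μ) p := by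
      intro p
      obtain ⟨C, hC⟩ := ((isCompact_closedBall p 1).prod hK).exists_bound_of_continuousOn
        hf'c.continuousOn
      apply hasFDerivAt_integral_of_dominated_of_fderiv_le (s := Metric.closedBall p 1)
        (F := fun p t => f (p, t)) (F' := fun p t => f' (p, t)) (bound := fun _ => C)
        (Metric.closedBall_mem_nhds p one_pos)
      · exact Filter.Eventually.of_forall fun q =>
          (hc.comp (by fun_prop : Continuous fun t : T => (q, t))).aestronglyMeasurable
      · exact ((hc.comp (by fun_prop : Continuous fun t : T => (p, t))).continuousOn).integrableOn_compact hK
      · exact (hf'c.comp (by fun_prop : Continuous fun t : T => (p, t))).aestronglyMeasurable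
      · filter_upwards [ae_restrict_mem hK.measurableSet] with t ht x hx
        exact hC (x, t) ⟨hx, ht⟩
      · have := hK.measure_lt_top (μ := μ)
        exact integrableOn_const this.ne
      · refine Filter.Eventually.of_forall fun t x _ => ?_
        have h1 : HasFDerivAt f (fderiv ℝ f (x, t)) (x, t) :=
          (hf.differentiable (by simp) _).hasFDerivAt
        have h2 : HasFDerivAt (fun y : P => (y, t)) (ContinuousLinearMap.inl ℝ P T) x :=
          hasFDerivAt_prodMk_left x t
        exact h1.comp x h2
    have : ((n + 1 : ℕ) : WithTop ℕ∞) = (n : WithTop ℕ∞) + 1 := by norm_cast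
    rw [this]
    refine contDiff_succ_iff_hasFDerivAt.2 ?_
    exact ⟨_, ih f' hf', key⟩

lemma aux_param {P T : Type} [NormedAddCommGroup P] [NormedSpace ℝ P] [ProperSpace P]
    [NormedAddCommGroup T] [NormedSpace ℝ T] [FiniteDimensional ℝ T] [MeasurableSpace T]
    [BorelSpace T] (μ : Measure T) [IsFiniteMeasureOnCompacts μ] (K : Set T) (hK : IsCompact K)
    (f : P × T → ℝ) (hf : ContDiff ℝ (⊤ : ℕ∞) f) :
    ContDiff ℝ (⊤ : ℕ∞) (fun p => ∫ t in K, f (p, t) ∂μ) := by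
  rw [contDiff_infty] at hf ⊢
  exact fun n => aux_param_nat μ K hK n f (hf n)

lemma aux_upd {m : ℕ} {E : Type} [NormedAddCommGroup E] [NormedSpace ℝ E] (i : Fin m)
    (a : E → Fin m → ℝ) (b : E → ℝ)
    (ha : ContDiff ℝ (⊤ : ℕ∞) a) (hb : ContDiff ℝ (⊤ : ℕ∞) b) :
    ContDiff ℝ (⊤ : ℕ∞) (fun e => Function.update (a e) i (b e)) := by
  rw [contDiff_pi] at ha ⊢
  intro k
  by_cases hk : k = i
  · subst hk; simpa using hb
  · simpa [Function.update_of_ne hk] using ha k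

lemma aux_refl_smooth {m : ℕ} (i : Fin m) (h : (Fin m → ℝ) → ℝ) (hsm : ContDiff ℝ (⊤ : ℕ∞) h) :
    ContDiff ℝ (⊤ : ℕ∞) (fun p : (Fin m → ℝ) × ℝ => reflInt h i p.1 p.2) := by
  unfold reflInt
  refine aux_param (P := (Fin m → ℝ) × ℝ) (T := Fin m → ℝ) volume (Set.Icc 0 1) isCompact_Icc
    (fun q => h (Function.update (fun k => q.2 k * q.1.1 k) i q.1.2)) ?_
  refine hsm.comp (aux_upd i _ _ ?_ ?_)
  · fun_prop
  · fun_prop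

lemma aux_F_smooth {m : ℕ} (i : Fin m) (h : (Fin m → ℝ) → ℝ) (hsm : ContDiff ℝ (⊤ : ℕ∞) h) :
    ContDiff ℝ (⊤ : ℕ∞)
      (fun p : (Fin m → ℝ) × ℝ => ∫ s in (0:ℝ)..p.2, reflInt h i p.1 s) := by
  have h1 : ∀ p : (Fin m → ℝ) × ℝ, ∫ s in (0:ℝ)..p.2, reflInt h i p.1 s
      = p.2 * ∫ σ in Set.Icc (0:ℝ) 1, reflInt h i p.1 (p.2 * σ) := by
    intro p
    rw [integral_Icc_eq_integral_Ioc, ← intervalIntegral.integral_of_le zero_le_one]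
    rw [intervalIntegral.mul_integral_comp_mul_left]
    simp
  simp_rw [h1]
  refine contDiff_snd.mul ?_
  refine aux_param (P := (Fin m → ℝ) × ℝ) (T := ℝ) volume (Set.Icc 0 1) isCompact_Icc
    (fun q => reflInt h i q.1.1 (q.1.2 * q.2)) ?_
  exact (aux_refl_smooth i h hsm).comp
    (f := fun q : ((Fin m → ℝ) × ℝ) × ℝ => (q.1.1, q.1.2 * q.2)) (by fun_prop)

lemma aux_refl_pos {m : ℕ} (i : Fin m) (h : (Fin m → ℝ) → ℝ) (hsm : ContDiff ℝ (⊤ : ℕ∞) h)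
    (hpos : ∀ x, 0 < h x) (x : Fin m → ℝ) (s : ℝ) : 0 < reflInt h i x s := by
  unfold reflInt
  have hc : Continuous fun t : Fin m → ℝ => h (Function.update (fun k => t k * x k) i s) :=
    (hsm.comp (aux_upd i _ _ (by fun_prop) (by fun_prop))).continuous
  rw [setIntegral_pos_iff_support_of_nonneg_ae]
  · have : Function.support (fun t : Fin m → ℝ => h (Function.update (fun k => t k * x k) i s))
        = Set.univ := by
      ext t; simp [(hpos _).ne']
    rw [this, Set.univ_inter, Real.volume_Icc_pi]
    simp
  · exact Filter.Eventually.of_forall fun t => (hpos _).le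
  · exact hc.continuousOn.integrableOn_compact isCompact_Icc

lemma aux_inv (A : ℝ →L[ℝ] ℝ) (hA : A 1 ≠ 0) : A.IsInvertible := by
  refine ⟨ContinuousLinearEquiv.unitsEquivAut ℝ (Units.mk0 _ hA), ?_⟩
  ext
  simp

lemma aux_ext {m : ℕ} (h : (Fin m → ℝ) → ℝ)
    (V : Set (Fin m → ℝ)) (hV : IsOpen V) (h0V : (0 : Fin m → ℝ) ∈ V)
    (hsm : ContDiffOn ℝ (⊤ : ℕ∞) h V) (hpos : ∀ x ∈ V, 0 < h x) :
    ∃ (g : (Fin m → ℝ) → ℝ) (r : ℝ), 0 < r ∧ ContDiff ℝ (⊤ : ℕ∞) g ∧ (∀ x, 0 < g x) ∧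
      ∀ x, ‖x‖ ≤ r → g x = h x := by
  obtain ⟨ε, hε, hb⟩ := Metric.isOpen_iff.1 hV 0 h0V
  let χ : ContDiffBump (0 : Fin m → ℝ) := ⟨ε / 4, ε / 2, by positivity, by linarith⟩
  have hcl : Metric.closedBall (0 : Fin m → ℝ) (ε / 2) ⊆ V :=
    (Metric.closedBall_subset_ball (by linarith)).trans hb
  refine ⟨fun x => 1 + χ x * (h x - 1), ε / 4, by positivity, ?_, ?_, ?_⟩
  · rw [contDiff_iff_contDiffAt]
    intro x
    by_cases hx : x ∈ V
    · have h1 := hsm.contDiffAt (hV.mem_nhds hx)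
      have h2 : ContDiffAt ℝ (⊤ : ℕ∞) χ x := χ.contDiffAt
      exact contDiffAt_const.add (h2.mul (h1.sub contDiffAt_const))
    · have hx' : x ∉ tsupport χ := by
        rw [χ.tsupport_eq]; exact fun h' => hx (hcl h')
      have := notMem_tsupport_iff_eventuallyEq.1 hx'
      refine (contDiffAt_const (c := (1 : ℝ))).congr_of_eventuallyEq ?_
      filter_upwards [this] with y hy
      simp [hy]
  · intro x
    by_cases hx : x ∈ V
    · have := hpos x hx
      have h1 := χ.nonneg (x := x)
      have h2 := χ.le_one (x := x)
      show 0 < 1 + χ x * (h x - 1)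
      rcases h1.eq_or_lt with h3 | h3
      · rw [← h3]; simp
      · nlinarith [mul_pos h3 this]
    · have : χ x = 0 := χ.zero_of_le_dist (by
        by_contra hcon
        exact hx (hcl (Metric.mem_closedBall.2 (not_le.1 hcon).le)))
      simp [this]
  · intro x hx
    have : χ x = 1 := χ.one_of_mem_closedBall (by simpa using hx)
    simp [this]

lemma aux_eq {m : ℕ} (i : Fin m) (h g : (Fin m → ℝ) → ℝ) (r : ℝ)
    (hgh : ∀ x, ‖x‖ ≤ r → g x = h x) (x : Fin m → ℝ) (hx : ‖x‖ ≤ r) (u : ℝ) (hu : |u| ≤ r) :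
    ∫ s in (0:ℝ)..u, reflInt h i x s = ∫ s in (0:ℝ)..u, reflInt g i x s := by
  apply intervalIntegral.integral_congr
  intro s hs
  have hs' : |s| ≤ r := by
    rw [Set.mem_uIcc] at hs
    rw [abs_le] at hu ⊢
    rcases hs with hs | hs <;> constructor <;> linarith [hs.1, hs.2, hu.1, hu.2]
  unfold reflInt
  apply setIntegral_congr_fun measurableSet_Icc
  intro t ht
  refine (hgh _ ?_).symm
  rw [pi_norm_le_iff_of_nonneg ((abs_nonneg _).trans hs')]
  intro k
  by_cases hk : k = i
  · subst hk; simpa using hs'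
  · rw [Function.update_of_ne hk, norm_mul]
    have h1 : ‖t k‖ ≤ 1 := by
      rw [Real.norm_eq_abs, abs_of_nonneg (ht.1 k)]; exact ht.2 k
    have h2 := (norm_le_pi_norm x k).trans hx
    nlinarith [norm_nonneg (t k), norm_nonneg (x k)]

theorem stmt11 {m : ℕ} (hm : 1 ≤ m) (i : Fin m)
    (h : (Fin m → ℝ) → ℝ)
    (V : Set (Fin m → ℝ)) (hV : IsOpen V) (h0V : (0 : Fin m → ℝ) ∈ V)
    (hsm : ContDiffOn ℝ (⊤ : ℕ∞) h V) (hpos : ∀ x ∈ V, 0 < h x) :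
    ∃ (U : Set (Fin m → ℝ)) (ρ : (Fin m → ℝ) → ℝ),
      IsOpen U ∧ (0 : Fin m → ℝ) ∈ U ∧
      ContDiffOn ℝ (⊤ : ℕ∞) ρ U ∧ ρ 0 = 0 ∧
      (∀ x ∈ U, (∫ s in (0:ℝ)..(x i), reflInt h i x s)
        + (∫ s in (0:ℝ)..(ρ x), reflInt h i x s) = 0) ∧
      (∀ x ∈ U, ∀ u : ℝ, Function.update x i u ∈ U →
        (∫ s in (0:ℝ)..(x i), reflInt h i x s)
          + (∫ s in (0:ℝ)..u, reflInt h i x s) = 0 →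
        u = ρ x) := by
  classical
  obtain ⟨g, r, hr, hg, hgpos, hgh⟩ := aux_ext h V hV h0V hsm hpos
  let G : (Fin m → ℝ) × ℝ → ℝ := fun p =>
    (∫ s in (0:ℝ)..(p.1 i), reflInt g i p.1 s) + (∫ s in (0:ℝ)..p.2, reflInt g i p.1 s)
  have hF := aux_F_smooth i g hg
  have hG : ContDiff ℝ (⊤ : ℕ∞) G := by
    refine ContDiff.add ?_ hF
    exact hF.comp (f := fun p : (Fin m → ℝ) × ℝ => (p.1, p.1 i)) (by fun_prop)
  have hrc : ∀ x, Continuous (fun s => reflInt g i x s) := fun x =>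
    (aux_refl_smooth i g hg).continuous.comp (by fun_prop : Continuous fun s : ℝ => (x, s))
  have hder : ∀ x u, HasDerivAt (fun u => G (x, u)) (reflInt g i x u) u := fun x u =>
    ((hrc x).integral_hasStrictDerivAt 0 u).hasDerivAt.const_add (∫ s in (0:ℝ)..(x i), reflInt g i x s)
  have hmono : ∀ x, StrictMono (fun u => G (x, u)) := fun x =>
    strictMono_of_hasDerivAt_pos (hder x) (fun u => aux_refl_pos i g hg hgpos x u)
  have hinv : ∀ p : (Fin m → ℝ) × ℝ,
      (fderiv ℝ G p ∘L .inr ℝ (Fin m → ℝ) ℝ).IsInvertible := by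
    rintro ⟨x, u⟩
    apply aux_inv
    have h1 : HasFDerivAt G (fderiv ℝ G (x, u)) (x, u) :=
      (hG.differentiable (by simp) _).hasFDerivAt
    have h2 : HasFDerivAt (fun v : ℝ => (x, v)) (ContinuousLinearMap.inr ℝ (Fin m → ℝ) ℝ) u :=
      hasFDerivAt_prodMk_right x u
    have h3 := (h1.comp u h2).hasDerivAt
    have h4 := h3.unique (hder x u)
    rw [h4]
    exact (aux_refl_pos i g hg hgpos x u).ne'
  let ρ : (Fin m → ℝ) → ℝ := fun x => if hx : ∃ u, G (x, u) = 0 then hx.choose else 0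
  have hρ : ∀ x u, G (x, u) = 0 → ρ x = u := by
    intro x u hu
    have hx : ∃ u, G (x, u) = 0 := ⟨u, hu⟩
    have h1 : ρ x = hx.choose := dif_pos hx
    rw [h1]
    exact (hmono x).injective (hx.choose_spec.trans hu.symm)
  have hG0 : G (0, 0) = 0 := by simp [G]
  have hρ0 : ρ 0 = 0 := hρ 0 0 hG0
  -- local smoothness
  have hloc : ∀ x, G (x, ρ x) = 0 →
      ContDiffAt ℝ (⊤ : ℕ∞) ρ x ∧ ∀ᶠ y in nhds x, G (y, ρ y) = 0 := by
    intro x hx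
    have hcd : ContDiffAt ℝ (⊤ : ℕ∞) G (x, ρ x) := hG.contDiffAt
    have hn : ((⊤ : ℕ∞) : WithTop ℕ∞) ≠ 0 := by simp
    have e1 := hcd.eventually_apply_implicitFunction hn (hinv _)
    have e2 := hcd.contDiffAt_implicitFunction hn (hinv _)
    rw [hx] at e1
    simp only at e1 e2
    have e3 : ρ =ᶠ[nhds x] hcd.implicitFunction hn (hinv _) := by
      filter_upwards [e1] with y hy
      exact hρ y _ hy
    refine ⟨e2.congr_of_eventuallyEq e3, ?_⟩
    filter_upwards [e1, e3] with y hy hy'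
    rw [hy']; exact hy
  have hconv : ∀ x u, ‖x‖ < r → |u| < r →
      (∫ s in (0:ℝ)..(x i), reflInt h i x s) + (∫ s in (0:ℝ)..u, reflInt h i x s)
        = G (x, u) := by
    intro x u hx hu
    rw [aux_eq i h g r hgh x hx.le u hu.le,
      aux_eq i h g r hgh x hx.le (x i) ((norm_le_pi_norm x i).trans hx.le)]
  refine ⟨{x | ‖x‖ < r ∧ |ρ x| < r ∧ G (x, ρ x) = 0}, ρ, ?_, ?_, ?_, hρ0, ?_, ?_⟩
  · rw [isOpen_iff_mem_nhds]
    rintro x ⟨h1, h2, h3⟩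
    obtain ⟨h4, h5⟩ := hloc x h3
    have h6 : ∀ᶠ y in nhds x, |ρ y| < r := h4.continuousAt.abs.eventually_lt_const h2
    have h7 : ∀ᶠ y in nhds x, ‖y‖ < r :=
      (continuous_norm.continuousAt (x := x)).eventually_lt_const h1
    filter_upwards [h5, h6, h7] with y a b c
    exact ⟨c, b, a⟩
  · refine ⟨by simpa using hr, by rw [hρ0]; simpa using hr, by rw [hρ0]; exact hG0⟩
  · rintro x ⟨h1, h2, h3⟩
    exact (hloc x h3).1.contDiffWithinAt
  · rintro x ⟨h1, h2, h3⟩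
    rw [hconv x _ h1 h2, h3]
  · rintro x ⟨h1, h2, h3⟩ u hu hu0
    have hu' : |u| < r := by
      have := norm_le_pi_norm (Function.update x i u) i
      rw [Function.update_self] at this
      exact this.trans_lt hu.1
    rw [hconv x u h1 hu'] at hu0
    exact (hρ x u hu0).symm
end
end

section
/- Let m ≥ 1, let h be a smooth positive function on a neighborhood of 0 in ℝ^m, fix i ∈ {1,…,m}, and let f_i(x,s) = ∫_{[0,1]^{m−1}} h(t_1x_1,…,t_{i−1}x_{i−1}, s, t_{i+1}x_{i+1},…,t_mx_m) dt. Suppose ρ_i is a smooth function on a neighborhood U of 0 with ρ_i(0) = 0 satisfying ∫_0^{x_i} f_i(x,s) ds + ∫_0^{ρ_i(x)} f_i(x,s) ds = 0 on U. Then, for all x in a sufficiently small neighborhood of 0: (i) ρ_i(x_1,…,x_{i−1}, ρ_i(x), x_{i+1},…,x_m) = x_i (the reflection map r_i(x) = (x_1,…,ρ_i(x),…,x_m) is an involution); (ii) if x_i > 0 then ρ_i(x) < 0, and if x_i < 0 then ρ_i(x) > 0. -/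
open MeasureTheory

noncomputable section

lemma reflInt_update {m : ℕ} (h : (Fin m → ℝ) → ℝ) (i : Fin m) (x : Fin m → ℝ) (a : ℝ) :
    reflInt h i (Function.update x i a) = reflInt h i x := by
  funext s
  unfold reflInt
  congr 1
  funext t
  congr 1
  funext k
  by_cases hk : k = i
  · subst hk; simp
  · simp [hk]

lemma reflInt_props {m : ℕ} (i : Fin m) (h : (Fin m → ℝ) → ℝ) (r C c : ℝ) (hr : 0 < r)
    (hc : 0 < c)
    (hcont : ContinuousOn h (Metric.ball 0 r))
    (hb : ∀ x ∈ Metric.ball (0 : Fin m → ℝ) r, c ≤ h x ∧ h x ≤ C)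
    (x : Fin m → ℝ) (hx : x ∈ Metric.ball (0 : Fin m → ℝ) r) :
    ContinuousOn (reflInt h i x) (Metric.ball 0 r) ∧
      ∀ s ∈ Metric.ball (0 : ℝ) r, 0 < reflInt h i x s := by
  have hmem : ∀ s ∈ Metric.ball (0 : ℝ) r, ∀ t ∈ Set.Icc (0 : Fin m → ℝ) 1,
      Function.update (fun k => t k * x k) i s ∈ Metric.ball (0 : Fin m → ℝ) r := by
    intro s hs t ht
    rw [mem_ball_zero_iff] at hs hx ⊢
    rw [pi_norm_lt_iff hr] at hx ⊢
    intro k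
    by_cases hk : k = i
    · subst hk; simpa using hs
    · rw [Function.update_of_ne hk, norm_mul]
      have h1 : ‖t k‖ ≤ 1 := by
        rw [Real.norm_of_nonneg (ht.1 k)]; exact ht.2 k
      have := hx k
      have h2 := norm_nonneg (x k)
      nlinarith
  have hct : ∀ s ∈ Metric.ball (0 : ℝ) r,
      ContinuousOn (fun t : Fin m → ℝ => h (Function.update (fun k => t k * x k) i s))
        (Set.Icc 0 1) := by
    intro s hs
    refine hcont.comp (Continuous.continuousOn ?_) (hmem s hs)
    exact Continuous.update (by fun_prop) i continuous_const
  have hcs : ∀ t ∈ Set.Icc (0 : Fin m → ℝ) 1,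
      ContinuousOn (fun s => h (Function.update (fun k => t k * x k) i s))
        (Metric.ball 0 r) := by
    intro t ht
    refine hcont.comp (Continuous.continuousOn ?_) (fun s hs => hmem s hs t ht)
    exact Continuous.update continuous_const i continuous_id
  constructor
  · unfold reflInt
    refine continuousOn_of_dominated (bound := fun _ => C) ?_ ?_ ?_ ?_
    · intro s hs
      exact (hct s hs).aestronglyMeasurable measurableSet_Icc
    · intro s hs
      refine (ae_restrict_iff' measurableSet_Icc).2 (Filter.Eventually.of_forall ?_)
      intro t ht
      have := hb _ (hmem s hs t ht)
      rw [Real.norm_of_nonneg (by linarith)]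
      exact this.2
    · exact continuousOn_const.integrableOn_compact isCompact_Icc
    · refine (ae_restrict_iff' measurableSet_Icc).2 (Filter.Eventually.of_forall ?_)
      intro t ht
      exact hcs t ht
  · intro s hs
    have h1 : ∫ t in Set.Icc (0 : Fin m → ℝ) 1, c ≤ reflInt h i x s := by
      refine setIntegral_mono_on (continuousOn_const.integrableOn_compact isCompact_Icc)
        ((hct s hs).integrableOn_compact isCompact_Icc) measurableSet_Icc ?_
      intro t ht
      exact (hb _ (hmem s hs t ht)).1
    have h2 : ∫ t in Set.Icc (0 : Fin m → ℝ) 1, c = c := by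
      simp [Measure.real, Real.volume_Icc_pi]
    linarith

/-- The volume-preserving reflection encoded by `ρ_i` is an involution
near `0` and maps each side of the hyperplane `{x_i = 0}` to the other. -/
theorem stmt12 {m : ℕ} (hm : 1 ≤ m) (i : Fin m)
    (h : (Fin m → ℝ) → ℝ)
    (V : Set (Fin m → ℝ)) (hV : IsOpen V) (h0V : (0 : Fin m → ℝ) ∈ V)
    (hsm : ContDiffOn ℝ (⊤ : ℕ∞) h V) (hpos : ∀ x ∈ V, 0 < h x)
    (U : Set (Fin m → ℝ)) (hU : IsOpen U) (h0U : (0 : Fin m → ℝ) ∈ U)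
    (ρ : (Fin m → ℝ) → ℝ) (hρsm : ContDiffOn ℝ (⊤ : ℕ∞) ρ U) (hρ0 : ρ 0 = 0)
    (hρ : ∀ x ∈ U, (∫ s in (0:ℝ)..(x i), reflInt h i x s)
      + (∫ s in (0:ℝ)..(ρ x), reflInt h i x s) = 0) :
    ∃ U' : Set (Fin m → ℝ), IsOpen U' ∧ (0 : Fin m → ℝ) ∈ U' ∧
      (∀ x ∈ U', ρ (Function.update x i (ρ x)) = x i) ∧
      (∀ x ∈ U', (0 < x i → ρ x < 0) ∧ (x i < 0 → 0 < ρ x)) := by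
  have hh0 := hpos 0 h0V
  have hcV := hsm.continuousOn
  have hcA : ContinuousAt h 0 := hcV.continuousAt (hV.mem_nhds h0V)
  have hev : ∀ᶠ x in nhds (0 : Fin m → ℝ), x ∈ V ∧ h 0 / 2 < h x ∧ h x < 2 * h 0 :=
    Filter.Eventually.and (hV.mem_nhds h0V) ((hcA.eventually (lt_mem_nhds (by linarith))).and
      (hcA.eventually (gt_mem_nhds (by linarith))))
  obtain ⟨r, hr, hball⟩ := Metric.eventually_nhds_iff_ball.1 hev
  have hprops := reflInt_props i h r (2 * h 0) (h 0 / 2) hr (by linarith)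
    (hcV.mono fun x hx => (hball x hx).1)
    (fun x hx => ⟨(hball x hx).2.1.le, (hball x hx).2.2.le⟩)
  have hint : ∀ x ∈ Metric.ball (0 : Fin m → ℝ) r, ∀ a ∈ Metric.ball (0 : ℝ) r,
      ∀ b ∈ Metric.ball (0 : ℝ) r, IntervalIntegrable (reflInt h i x) volume a b := by
    intro x hx a ha b hb
    refine ContinuousOn.intervalIntegrable ((hprops x hx).1.mono ?_)
    rw [← segment_eq_uIcc]
    exact (convex_ball _ _).segment_subset ha hb
  have hlt : ∀ x ∈ Metric.ball (0 : Fin m → ℝ) r, ∀ a ∈ Metric.ball (0 : ℝ) r,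
      ∀ b ∈ Metric.ball (0 : ℝ) r, a < b → 0 < ∫ s in a..b, reflInt h i x s := by
    intro x hx a ha b hb hab
    refine intervalIntegral.intervalIntegral_pos_of_pos_on (hint x hx a ha b hb) ?_ hab
    intro s hs
    refine (hprops x hx).2 s ?_
    rw [mem_ball_zero_iff, Real.norm_eq_abs, abs_lt] at *
    exact ⟨by linarith [hs.1], by linarith [hs.2]⟩
  have hmono : ∀ x ∈ Metric.ball (0 : Fin m → ℝ) r, ∀ a ∈ Metric.ball (0 : ℝ) r,
      ∀ b ∈ Metric.ball (0 : ℝ) r, a < b →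
      ∫ s in (0:ℝ)..a, reflInt h i x s < ∫ s in (0:ℝ)..b, reflInt h i x s := by
    intro x hx a ha b hb hab
    have h0 : (0:ℝ) ∈ Metric.ball (0:ℝ) r := Metric.mem_ball_self hr
    have := intervalIntegral.integral_add_adjacent_intervals (hint x hx 0 h0 a ha)
      (hint x hx a ha b hb)
    linarith [hlt x hx a ha b hb hab]
  have hρA : ContinuousAt ρ 0 := hρsm.continuousOn.continuousAt (hU.mem_nhds h0U)
  have hG : ∀ᶠ x in nhds (0 : Fin m → ℝ),
      x ∈ U ∧ x ∈ Metric.ball (0 : Fin m → ℝ) r ∧ ρ x ∈ Metric.ball (0 : ℝ) r :=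
    Filter.Eventually.and (hU.mem_nhds h0U) (Filter.Eventually.and (Metric.ball_mem_nhds _ hr)
      (hρA.eventually (by rw [hρ0]; exact Metric.ball_mem_nhds _ hr)))
  have hrA : Filter.Tendsto (fun x : Fin m → ℝ => Function.update x i (ρ x)) (nhds 0)
      (nhds 0) := by
    have : ContinuousAt (fun x : Fin m → ℝ => Function.update x i (ρ x)) 0 :=
      continuousAt_id.update i hρA
    have h2 := this.tendsto
    have h3 : Function.update (0 : Fin m → ℝ) i (ρ 0) = 0 := by
      rw [hρ0]; exact Function.update_eq_self i (0 : Fin m → ℝ)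
    rwa [h3] at h2
  obtain ⟨U', hU', hU'o, h0U'⟩ := eventually_nhds_iff.1 (hG.and (hrA.eventually hG))
  have hxi : ∀ x ∈ Metric.ball (0 : Fin m → ℝ) r, x i ∈ Metric.ball (0 : ℝ) r := by
    intro x hx
    rw [mem_ball_zero_iff] at *
    exact (norm_le_pi_norm x i).trans_lt hx
  have h0 : (0:ℝ) ∈ Metric.ball (0:ℝ) r := Metric.mem_ball_self hr
  refine ⟨U', hU'o, h0U', ?_, ?_⟩
  · intro x hx
    obtain ⟨⟨a1, a2, a3⟩, b1, b2, b3⟩ := hU' x hx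
    have e1 := hρ x a1
    have e2 := hρ _ b1
    rw [reflInt_update, Function.update_self] at e2
    rcases lt_trichotomy (ρ (Function.update x i (ρ x))) (x i) with hl | hl | hl
    · have := hmono x a2 _ b3 _ (hxi x a2) hl
      linarith
    · exact hl
    · have := hmono x a2 _ (hxi x a2) _ b3 hl
      linarith
  · intro x hx
    obtain ⟨⟨a1, a2, a3⟩, -⟩ := hU' x hx
    have e1 := hρ x a1
    have e0 : ∫ s in (0:ℝ)..0, reflInt h i x s = 0 := intervalIntegral.integral_same
    constructor
    · intro hp
      by_contra! hn
      have h1 := hmono x a2 _ h0 _ (hxi x a2) hp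
      rcases hn.eq_or_lt with hn | hn
      · rw [← hn] at e1; linarith
      · linarith [hmono x a2 _ h0 _ a3 hn]
    · intro hp
      by_contra! hn
      have h1 := hmono x a2 _ (hxi x a2) _ h0 hp
      rcases hn.eq_or_lt with hn | hn
      · rw [hn] at e1; linarith
      · linarith [hmono x a2 _ a3 _ h0 hn]
end
end

section
/- Let h and h̃ be smooth positive functions on neighborhoods of 0 in ℝ², and let φ(x,y) = (φ_1(x), φ_2(y)) be a diffeomorphism-germ at 0 ∈ ℝ² with φ_1(0) = φ_2(0) = 0, φ_1' > 0, φ_2' > 0, and h(x,y) = h̃(φ_1(x),φ_2(y))·φ_1'(x)·φ_2'(y). Let f(x,y,s) = ∫_0^1 h(s, t y) dt and f̃(u,v,s) = ∫_0^1 h̃(s, t v) dt, and let ρ and ρ̃ be smooth functions on neighborhoods of 0 with ρ(0,0) = 0, ρ̃(0,0) = 0 satisfying ∫_0^{x} f(x,y,s) ds + ∫_0^{ρ(x,y)} f(x,y,s) ds = 0 and ∫_0^{u} f̃(u,v,s) ds + ∫_0^{ρ̃(u,v)} f̃(u,v,s) ds = 0. Then φ_1(ρ(x,y)) = ρ̃(φ_1(x),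 φ_2(y)) for all (x,y) in a neighborhood of 0. -/
open MeasureTheory

noncomputable section

theorem aux_cov (φ : ℝ → ℝ) (δ : ℝ) (hd : ∀ x, |x| ≤ δ → HasDerivAt φ (deriv φ x) x)
    (hc : ContinuousOn (deriv φ) (Set.Icc (-δ) δ)) (h0 : φ 0 = 0) (k : ℝ → ℝ) (hk : Continuous k)
    (x : ℝ) (hx : |x| ≤ δ) :
    ∫ s in (0:ℝ)..x, k (φ s) * deriv φ s = ∫ r in (0:ℝ)..(φ x), k r := by
  have hsub : ∀ s ∈ Set.uIcc 0 x, |s| ≤ δ := by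
    intro s hs
    have h1 := Set.abs_sub_left_of_mem_uIcc hs
    simp only [sub_zero] at h1
    linarith
  have := intervalIntegral.integral_comp_mul_deriv (a := 0) (b := x) (f := φ) (f' := deriv φ) (g := k)
    (fun s hs => hd s (hsub s hs))
    (hc.mono (fun s hs => abs_le.mp (hsub s hs))) hk
  simpa [h0] using this

theorem aux_c (φ : ℝ → ℝ) (δ : ℝ) (hδ : 0 < δ) (hd : ∀ x, |x| ≤ δ → HasDerivAt φ (deriv φ x) x)
    (hc : ContinuousOn (deriv φ) (Set.Icc (-δ) δ)) (h0 : φ 0 = 0)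
    (hp : ∀ x, |x| ≤ δ → 0 < deriv φ x)
    (y : ℝ) (hy : |y| ≤ δ) :
    ∃ c : ℝ, c ≠ 0 ∧ ∀ k : ℝ → ℝ, Continuous k →
      ∫ t in (0:ℝ)..1, k (φ (t * y)) * deriv φ (t * y) = c * ∫ t in (0:ℝ)..1, k (t * φ y) := by
  by_cases hy0 : y = 0
  · subst hy0
    refine ⟨deriv φ 0, (hp 0 hy).ne', fun k hk => ?_⟩
    simp [h0, mul_comm]
  have hmono : StrictMonoOn φ (Set.Icc (-δ) δ) := by
    apply strictMonoOn_of_deriv_pos (convex_Icc _ _)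
    · exact fun s hs => (hd s (abs_le.mpr hs)).continuousAt.continuousWithinAt
    · intro s hs
      have hs2 : s ∈ Set.Icc (-δ) δ := interior_subset hs
      exact hp s (abs_le.mpr hs2)
  have hφy : φ y ≠ 0 := by
    intro h
    exact hy0 (hmono.injOn (abs_le.mp hy) ⟨by linarith, by linarith⟩ (by rw [h, h0]))
  refine ⟨φ y / y, div_ne_zero hφy hy0, fun k hk => ?_⟩
  have h1 := intervalIntegral.integral_comp_mul_right (a := 0) (b := 1)
    (fun z => k (φ z) * deriv φ z) hy0
  have h2 := intervalIntegral.integral_comp_mul_right (a := 0) (b := 1) k hφy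
  rw [h1, h2]
  simp only [zero_mul, one_mul, smul_eq_mul]
  rw [aux_cov φ δ hd hc h0 k hk y hy]
  field_simp

/-- Volume-preserving reflections of planar divergence-free 2-webs are
conjugated by local equivalences: if `h(x,y) = h̃(φ₁(x),φ₂(y))·φ₁'(x)·φ₂'(y)` and
`ρ`, `ρ̃` are the reflection functions of the webs with densities `h`, `h̃`, then
`φ₁(ρ(x,y)) = ρ̃(φ₁(x),φ₂(y))` near the origin. -/
theorem stmt13
    (h ht : ℝ → ℝ → ℝ) (φ₁ φ₂ : ℝ → ℝ)
    (V Vt : Set (ℝ × ℝ)) (hV : IsOpen V) (h0V : ((0:ℝ), (0:ℝ)) ∈ V)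
    (hVt : IsOpen Vt) (h0Vt : ((0:ℝ), (0:ℝ)) ∈ Vt)
    (hsm : ContDiffOn ℝ (⊤ : ℕ∞) (fun p : ℝ × ℝ => h p.1 p.2) V)
    (hpos : ∀ p ∈ V, 0 < h (Prod.fst p) (Prod.snd p))
    (htsm : ContDiffOn ℝ (⊤ : ℕ∞) (fun p : ℝ × ℝ => ht p.1 p.2) Vt)
    (htpos : ∀ p ∈ Vt, 0 < ht (Prod.fst p) (Prod.snd p))
    (V₁ V₂ : Set ℝ) (hV₁ : IsOpen V₁) (h0V₁ : (0:ℝ) ∈ V₁)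
    (hV₂ : IsOpen V₂) (h0V₂ : (0:ℝ) ∈ V₂)
    (hφ₁sm : ContDiffOn ℝ (⊤ : ℕ∞) φ₁ V₁) (hφ₂sm : ContDiffOn ℝ (⊤ : ℕ∞) φ₂ V₂)
    (hφ₁0 : φ₁ 0 = 0) (hφ₂0 : φ₂ 0 = 0)
    (hφ₁d : ∀ x ∈ V₁, 0 < deriv φ₁ x) (hφ₂d : ∀ y ∈ V₂, 0 < deriv φ₂ y)
    (hrel : ∀ x ∈ V₁, ∀ y ∈ V₂,
      h x y = ht (φ₁ x) (φ₂ y) * deriv φ₁ x * deriv φ₂ y)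
    (ρ ρt : ℝ → ℝ → ℝ)
    (W Wt : Set (ℝ × ℝ)) (hW : IsOpen W) (h0W : ((0:ℝ), (0:ℝ)) ∈ W)
    (hWt : IsOpen Wt) (h0Wt : ((0:ℝ), (0:ℝ)) ∈ Wt)
    (hρsm : ContDiffOn ℝ (⊤ : ℕ∞) (fun p : ℝ × ℝ => ρ p.1 p.2) W)
    (hρtsm : ContDiffOn ℝ (⊤ : ℕ∞) (fun p : ℝ × ℝ => ρt p.1 p.2) Wt)
    (hρ0 : ρ 0 0 = 0) (hρt0 : ρt 0 0 = 0)
    (hρ : ∀ p ∈ W, (∫ s in (0:ℝ)..(Prod.fst p), ∫ t in (0:ℝ)..(1:ℝ), h s (t * p.2))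
      + (∫ s in (0:ℝ)..(ρ p.1 p.2), ∫ t in (0:ℝ)..(1:ℝ), h s (t * p.2)) = 0)
    (hρt : ∀ p ∈ Wt, (∫ s in (0:ℝ)..(Prod.fst p), ∫ t in (0:ℝ)..(1:ℝ), ht s (t * p.2))
      + (∫ s in (0:ℝ)..(ρt p.1 p.2), ∫ t in (0:ℝ)..(1:ℝ), ht s (t * p.2)) = 0) :
    ∃ N : Set (ℝ × ℝ), IsOpen N ∧ ((0:ℝ), (0:ℝ)) ∈ N ∧
      ∀ p ∈ N, φ₁ (ρ (Prod.fst p) (Prod.snd p)) = ρt (φ₁ p.1) (φ₂ p.2) := by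
  -- boxes
  obtain ⟨ε, hε, hεV⟩ : ∃ ε > 0, ∀ a b : ℝ, |a| ≤ ε → |b| ≤ ε → (a, b) ∈ Vt := by
    obtain ⟨e, he, hsub⟩ := Metric.isOpen_iff.mp hVt _ h0Vt
    refine ⟨e / 2, by positivity, fun a b ha hb => hsub ?_⟩
    rw [Metric.mem_ball, Prod.dist_eq]
    simp only [Real.dist_eq, sub_zero]
    exact max_lt (by linarith) (by linarith)
  have hder : ∀ (φ : ℝ → ℝ) (U : Set ℝ), IsOpen U → (0:ℝ) ∈ U → ContDiffOn ℝ (⊤ : ℕ∞) φ U →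
      φ 0 = 0 → ContinuousAt φ 0 ∧ ∃ δ > 0, (∀ x, |x| ≤ δ → x ∈ U) ∧ (∀ x, |x| ≤ δ → |φ x| ≤ ε) ∧
      (∀ x, |x| ≤ δ → HasDerivAt φ (deriv φ x) x) ∧ ContinuousOn (deriv φ) U := by
    intro φ U hU h0 hs hφ
    have hca : ContinuousAt φ 0 := hs.continuousOn.continuousAt (hU.mem_nhds h0)
    have hev : ∀ᶠ x in nhds (0:ℝ), x ∈ U ∧ |φ x| < ε := by
      have hm : ∀ᶠ x in nhds (0:ℝ), x ∈ U := hU.mem_nhds h0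
      refine hm.and ?_
      have : ContinuousAt (fun x => |φ x|) 0 := hca.abs
      apply this.eventually_lt_const
      simpa [hφ] using hε
    obtain ⟨d, hd, hdd⟩ := Metric.eventually_nhds_iff.mp hev
    have hlt : ∀ x : ℝ, |x| ≤ d / 2 → dist x 0 < d := by
      intro x hx
      simp only [Real.dist_eq, sub_zero]
      linarith
    refine ⟨hca, d / 2, by positivity, fun x hx => (hdd (hlt x hx)).1,
      fun x hx => (hdd (hlt x hx)).2.le, fun x hx => ?_, ?_⟩
    · exact ((hs.contDiffAt (hU.mem_nhds (hdd (hlt x hx)).1)).differentiableAt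
        (by simp)).hasDerivAt
    · exact hs.continuousOn_deriv_of_isOpen hU (by simp)
  obtain ⟨hc1, δ₁, hδ₁, hU1, hb1, hd1, hcd1⟩ := hder φ₁ V₁ hV₁ h0V₁ hφ₁sm hφ₁0
  obtain ⟨hc2, δ₂, hδ₂, hU2, hb2, hd2, hcd2⟩ := hder φ₂ V₂ hV₂ h0V₂ hφ₂sm hφ₂0
  -- globalised density
  obtain ⟨H, hHc, hHpos, hHeq⟩ : ∃ H : ℝ → ℝ → ℝ, Continuous (fun p : ℝ × ℝ => H p.1 p.2) ∧
      (∀ a b, 0 < H a b) ∧ ∀ a b, |a| ≤ ε → |b| ≤ ε → H a b = ht a b := by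
    have hcl : ∀ z : ℝ, |max (-ε) (min ε z)| ≤ ε := fun z =>
      abs_le.mpr ⟨le_max_left _ _, max_le (by linarith) (min_le_left _ _)⟩
    have hcl2 : ∀ z : ℝ, |z| ≤ ε → max (-ε) (min ε z) = z := fun z hz => by
      rw [min_eq_right (abs_le.mp hz).2, max_eq_right (abs_le.mp hz).1]
    refine ⟨fun a b => ht (max (-ε) (min ε a)) (max (-ε) (min ε b)), ?_, ?_, ?_⟩
    · exact htsm.continuousOn.comp_continuous
        (f := fun p : ℝ × ℝ => (max (-ε) (min ε p.1), max (-ε) (min ε p.2)))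
        (by fun_prop) (fun p => hεV _ _ (hcl _) (hcl _))
    · intro a b
      exact htpos _ (hεV _ _ (hcl a) (hcl b))
    · intro a b ha hb
      simp only [hcl2 a ha, hcl2 b hb]
  have hGc : ∀ v : ℝ, Continuous (fun r : ℝ => ∫ t in (0:ℝ)..1, H r (t * v)) := by
    intro v
    apply intervalIntegral.continuous_parametric_intervalIntegral_of_continuous'
    exact hHc.comp (f := fun p : ℝ × ℝ => (p.1, p.2 * v)) (by fun_prop)
  have hGpos : ∀ v r : ℝ, 0 < ∫ t in (0:ℝ)..1, H r (t * v) := by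
    intro v r
    apply intervalIntegral.intervalIntegral_pos_of_pos
    · apply Continuous.intervalIntegrable
      exact hHc.comp (f := fun t : ℝ => (r, t * v)) (by fun_prop)
    · exact fun t => hHpos _ _
    · norm_num
  have hmono : ∀ v : ℝ, StrictMono (fun u : ℝ => ∫ r in (0:ℝ)..u, ∫ t in (0:ℝ)..1, H r (t * v)) := by
    intro v a b hab
    have hi : ∀ a b : ℝ, IntervalIntegrable (fun r : ℝ => ∫ t in (0:ℝ)..1, H r (t * v)) volume a b :=
      fun a b => (hGc v).intervalIntegrable a b
    have h1 := intervalIntegral.integral_add_adjacent_intervals (hi 0 a) (hi a b)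
    have h2 := intervalIntegral.intervalIntegral_pos_of_pos (hi a b) (hGpos v) hab
    try simp only
    linarith
  have hle : ∀ x s : ℝ, s ∈ Set.uIcc 0 x → |s| ≤ |x| := by
    intro x s hs
    simpa using Set.abs_sub_left_of_mem_uIcc hs
  have hle1 : ∀ y t : ℝ, t ∈ Set.uIcc (0:ℝ) 1 → |t * y| ≤ |y| := by
    intro y t hs
    have := hle 1 t hs
    rw [abs_one] at this
    rw [abs_mul]
    exact mul_le_of_le_one_left (abs_nonneg _) this
  have hB : ∀ u v : ℝ, |u| ≤ ε → |v| ≤ ε →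
      (∫ s in (0:ℝ)..u, ∫ t in (0:ℝ)..1, ht s (t * v)) =
        ∫ s in (0:ℝ)..u, ∫ t in (0:ℝ)..1, H s (t * v) := by
    intro u v hu hv
    refine intervalIntegral.integral_congr fun s hs => ?_
    refine intervalIntegral.integral_congr fun t ht' => ?_
    exact (hHeq _ _ ((hle _ _ hs).trans hu) ((hle1 _ _ ht').trans hv)).symm
  have hC : ∀ y : ℝ, |y| ≤ δ₂ → ∃ c : ℝ, c ≠ 0 ∧ ∀ x : ℝ, |x| ≤ δ₁ →
      (∫ s in (0:ℝ)..x, ∫ t in (0:ℝ)..1, h s (t * y)) =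
        c * ∫ r in (0:ℝ)..(φ₁ x), ∫ t in (0:ℝ)..1, H r (t * φ₂ y) := by
    intro y hy
    obtain ⟨c, hc0, hc⟩ := aux_c φ₂ δ₂ hδ₂ hd2 (hcd2.mono fun x hx => hU2 x (abs_le.mpr hx)) hφ₂0
      (fun x hx => hφ₂d x (hU2 x hx)) y hy
    refine ⟨c, hc0, fun x hx => ?_⟩
    rw [← aux_cov φ₁ δ₁ hd1 (hcd1.mono fun x hx => hU1 x (abs_le.mpr hx)) hφ₁0
      (fun r => ∫ t in (0:ℝ)..1, H r (t * φ₂ y)) (hGc _) x hx,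
      ← intervalIntegral.integral_const_mul]
    refine intervalIntegral.integral_congr fun s hs => ?_
    have hs' := (hle _ _ hs).trans hx
    have hk : Continuous (fun w : ℝ => H (φ₁ s) w) :=
      hHc.comp (f := fun w : ℝ => (φ₁ s, w)) (by fun_prop)
    try simp only
    rw [← mul_assoc, ← hc _ hk, ← intervalIntegral.integral_mul_const]
    refine intervalIntegral.integral_congr fun t ht' => ?_
    have ht'' := (hle1 y _ ht').trans hy
    try simp only
    rw [hrel s (hU1 s hs') _ (hU2 _ ht''), hHeq _ _ (hb1 s hs') (hb2 _ ht'')]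
    ring
  -- the neighbourhood
  have hρc : ContinuousAt (fun p : ℝ × ℝ => ρ p.1 p.2) (0, 0) :=
    hρsm.continuousOn.continuousAt (hW.mem_nhds h0W)
  have hρtc : ContinuousAt (fun p : ℝ × ℝ => ρt p.1 p.2) (0, 0) :=
    hρtsm.continuousOn.continuousAt (hWt.mem_nhds h0Wt)
  have hφc : ContinuousAt (fun p : ℝ × ℝ => (φ₁ p.1, φ₂ p.2)) (0, 0) := by
    refine ContinuousAt.prodMk ?_ ?_
    · exact ContinuousAt.comp (f := Prod.fst) (g := φ₁) hc1 continuousAt_fst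
    · exact ContinuousAt.comp (f := Prod.snd) (g := φ₂) hc2 continuousAt_snd
  have hφt : Filter.Tendsto (fun p : ℝ × ℝ => (φ₁ p.1, φ₂ p.2)) (nhds (0, 0)) (nhds (0, 0)) := by
    have := hφc.tendsto
    simpa only [hφ₁0, hφ₂0] using this
  have e1 : ∀ᶠ p : ℝ × ℝ in nhds (0, 0), p ∈ W := hW.mem_nhds h0W
  have e2 : ∀ᶠ p : ℝ × ℝ in nhds (0, 0), |p.1| < δ₁ :=
    (continuousAt_fst (X := ℝ) (Y := ℝ)).abs.eventually_lt_const (by simpa using hδ₁)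
  have e3 : ∀ᶠ p : ℝ × ℝ in nhds (0, 0), |p.2| < δ₂ :=
    (continuousAt_snd (X := ℝ) (Y := ℝ)).abs.eventually_lt_const (by simpa using hδ₂)
  have e4 : ∀ᶠ p : ℝ × ℝ in nhds (0, 0), |ρ p.1 p.2| < δ₁ :=
    hρc.abs.eventually_lt_const (by simpa [hρ0] using hδ₁)
  have e5 : ∀ᶠ p : ℝ × ℝ in nhds (0, 0), (φ₁ p.1, φ₂ p.2) ∈ Wt :=
    hφt.eventually (hWt.mem_nhds h0Wt)
  have e6' : ∀ᶠ p : ℝ × ℝ in nhds (0, 0), |ρt p.1 p.2| < ε :=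
    hρtc.abs.eventually_lt_const (by simpa [hρt0] using hε)
  have e6 := hφt.eventually e6'
  obtain ⟨N, hN, hNo, h0N⟩ := mem_nhds_iff.mp
    (e1.and (e2.and (e3.and (e4.and (e5.and e6)))))
  refine ⟨N, hNo, h0N, fun p hp => ?_⟩
  obtain ⟨p1, p2, p3, p4, p5, p6⟩ := hN hp
  obtain ⟨c, hc0, hc⟩ := hC p.2 p3.le
  have q1 := hρ p p1
  rw [hc _ p2.le, hc _ p4.le, ← mul_add] at q1
  have q2 := (mul_eq_zero.mp q1).resolve_left hc0
  have q3 := hρt _ p5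
  simp only at q3 p6
  rw [hB _ _ (hb1 _ p2.le) (hb2 _ p3.le), hB _ _ p6.le (hb2 _ p3.le)] at q3
  apply (hmono (φ₂ p.2)).injective
  simp only
  linarith
end
end

section
/- Let m ≥ 2, let U ⊆ ℝ^m be an open box (a product of open intervals), and let h : U → ℝ be smooth and positive. Then the following are equivalent: (a) ∂²(log h)/∂x_i∂x_j ≡ 0 on U for all pairs i ≠ j; (b) for every closed box K = ∏_{k=1}^m [a_k,b_k] ⊆ U, every pair of distinct indices i ≠ j, and every p_i ∈ [a_i,b_i], p_j ∈ [a_j,b_j], the four quantities V_{st} (s,t ∈ {+,−}), defined as the integrals of h over ∏_k I_k with I_i = [p_i,b_i] if s = + and [a_i,p_i] if s = −, I_j = [p_j,b_j] if t = + and [a_j,p_j] if t = −, and I_k = [a_k,b_k] for k ∉ {i,j}, satisfy V_{−+}·V_{+−} = V_{++}·V_{−−}. -/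
open MeasureTheory

noncomputable section

/-- The `h`-volume `V_{st}` of the subbox of `K = ∏_k [a_k,b_k]` determined by the signs
`s` (for coordinate `i`: `+` gives `[p,b_i]`, `−` gives `[a_i,p]`) and `t` (likewise for
coordinate `j` with `q`), the remaining factors being `[a_k,b_k]`. -/
def subboxVol {m : ℕ} (h : (Fin m → ℝ) → ℝ) (i j : Fin m) (a b : Fin m → ℝ)
    (p q : ℝ) (s t : Bool) : ℝ :=
  ∫ x in Set.Icc
      (fun k => if k = i then (if s then p else a i)
        else if k = j then (if t then q else a j) else a k)
      (fun k => if k = i then (if s then b i else p)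
        else if k = j then (if t then b j else q) else b k),
    h x

lemma aux_line {m : ℕ} {f : (Fin m → ℝ) → ℝ} {x v : Fin m → ℝ} {t : ℝ}
    (hf : DifferentiableAt ℝ f (x + t • v)) :
    HasDerivAt (fun s : ℝ => f (x + s • v)) (fderiv ℝ f (x + t • v) v) t := by
  have h1 : HasDerivAt (fun s : ℝ => x + s • v) v t := by
    simpa using ((hasDerivAt_id t).smul_const v).const_add x
  exact hf.hasFDerivAt.comp_hasDerivAt t h1

lemma aux_const_s17 {φ : ℝ → ℝ} (hφ : ∀ t ∈ Set.Icc (0:ℝ) 1, HasDerivAt φ 0 t) : φ 1 = φ 0 := by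
  have := constant_of_has_deriv_right_zero (f := φ) (a := 0) (b := 1)
    (fun t ht => (hφ t ht).continuousAt.continuousWithinAt)
    (fun t ht => (hφ t ⟨ht.1, ht.2.le⟩).hasDerivWithinAt)
  exact this 1 (by simp)

lemma aux_apply {m : ℕ} (T : (Fin m → ℝ) →L[ℝ] ℝ) (v : Fin m → ℝ) :
    T v = ∑ k, v k * T (Pi.single k 1) := by
  conv_lhs => rw [pi_eq_sum_univ' v]
  simp only [map_sum, map_smul, smul_eq_mul]

lemma aux_diff {m : ℕ} {U : Set (Fin m → ℝ)} (hU : IsOpen U) {L : (Fin m → ℝ) → ℝ}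
    (hL : ContDiffOn ℝ 2 L U) (k : Fin m) {x : Fin m → ℝ} (hx : x ∈ U) :
    DifferentiableAt ℝ (fun y => fderiv ℝ L y (Pi.single k (1:ℝ))) x := by
  have h1 : ContDiffOn ℝ 1 (fderiv ℝ L) U := hL.fderiv_of_isOpen hU (by norm_num)
  have h2 := (h1.differentiableOn (by norm_num)).differentiableAt (hU.mem_nhds hx)
  exact h2.clm_apply (differentiableAt_const _)

lemma aux_sep {m : ℕ} {I : Fin m → Set ℝ} (hIopen : ∀ k, IsOpen (I k))
    (hconv : ∀ k, Convex ℝ (I k)) {L : (Fin m → ℝ) → ℝ}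
    (hL : ContDiffOn ℝ 2 L (Set.univ.pi I))
    (h0 : ∀ i j : Fin m, i ≠ j → ∀ x ∈ Set.univ.pi I,
      fderiv ℝ (fun y => fderiv ℝ L y (Pi.single i (1:ℝ))) x (Pi.single j 1) = 0)
    {x₀ : Fin m → ℝ} (hx₀ : x₀ ∈ Set.univ.pi I) {x : Fin m → ℝ} (hx : x ∈ Set.univ.pi I) :
    L x = ∑ k, L (x₀ + Pi.single k (x k - x₀ k)) + (L x₀ - ∑ _k : Fin m, L x₀) := by
  have hU : IsOpen (Set.univ.pi I) := isOpen_set_pi Set.finite_univ fun k _ => hIopen k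
  have hC : Convex ℝ (Set.univ.pi I) := convex_pi fun k _ => hconv k
  have hd : ∀ y ∈ Set.univ.pi I, DifferentiableAt ℝ L y := fun y hy =>
    (hL.differentiableOn (by norm_num)).differentiableAt (hU.mem_nhds hy)
  have hseg : ∀ y ∈ Set.univ.pi I, ∀ z ∈ Set.univ.pi I, ∀ t ∈ Set.Icc (0:ℝ) 1,
      y + t • (z - y) ∈ Set.univ.pi I := fun y hy z hz t ht =>
    hC.add_smul_sub_mem hy hz ht
  have hA : ∀ i, ∀ y ∈ Set.univ.pi I, ∀ z ∈ Set.univ.pi I, y i = z i →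
      fderiv ℝ L z (Pi.single i (1:ℝ)) = fderiv ℝ L y (Pi.single i (1:ℝ)) := by
    intro i y hy z hz hyz
    have := aux_const_s17 (φ := fun t : ℝ => fderiv ℝ L (y + t • (z - y)) (Pi.single i (1:ℝ))) ?_
    · simpa using this
    · intro t ht
      have h1 := aux_line (aux_diff hU hL i (hseg y hy z hz t ht))
      rw [aux_apply, Finset.sum_eq_zero] at h1
      · exact h1
      · intro k _
        by_cases hk : i = k
        · subst hk; simp [hyz]
        · rw [h0 i k hk _ (hseg y hy z hz t ht), mul_zero]
  have hsg : ∀ k, x₀ + Pi.single k (x k - x₀ k) ∈ Set.univ.pi I := by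
    intro k l _
    by_cases hl : l = k
    · subst hl; simpa using hx l trivial
    · simpa [hl] using hx₀ l trivial
  have hsg2 : ∀ k, ∀ t ∈ Set.Icc (0:ℝ) 1, x₀ + t • Pi.single k (x k - x₀ k) ∈ Set.univ.pi I := by
    intro k t ht
    simpa using hseg x₀ hx₀ _ (hsg k) t ht
  have := aux_const_s17 (φ := fun t : ℝ => L (x₀ + t • (x - x₀)) -
    ∑ k, L (x₀ + t • (Pi.single k (x k - x₀ k) : Fin m → ℝ))) ?_
  · simp only [one_smul, zero_smul, add_zero, add_sub_cancel] at this
    linarith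
  · intro t ht
    have h1 := (aux_line (hd _ (hseg x₀ hx₀ x hx t ht))).sub
      (HasDerivAt.fun_sum (u := Finset.univ) fun k _ => aux_line (hd _ (hsg2 k t ht)))
    refine h1.congr_deriv ?_
    rw [aux_apply, sub_eq_zero]
    refine Finset.sum_congr rfl fun k _ => ?_
    rw [hA k _ (hsg2 k t ht) _ (hseg x₀ hx₀ x hx t ht) (by simp)]
    have : (Pi.single k (x k - x₀ k) : Fin m → ℝ) = (x k - x₀ k) • Pi.single k (1:ℝ) := by
      rw [← Pi.single_smul]; simp
    conv_rhs => rw [this]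
    rw [map_smul]
    simp [this]

lemma aux_fubini {m : ℕ} {h : (Fin m → ℝ) → ℝ} {U : Set (Fin m → ℝ)} {C : ℝ} {g : Fin m → ℝ → ℝ}
    (hg : ∀ x ∈ U, h x = (∏ k, g k (x k)) * C) {a b : Fin m → ℝ} (hab : Set.Icc a b ⊆ U) :
    ∫ x in Set.Icc a b, h x = (∏ k, ∫ u in Set.Icc (a k) (b k), g k u) * C := by
  rw [setIntegral_congr_fun measurableSet_Icc (fun x hx => hg x (hab hx)), integral_mul_const,
    ← Set.pi_univ_Icc, volume_pi, Measure.restrict_pi_pi, integral_fintype_prod_eq_prod]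

lemma aux_fwd {m : ℕ} {h : (Fin m → ℝ) → ℝ} {U : Set (Fin m → ℝ)} {C : ℝ} {g : Fin m → ℝ → ℝ}
    (hg : ∀ x ∈ U, h x = (∏ k, g k (x k)) * C) {a b : Fin m → ℝ} (hab : Set.Icc a b ⊆ U)
    {i j : Fin m} (hij : i ≠ j) {p q : ℝ} (hp : p ∈ Set.Icc (a i) (b i))
    (hq : q ∈ Set.Icc (a j) (b j)) :
    subboxVol h i j a b p q false true * subboxVol h i j a b p q true false =
          subboxVol h i j a b p q true true * subboxVol h i j a b p q false false := by
  have hsub : ∀ s t : Bool, Set.Icc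
      (fun k => if k = i then (if s then p else a i)
        else if k = j then (if t then q else a j) else a k)
      (fun k => if k = i then (if s then b i else p)
        else if k = j then (if t then b j else q) else b k) ⊆ U := by
    intro s t
    refine (Set.Icc_subset_Icc ?_ ?_).trans hab
    · intro k
      have := hp.1
      have := hq.1
      dsimp only
      split_ifs <;> subst_vars <;> first | exact le_rfl | assumption
    · intro k
      have := hp.2
      have := hq.2
      dsimp only
      split_ifs <;> subst_vars <;> first | exact le_rfl | assumption
  unfold subboxVol
  rw [aux_fubini hg (hsub _ _), aux_fubini hg (hsub _ _), aux_fubini hg (hsub _ _),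
    aux_fubini hg (hsub _ _), mul_mul_mul_comm, mul_mul_mul_comm (∏ k, _) C,
    ← Finset.prod_mul_distrib, ← Finset.prod_mul_distrib]
  congr 1
  refine Finset.prod_congr rfl fun k _ => ?_
  by_cases hk : k = i
  · simp [hk, mul_comm]
  · by_cases hk' : k = j
    · simp [hk', hij.symm]
    · simp [hk, hk']

lemma aux_avg {m : ℕ} {h : (Fin m → ℝ) → ℝ} {U : Set (Fin m → ℝ)} (hU : IsOpen U)
    (hc : ContinuousOn h U) {y : Fin m → ℝ} (hy : y ∈ U) :
    Filter.Tendsto (fun ε : ℝ => (ε ^ m)⁻¹ * ∫ x in Set.Icc y (fun k => y k + ε), h x)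
      (nhdsWithin 0 (Set.Ioi 0)) (nhds (h y)) := by
  have hs : Filter.Tendsto (fun ε : ℝ => Set.Icc y (fun k => y k + ε))
      (nhdsWithin 0 (Set.Ioi 0)) (nhds y).smallSets := by
    have : Filter.Tendsto (fun ε : ℝ => (fun k => y k + ε)) (nhdsWithin 0 (Set.Ioi 0)) (nhds y) := by
      have h1 : Continuous (fun ε : ℝ => (fun k => y k + ε)) := by fun_prop
      have := (h1.tendsto 0).mono_left (nhdsWithin_le_nhds (s := Set.Ioi 0))
      simpa using this
    exact tendsto_const_nhds.Icc this
  have hm : StronglyMeasurableAtFilter h (nhds y) volume :=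
    hc.stronglyMeasurableAtFilter hU y hy
  have hca : ContinuousAt h y := hc.continuousAt (hU.mem_nhds hy)
  have hvol : (fun ε : ℝ => (volume : Measure (Fin m → ℝ)).real (Set.Icc y (fun k => y k + ε)))
      =ᶠ[nhdsWithin 0 (Set.Ioi 0)] fun ε => ε ^ m := by
    filter_upwards [self_mem_nhdsWithin] with ε hε
    have hε' : (0:ℝ) < ε := hε
    rw [Measure.real, Real.volume_Icc_pi_toReal]
    · simp
    · intro k; simp [hε'.le]
  have h1 := hca.integral_sub_linear_isLittleO_ae hm hs (fun ε => ε ^ m) hvol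
  have h2 := h1.tendsto_div_nhds_zero
  have h3 := h2.add_const (h y)
  rw [zero_add] at h3
  refine h3.congr' ?_
  filter_upwards [self_mem_nhdsWithin] with ε hε
  have hε' : (0:ℝ) < ε := hε
  have : ε ^ m ≠ 0 := by positivity
  simp only [smul_eq_mul]
  field_simp
  ring

def auxBox {m : ℕ} (i j : Fin m) (x : Fin m → ℝ) (s t : ℝ) : Fin m → ℝ :=
  fun k => if k = i then s else if k = j then t else x k

lemma aux_pos {m : ℕ} {h : (Fin m → ℝ) → ℝ} {U : Set (Fin m → ℝ)}
    (hc : ContinuousOn h U) (hpos : ∀ x ∈ U, 0 < h x) {a b : Fin m → ℝ} (hab : ∀ k, a k < b k)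
    (hsub : Set.Icc a b ⊆ U) : 0 < ∫ x in Set.Icc a b, h x := by
  have hint : IntegrableOn h (Set.Icc a b) := (hc.mono hsub).integrableOn_compact isCompact_Icc
  rw [setIntegral_pos_iff_support_of_nonneg_ae]
  · have : Function.support h ∩ Set.Icc a b = Set.Icc a b :=
      Set.inter_eq_right.2 fun x hx => (hpos x (hsub hx)).ne'
    rw [this, Real.volume_Icc_pi]
    rw [pos_iff_ne_zero, Finset.prod_ne_zero_iff]
    intro k _
    simp [hab k]
  · filter_upwards [ae_restrict_mem measurableSet_Icc] with x hx using (hpos x (hsub hx)).le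
  · exact hint

lemma aux_ratio {A1 A2 A3 B1 B2 B3 : ℝ} (h2 : A2 ≠ 0) (hB : B2 ≠ 0)
    (h12 : A1 * B2 = A2 * B1) (h23 : A2 * B3 = A3 * B2) : A1 * B3 = A3 * B1 := by
  have : A2 * B2 * (A1 * B3) = A2 * B2 * (A3 * B1) := by
    calc A2 * B2 * (A1 * B3) = (A1 * B2) * (A2 * B3) := by ring
      _ = (A2 * B1) * (A3 * B2) := by rw [h12, h23]
      _ = _ := by ring
  exact mul_left_cancel₀ (mul_ne_zero h2 hB) this

lemma aux_four {m : ℕ} {I : Fin m → Set ℝ} (hIopen : ∀ k, IsOpen (I k))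
    (hord : ∀ k, (I k).OrdConnected) {h : (Fin m → ℝ) → ℝ}
    (hc : ContinuousOn h (Set.univ.pi I)) (hpos : ∀ x ∈ Set.univ.pi I, 0 < h x)
    (hb : ∀ a b : Fin m → ℝ, Set.Icc a b ⊆ Set.univ.pi I →
      ∀ i j : Fin m, i ≠ j →
      ∀ p ∈ Set.Icc (a i) (b i), ∀ q ∈ Set.Icc (a j) (b j),
        subboxVol h i j a b p q false true * subboxVol h i j a b p q true false =
          subboxVol h i j a b p q true true * subboxVol h i j a b p q false false)
    {i j : Fin m} (hij : i ≠ j) {x : Fin m → ℝ} (hx : x ∈ Set.univ.pi I) {s t : ℝ}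
    (hs : x i < s) (ht : x j < t) (hsI : s ∈ I i) (htI : t ∈ I j) :
    h x * h (auxBox i j x s t) = h (auxBox i j x s (x j)) * h (auxBox i j x (x i) t) := by
  have hU : IsOpen (Set.univ.pi I) := isOpen_set_pi Set.finite_univ fun k _ => hIopen k
  set W : ℝ → ℝ → ℝ → ℝ → ℝ → ℝ := fun ε α β γ δ =>
    ∫ y in Set.Icc (auxBox i j x α γ) (auxBox i j (fun k => x k + ε) β δ), h y with hW
  have hmem : ∀ α ∈ I i, ∀ β ∈ I j, auxBox i j x α β ∈ Set.univ.pi I := by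
    intro α hα β hβ k _
    unfold auxBox
    split_ifs with h1 h2
    · exact h1 ▸ hα
    · exact h2 ▸ hβ
    · exact hx k trivial
  have hxx : auxBox i j x (x i) (x j) = x := by
    ext k; unfold auxBox; split_ifs with h1 h2 <;> simp [*]
  -- multiplicativity
  have hmul : ∀ᶠ ε : ℝ in nhdsWithin 0 (Set.Ioi 0),
      W ε (x i) (x i + ε) (x j) (x j + ε) * W ε s (s + ε) t (t + ε) =
      W ε s (s + ε) (x j) (x j + ε) * W ε (x i) (x i + ε) t (t + ε) := by
    have hev : ∀ k, ∀ u ∈ I k, ∀ᶠ ε : ℝ in nhdsWithin 0 (Set.Ioi 0), u + ε ∈ I k := by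
      intro k u hu
      have h1 : Continuous (fun ε : ℝ => u + ε) := by fun_prop
      have h2 := (h1.tendsto 0).mono_left (nhdsWithin_le_nhds (s := Set.Ioi 0))
      exact h2 ((hIopen k).mem_nhds (by simpa using hu))
    have hlt : ∀ c : ℝ, 0 < c → ∀ᶠ ε : ℝ in nhdsWithin 0 (Set.Ioi 0), ε < c := fun c hc =>
      nhdsWithin_le_nhds (Iio_mem_nhds hc)
    filter_upwards [self_mem_nhdsWithin, hev i s hsI, hev j t htI,
      Filter.eventually_all.2 fun k => hev k (x k) (hx k trivial),
      hlt (s - x i) (by linarith), hlt (t - x j) (by linarith)] with ε hε hsε htε hxε hε1 hε2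
    have hε' : (0:ℝ) < ε := hε
    have hsub : ∀ α ∈ I i, ∀ β ∈ I i, ∀ γ ∈ I j, ∀ δ ∈ I j,
        Set.Icc (auxBox i j x α γ) (auxBox i j (fun k => x k + ε) β δ) ⊆ Set.univ.pi I := by
      intro α hα β hβ γ hγ δ hδ y hy k _
      have h1 := hy.1 k
      have h2 := hy.2 k
      unfold auxBox at h1 h2
      split_ifs at h1 h2 with h3 h4
      · subst h3; exact (hord _).out hα hβ ⟨h1, h2⟩
      · subst h4; exact (hord _).out hγ hδ ⟨h1, h2⟩
      · exact (hord _).out (hx k trivial) (hxε k) ⟨h1, h2⟩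
    have hWpos : ∀ α ∈ I i, ∀ β ∈ I i, ∀ γ ∈ I j, ∀ δ ∈ I j, α < β → γ < δ → W ε α β γ δ ≠ 0 := by
      intro α hα β hβ γ hγ δ hδ h1 h2
      refine (aux_pos hc hpos ?_ (hsub α hα β hβ γ hγ δ hδ)).ne'
      intro k
      unfold auxBox
      split_ifs <;> linarith
    have hbase : ∀ α ∈ I i, ∀ β ∈ I i, ∀ γ ∈ I j, ∀ δ ∈ I j, ∀ p q, α ≤ p → p ≤ β → γ ≤ q → q ≤ δ →
        W ε α p γ q * W ε p β q δ = W ε p β γ q * W ε α p q δ := by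
      intro α hα β hβ γ hγ δ hδ p q h1 h2 h3 h4
      have := hb _ _ (hsub α hα β hβ γ hγ δ hδ) i j hij p (by simp [auxBox, h1, h2]) q
        (by simp [auxBox, hij.symm, h3, h4])
      have key : ∀ s t : Bool, subboxVol h i j (auxBox i j x α γ)
          (auxBox i j (fun k => x k + ε) β δ) p q s t =
          W ε (if s then p else α) (if s then β else p) (if t then q else γ) (if t then δ else q) := by
        intro s t
        simp only [hW, subboxVol]
        congr 3
        · ext k; simp only [auxBox, hij.symm, if_true, if_false]; split_ifs <;> rfl
        · ext k; simp only [auxBox, hij.symm, if_true, if_false]; split_ifs <;> rfl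
      simp only [key, if_true, Bool.false_eq_true, if_false] at this
      linarith
    have hxi := hx i trivial
    have hxj := hx j trivial
    have hxiε := hxε i
    have hxjε := hxε j
    -- first the `i` direction, for adjacent `j` intervals
    have hi : ∀ γ ∈ I j, ∀ q ∈ I j, ∀ δ ∈ I j, γ < q → q < δ →
        W ε (x i) (x i + ε) γ q * W ε s (s + ε) q δ =
        W ε s (s + ε) γ q * W ε (x i) (x i + ε) q δ := by
      intro γ hγ q hq δ hδ h1 h2
      refine aux_ratio (A2 := W ε (x i + ε) s γ q) (B2 := W ε (x i + ε) s q δ)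
        (hWpos _ hxiε _ hsI _ hγ _ hq (by linarith) h1)
        (hWpos _ hxiε _ hsI _ hq _ hδ (by linarith) h2) ?_ ?_
      · exact hbase _ hxi _ hsI _ hγ _ hδ _ _ (by linarith) (by linarith) h1.le h2.le
      · exact hbase _ hxiε _ hsε _ hγ _ hδ _ _ (by linarith) (by linarith) h1.le h2.le
    have e1 := hi _ hxj _ hxjε _ htI (by linarith) (by linarith)
    have e2 := hi _ hxjε _ htI _ htε (by linarith) (by linarith)
    have := aux_ratio (A1 := W ε (x i) (x i + ε) (x j) (x j + ε))
      (A2 := W ε (x i) (x i + ε) (x j + ε) t) (A3 := W ε (x i) (x i + ε) t (t + ε))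
      (B1 := W ε s (s + ε) (x j) (x j + ε))
      (B2 := W ε s (s + ε) (x j + ε) t) (B3 := W ε s (s + ε) t (t + ε))
      (hWpos _ hxi _ hxiε _ hxjε _ htI (by linarith) (by linarith))
      (hWpos _ hsI _ hsε _ hxjε _ htI (by linarith) (by linarith))
      (by linarith) (by linarith)
    linarith
  have hlim : ∀ α ∈ I i, ∀ γ ∈ I j, Filter.Tendsto
      (fun ε : ℝ => (ε ^ m)⁻¹ * W ε α (α + ε) γ (γ + ε))
      (nhdsWithin 0 (Set.Ioi 0)) (nhds (h (auxBox i j x α γ))) := by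
    intro α hα γ hγ
    refine (aux_avg hU hc (hmem α hα γ hγ)).congr fun ε => ?_
    simp only [hW]
    congr 4
    ext k; unfold auxBox; split_ifs <;> rfl
  have l1 := (hlim _ (hx i trivial) _ (hx j trivial)).mul (hlim _ hsI _ htI)
  have l2 := (hlim _ hsI _ (hx j trivial)).mul (hlim _ (hx i trivial) _ htI)
  rw [hxx] at l1
  refine tendsto_nhds_unique l1 (l2.congr' ?_)
  filter_upwards [hmul] with ε hε
  linear_combination (-(ε ^ m)⁻¹ * (ε ^ m)⁻¹) * hε

/-- a function right-constant at `0` has zero derivative -/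
lemma aux_right {φ : ℝ → ℝ} {d c : ℝ} (hφ : HasDerivAt φ d 0)
    (hc : ∀ᶠ t in nhdsWithin 0 (Set.Ioi 0), φ t = φ 0 + t * c) : d = c := by
  have h1 : HasDerivWithinAt φ d (Set.Ioi 0) 0 := hφ.hasDerivWithinAt
  have h2 : HasDerivWithinAt (fun t : ℝ => φ 0 + t * c) c (Set.Ioi 0) 0 := by
    simpa using (((hasDerivAt_id (0:ℝ)).mul_const c).const_add (φ 0)).hasDerivWithinAt
  have h3 : HasDerivWithinAt φ c (Set.Ioi 0) 0 := h2.congr_of_eventuallyEq hc (by simp)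
  exact (uniqueDiffWithinAt_Ioi (0:ℝ)).eq_deriv _ h1 h3

/-- On an open box `U`, the nonuniformity tensor of the codimension-1
web with density `h` vanishes iff Tabachnikov's condition `ac = bd` holds for every
closed box `K ⊆ U` subdivided by two leaves `{x_i = p}`, `{x_j = q}` into four
subregions of `h`-volumes `a = V_{−+}, b = V_{++}, c = V_{+−}, d = V_{−−}`. -/
theorem stmt17 {m : ℕ} (hm : 2 ≤ m)
    (I : Fin m → Set ℝ) (hIopen : ∀ k, IsOpen (I k)) (hIconn : ∀ k, IsPreconnected (I k))
    (h : (Fin m → ℝ) → ℝ)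
    (hsm : ContDiffOn ℝ (⊤ : ℕ∞) h (Set.univ.pi I)) (hpos : ∀ x ∈ Set.univ.pi I, 0 < h x) :
    (∀ i j : Fin m, i ≠ j → ∀ x ∈ Set.univ.pi I, logpd2 h i j x = 0) ↔
    (∀ a b : Fin m → ℝ, Set.Icc a b ⊆ Set.univ.pi I →
      ∀ i j : Fin m, i ≠ j →
      ∀ p ∈ Set.Icc (a i) (b i), ∀ q ∈ Set.Icc (a j) (b j),
        subboxVol h i j a b p q false true * subboxVol h i j a b p q true false =
          subboxVol h i j a b p q true true * subboxVol h i j a b p q false false) := by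
  have hU : IsOpen (Set.univ.pi I) := isOpen_set_pi Set.finite_univ fun k _ => hIopen k
  have hord : ∀ k, (I k).OrdConnected := fun k => (hIconn k).ordConnected
  have hconv : ∀ k, Convex ℝ (I k) := fun k => (hord k).convex
  have hc : ContinuousOn h (Set.univ.pi I) := hsm.continuousOn
  have hL : ContDiffOn ℝ 2 (fun z => Real.log (h z)) (Set.univ.pi I) :=
    (hsm.of_le (WithTop.coe_le_coe.2 (le_top : (2 : ℕ∞) ≤ ⊤))).log fun x hx => (hpos x hx).ne'
  constructor
  · intro h0 a b hab i j hij p hp q hq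
    rcases (Set.univ.pi I).eq_empty_or_nonempty with he | ⟨x₀, hx₀⟩
    · exact aux_fwd (U := Set.univ.pi I) (C := 0) (g := fun _ _ => 0)
        (by rw [he]; simp) hab hij hp hq
    · refine aux_fwd (U := Set.univ.pi I)
        (C := Real.exp (Real.log (h x₀) - ∑ _k : Fin m, Real.log (h x₀)))
        (g := fun k u => Real.exp (Real.log (h (x₀ + Pi.single k (u - x₀ k))))) ?_ hab hij hp hq
      intro x hx
      rw [← Real.exp_sum, ← Real.exp_add, ← aux_sep hIopen hconv hL h0 hx₀ hx,
        Real.exp_log (hpos x hx)]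
  · intro hb i j hij x hx
    set L : (Fin m → ℝ) → ℝ := fun z => Real.log (h z) with hLdef
    have hev : ∀ y ∈ Set.univ.pi I, ∀ k, ∀ᶠ s : ℝ in nhdsWithin 0 (Set.Ioi 0), y k + s ∈ I k := by
      intro y hy k
      have h1 : Continuous (fun ε : ℝ => y k + ε) := by fun_prop
      have h2 := (h1.tendsto 0).mono_left (nhdsWithin_le_nhds (s := Set.Ioi 0))
      exact h2 ((hIopen k).mem_nhds (by simpa using hy k trivial))
    have hmem : ∀ y ∈ Set.univ.pi I, ∀ k, ∀ s : ℝ, y k + s ∈ I k →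
        y + s • Pi.single k (1:ℝ) ∈ Set.univ.pi I := by
      intro y hy k s hs l _
      by_cases hl : l = k
      · subst hl; simpa using hs
      · simpa [hl] using hy l trivial
    have hd : ∀ y ∈ Set.univ.pi I, DifferentiableAt ℝ L y := fun y hy =>
      (hL.differentiableOn (by norm_num)).differentiableAt (hU.mem_nhds hy)
    have hfour : ∀ s t : ℝ, 0 < s → 0 < t → x i + s ∈ I i → x j + t ∈ I j →
        L (x + t • Pi.single j 1 + s • Pi.single i 1) - L (x + t • Pi.single j 1) =
        L (x + s • Pi.single i 1) - L x := by
      intro s t hs ht hsI htI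
      have key := aux_four hIopen hord hc hpos hb hij hx (s := x i + s) (t := x j + t)
        (by linarith) (by linarith) hsI htI
      have e1 : auxBox i j x (x i + s) (x j + t) =
          x + t • Pi.single j 1 + s • Pi.single i 1 := by
        ext k; unfold auxBox
        split_ifs with h1 h2
        · subst h1; simp [hij]
        · subst h2; simp [hij.symm]
        · simp [h1, h2]
      have e2 : auxBox i j x (x i + s) (x j) = x + s • Pi.single i 1 := by
        ext k; unfold auxBox
        split_ifs with h1 h2
        · subst h1; simp
        · subst h2; simp [hij.symm]
        · simp [h1]
      have e3 : auxBox i j x (x i) (x j + t) = x + t • Pi.single j 1 := by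
        ext k; unfold auxBox
        split_ifs with h1 h2
        · subst h1; simp [hij]
        · subst h2; simp
        · simp [h2]
      rw [e1, e2, e3] at key
      have m2 := hmem x hx i s hsI
      have m3 := hmem x hx j t htI
      have m1 := hmem _ m3 i s (by simpa [hij] using hsI)
      have := congrArg Real.log key
      rw [Real.log_mul (hpos _ hx).ne' (hpos _ m1).ne',
        Real.log_mul (hpos _ m2).ne' (hpos _ m3).ne'] at this
      simp only [hLdef]
      linarith
    have hD : ∀ᶠ t : ℝ in nhdsWithin 0 (Set.Ioi 0),
        fderiv ℝ L (x + t • Pi.single j 1) (Pi.single i (1:ℝ)) =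
        fderiv ℝ L x (Pi.single i (1:ℝ)) := by
      filter_upwards [self_mem_nhdsWithin, hev x hx j] with t ht htI
      have m3 := hmem x hx j t htI
      have d1 := aux_line (x := x + t • Pi.single j 1) (v := Pi.single i 1) (t := 0)
        (f := L) (by simpa using hd _ m3)
      have d2 := aux_line (x := x) (v := Pi.single i 1) (t := 0)
        (f := L) (by simpa using hd _ hx)
      have := aux_right (c := 0) (d1.sub d2) (by
        filter_upwards [self_mem_nhdsWithin, hev x hx i] with s hs hsI
        have := hfour s t hs ht hsI htI
        simp only [Pi.sub_apply, zero_smul, add_zero, mul_zero]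
        linarith)
      simp only [zero_smul, add_zero] at this
      linarith
    have d3 := aux_line (x := x) (v := Pi.single j 1) (t := 0)
        (f := fun y => fderiv ℝ L y (Pi.single i (1:ℝ)))
        (by simpa using aux_diff hU hL i hx)
    have := aux_right (c := 0) d3 (by
      filter_upwards [hD] with t ht
      simpa using ht)
    simpa [logpd2] using this
end
end
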